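/- arXiv:2510.16910 — 4 statements merged into one kernel-verified Lean document; each statement's English description precedes it below -/
import Mathlib

section
/- Let A be a commutative semi-simple Banach algebra and U an automorphism of A with U^n ≠ I for all positive integers n. Then the spectrum of U contains the entire unit circle {λ ∈ ℂ : |λ| = 1}. -/
namespace KS

lemma exists_int_shift (x β : ℝ) (hβ : β ≠ 0) : ∃ j : ℤ, 1 ≤ x + j * β := by
  rcases lt_or_gt_of_ne hβ with h | h
  · refine ⟨⌊(1 - x) / β⌋, ?_⟩
    have := Int.floor_le ((1 - x) / β)
    rw [le_div_iff_of_neg h] at this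
    linarith
  · refine ⟨⌈(1 - x) / β⌉, ?_⟩
    have := Int.le_ceil ((1 - x) / β)
    rw [div_le_iff₀ h] at this
    linarith

lemma exp_dist (a b : ℝ) : ‖Complex.exp (a * Complex.I) - Complex.exp (b * Complex.I)‖ ≤ |a - b| := by
  have h : Complex.exp (a * Complex.I) - Complex.exp (b * Complex.I)
      = Complex.exp (b * Complex.I) * (Complex.exp (Complex.I * ((a - b : ℝ) : ℂ)) - 1) := by
    rw [mul_sub, ← Complex.exp_add, mul_one]
    congr 2
    push_cast; ring
  rw [h, norm_mul, Complex.norm_exp_ofReal_mul_I, one_mul]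
  exact Real.norm_exp_I_mul_ofReal_sub_one_le

lemma exists_period (lam : ℂ) (hlam : ‖lam‖ = 1) (ε : ℝ) (hε : 0 < ε) :
    ∃ m : ℕ, 0 < m ∧ ∀ G : Set ℂ, (∀ g ∈ G, ‖g‖ = 1) → (∀ g ∈ G, ∀ h ∈ G, g * h ∈ G) →
      (∀ g ∈ G, ε ≤ ‖g - lam‖) → ∀ g ∈ G, g ^ m = 1 := by
  obtain ⟨N, hN⟩ := exists_nat_gt (2 * Real.pi / ε)
  have hpi := Real.pi_pos
  have hN0 : (0:ℝ) < N := lt_trans (by positivity) hN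
  have hN0' : 0 < N := by exact_mod_cast hN0
  refine ⟨N.factorial, Nat.factorial_pos _, ?_⟩
  intro G hG1 hGm hGl g hg
  have hpow : ∀ n : ℕ, 0 < n → g ^ n ∈ G := by
    intro n hn
    induction n, hn using Nat.le_induction with
    | base => simpa using hg
    | succ n _ ih => rw [pow_succ]; exact hGm _ ih _ hg
  obtain ⟨θ, hθ⟩ := (Complex.norm_eq_one_iff g).1 (hG1 g hg)
  obtain ⟨α, hα⟩ := (Complex.norm_eq_one_iff lam).1 hlam
  obtain ⟨k, hk0, hkN, hk⟩ := Real.exists_nat_abs_mul_sub_round_le (θ / (2 * Real.pi)) hN0'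
  set q : ℤ := round ((k:ℝ) * (θ / (2 * Real.pi))) with hq
  set δ : ℝ := k * θ - q * (2 * Real.pi) with hδ
  have hδ' : δ = 2 * Real.pi * (k * (θ / (2 * Real.pi)) - q) := by
    rw [hδ]; field_simp
  have hδε : |δ| < ε := by
    rw [hδ', abs_mul, abs_of_pos (by positivity : (0:ℝ) < 2 * Real.pi)]
    calc 2 * Real.pi * |(k * (θ / (2 * Real.pi)) - q)| ≤ 2 * Real.pi * (1 / (N + 1)) := by gcongr
      _ < ε := by
        rw [div_lt_iff₀ hε] at hN
        rw [mul_one_div, div_lt_iff₀ (by positivity)]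
        nlinarith
  have hgk : g ^ k = Complex.exp (δ * Complex.I) := by
    rw [← hθ, ← Complex.exp_nat_mul, Complex.exp_eq_exp_iff_exists_int]
    refine ⟨q, ?_⟩
    rw [hδ]; push_cast; ring
  have hgk1 : g ^ k = 1 := by
    by_cases h0 : δ = 0
    · rw [hgk, h0]; simp
    exfalso
    obtain ⟨j, hj⟩ := exists_int_shift (α / δ) (2 * Real.pi / δ) (by positivity)
    set s : ℝ := α / δ + j * (2 * Real.pi / δ) with hs
    have hsδ : s * δ = α + j * (2 * Real.pi) := by rw [hs]; field_simp
    set n : ℕ := ⌊s⌋₊ with hn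
    have hn1 : 0 < n := Nat.floor_pos.2 hj
    have h1 : (n:ℝ) ≤ s := Nat.floor_le (by linarith)
    have h2 : s < n + 1 := Nat.lt_floor_add_one s
    have h3 := hGl _ (hpow (k * n) (Nat.mul_pos hk0 hn1))
    have h4 : lam = Complex.exp ((s * δ : ℝ) * Complex.I) := by
      rw [← hα, Complex.exp_eq_exp_iff_exists_int, hsδ]
      refine ⟨-j, ?_⟩
      push_cast; ring
    have h5 : g ^ (k * n) = Complex.exp ((n * δ : ℝ) * Complex.I) := by
      rw [pow_mul, hgk, ← Complex.exp_nat_mul]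
      congr 1; push_cast; ring
    rw [h5, h4] at h3
    have h6 := exp_dist (n * δ) (s * δ)
    rw [← sub_mul, abs_mul] at h6
    have h7 : |(n:ℝ) - s| ≤ 1 := by rw [abs_le]; constructor <;> linarith
    nlinarith [abs_nonneg δ]
  obtain ⟨c, hc⟩ := Nat.dvd_factorial hk0 hkN
  rw [hc, pow_mul, hgk1, one_pow]

lemma norm_P (u : ℂ) (r : ℝ) (hu : ‖u - 1‖ = r) :
    ‖(u - 1) ^ 2 + r ^ 2 * (u - 1) + r ^ 2‖ = r * |‖u‖ ^ 2 - 1| := by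
  have h1 : (r:ℂ) ^ 2 = (u - 1) * (starRingEnd ℂ) (u - 1) := by
    rw [Complex.mul_conj, Complex.normSq_eq_norm_sq, hu]; push_cast; rfl
  have h2 : (u - 1) ^ 2 + (r:ℂ) ^ 2 * (u - 1) + (r:ℂ) ^ 2 = (u - 1) * ((‖u‖ ^ 2 - 1 : ℝ) : ℂ) := by
    have h3 : ((‖u‖ ^ 2 - 1 : ℝ) : ℂ) = u * (starRingEnd ℂ) u - 1 := by
      rw [Complex.mul_conj, Complex.normSq_eq_norm_sq]; push_cast; rfl
    rw [h3, h1, map_sub, map_one]; ring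
  rw [h2, norm_mul, hu, Complex.norm_real, Real.norm_eq_abs]

section
variable {X : Type*} [NormedAddCommGroup X] [NormedSpace ℂ X] [CompleteSpace X]

lemma res_bound (V : X →L[ℂ] X) (hV : ∀ x, ‖V x‖ = ‖x‖) (z : ℂ) (x : X) :
    |‖z‖ - 1| * ‖x‖ ≤ ‖z • x - V x‖ := by
  have := abs_norm_sub_norm_le (z • x) (V x)
  rw [hV, norm_smul] at this
  rwa [show ‖z‖ * ‖x‖ - ‖x‖ = (‖z‖ - 1) * ‖x‖ by ring, abs_mul, abs_of_nonneg (norm_nonneg x)] at this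

lemma isUnit_off (V : X →L[ℂ] X) (hV : ∀ x, ‖V x‖ = ‖x‖) (hu : IsUnit V) (z : ℂ) (hz : ‖z‖ ≠ 1) :
    IsUnit (algebraMap ℂ (X →L[ℂ] X) z - V) := by
  have hV1 : ‖V‖ ≤ 1 := V.opNorm_le_bound zero_le_one (fun x => by rw [hV, one_mul])
  rcases lt_or_gt_of_ne hz with h | h
  · obtain ⟨u, rfl⟩ := hu
    have hW : ‖((u⁻¹ : (X →L[ℂ] X)ˣ) : X →L[ℂ] X)‖ ≤ 1 := by
      refine ContinuousLinearMap.opNorm_le_bound _ zero_le_one (fun x => ?_)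
      rw [← hV, ← mul_apply_eq_comp, Units.mul_inv]
      simp
    have h1 : IsUnit (1 - z • ((u⁻¹ : (X →L[ℂ] X)ˣ) : X →L[ℂ] X)) := by
      apply isUnit_one_sub_of_norm_lt_one
      rw [norm_smul]
      nlinarith [norm_nonneg z]
    have h2 := (u.isUnit.mul h1).neg
    convert h2 using 1
    rw [mul_sub, mul_smul_comm, Units.mul_inv, Algebra.algebraMap_eq_smul_one]; simp
  · have hz0 : z ≠ 0 := by rintro rfl; simp at h; linarith
    have h1 : IsUnit (1 - z⁻¹ • V) := by
      apply isUnit_one_sub_of_norm_lt_one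
      rw [norm_smul, norm_inv]
      have : ‖z‖⁻¹ < 1 := inv_lt_one_of_one_lt₀ h
      have h0 : 0 < ‖z‖⁻¹ := by positivity
      nlinarith
    have h2 := (((Units.mk0 z hz0).isUnit).map (algebraMap ℂ (X →L[ℂ] X))).mul h1
    convert h2 using 1
    rw [Units.val_mk0, ← Algebra.smul_def, smul_sub, smul_smul, mul_inv_cancel₀ hz0, one_smul,
      Algebra.algebraMap_eq_smul_one]

lemma isUnit_of_bdd_below (V : X →L[ℂ] X) (hV : ∀ x, ‖V x‖ = ‖x‖) (hu : IsUnit V)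
    (lam : ℂ) (hlam : ‖lam‖ = 1) (c : ℝ) (hc : 0 < c) (hb : ∀ x, c * ‖x‖ ≤ ‖lam • x - V x‖) :
    IsUnit (algebraMap ℂ (X →L[ℂ] X) lam - V) := by
  set δ : ℝ := c / 3 with hδ
  have hδ0 : 0 < δ := by positivity
  set mu : ℂ := (1 + δ : ℝ) * lam with hmu
  have hmun : ‖mu‖ = 1 + δ := by
    rw [hmu, norm_mul, hlam, Complex.norm_real, Real.norm_eq_abs, abs_of_pos (by positivity), mul_one]
  obtain ⟨u, hu'⟩ := isUnit_off V hV hu mu (by rw [hmun]; linarith)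
  have hux : ∀ x, (u : X →L[ℂ] X) x = mu • x - V x := by
    intro x; rw [hu']; simp [Algebra.algebraMap_eq_smul_one]
  have hlow : ∀ x, (c - δ) * ‖x‖ ≤ ‖(u : X →L[ℂ] X) x‖ := by
    intro x
    have h1 : lam • x - V x = (u : X →L[ℂ] X) x - ((δ : ℂ) * lam) • x := by
      rw [hux, hmu]; push_cast; module
    have h2 := hb x
    rw [h1] at h2
    have h3 := norm_sub_le ((u : X →L[ℂ] X) x) (((δ : ℂ) * lam) • x)
    rw [norm_smul, norm_mul, hlam, Complex.norm_real, Real.norm_eq_abs, abs_of_pos hδ0, mul_one] at h3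
    linarith
  have hinv : ‖((u⁻¹ : (X →L[ℂ] X)ˣ) : X →L[ℂ] X)‖ ≤ 1 / (c - δ) := by
    have hcd : 0 < c - δ := by rw [hδ]; linarith
    refine ContinuousLinearMap.opNorm_le_bound _ (by positivity) (fun x => ?_)
    have h1 := hlow (((u⁻¹ : (X →L[ℂ] X)ˣ) : X →L[ℂ] X) x)
    rw [← mul_apply_eq_comp, Units.mul_inv, one_apply_eq_self] at h1
    rw [one_div, inv_mul_eq_div, le_div_iff₀ hcd]
    linarith
  have h1 : IsUnit (1 - ((δ : ℂ) * lam) • ((u⁻¹ : (X →L[ℂ] X)ˣ) : X →L[ℂ] X)) := by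
    apply isUnit_one_sub_of_norm_lt_one
    rw [norm_smul, norm_mul, hlam, Complex.norm_real, Real.norm_eq_abs, abs_of_pos hδ0, mul_one]
    calc δ * _ ≤ δ * (1 / (c - δ)) := by gcongr
      _ = 1 / 2 := by rw [hδ]; field_simp; ring
      _ < 1 := by norm_num
  have h2 := u.isUnit.mul h1
  convert h2 using 1
  rw [mul_sub, mul_smul_comm, Units.mul_inv, hu', mul_one, hmu]
  simp only [Algebra.algebraMap_eq_smul_one]
  push_cast; module

lemma gelfand (W : X →L[ℂ] X) (hW : ∀ x, ‖W x‖ = ‖x‖) (hs : spectrum ℂ W ⊆ {1}) : W = 1 := by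
  set Q : X →L[ℂ] X := W - 1 with hQ
  have hWQ : W = 1 + Q := by rw [hQ]; abel
  have hunit : ∀ w : ℂ, IsUnit (1 - w • Q) := by
    intro w
    by_cases hw : w = 0
    · simp [hw]
    have h1 : (1 + w⁻¹) ∉ spectrum ℂ W := by
      intro h
      have := hs h
      simp at this
      exact hw this
    rw [spectrum.notMem_iff] at h1
    have h2 := (((Units.mk0 w hw).isUnit).map (algebraMap ℂ (X →L[ℂ] X))).mul h1
    convert h2 using 1
    rw [Units.val_mk0, ← Algebra.smul_def, hWQ, Algebra.algebraMap_eq_smul_one, add_smul, one_smul,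
      add_sub_add_left_eq_sub, smul_sub w (w⁻¹ • (1 : X →L[ℂ] X)) Q,
      smul_smul w, mul_inv_cancel₀ hw, one_smul]
  set J : ℂ → (X →L[ℂ] X) := fun w => Ring.inverse (1 - w • Q) with hJ
  have hJl : ∀ w, (1 - w • Q) * J w = 1 := fun w => Ring.mul_inverse_cancel _ (hunit w)
  have hJr : ∀ w, J w * (1 - w • Q) = 1 := fun w => Ring.inverse_mul_cancel _ (hunit w)
  have hJd : Differentiable ℂ J := by
    intro w
    have h1 := differentiableAt_inverse (𝕜 := ℂ) (hunit w)
    have h2 : DifferentiableAt ℂ (fun w : ℂ => 1 - w • Q) w := by fun_prop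
    exact DifferentiableAt.comp w h1 h2
  have hJb : ∀ r : ℝ, 0 < r → r ≤ 1 → ∀ w : ℂ, ‖w‖ = r⁻¹ →
      ‖(1 + r ^ 2 * w + r ^ 2 * w ^ 2 : ℂ)‖ * ‖J w‖ ≤ 3 := by
    intro r hr hr1 w hw
    have hw0 : w ≠ 0 := by rintro rfl; simp at hw; linarith
    set z : ℂ := 1 + w⁻¹ with hz
    have hz1 : ‖z - 1‖ = r := by rw [hz]; simp [hw]
    have hz2 : ‖z‖ ≤ 2 := by
      have := norm_add_le (z - 1) 1
      simp only [sub_add_cancel, norm_one] at this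
      linarith
    have hP := norm_P z r hz1
    have e : (1 + r ^ 2 * w + r ^ 2 * w ^ 2 : ℂ) = w ^ 2 * ((z - 1) ^ 2 + r ^ 2 * (z - 1) + r ^ 2) := by
      rw [hz]; field_simp; ring
    have hfac : |‖z‖ ^ 2 - 1| = |‖z‖ - 1| * (‖z‖ + 1) := by
      rw [show ‖z‖ ^ 2 - 1 = (‖z‖ - 1) * (‖z‖ + 1) by ring, abs_mul, abs_of_pos (by positivity : 0 < ‖z‖ + 1)]
    have hJn : |‖z‖ - 1| * ‖J w‖ ≤ r := by
      by_cases h0 : |‖z‖ - 1| = 0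
      · rw [h0, zero_mul]; exact hr.le
      have hpos : 0 < |‖z‖ - 1| := lt_of_le_of_ne (abs_nonneg _) (Ne.symm h0)
      rw [mul_comm, ← le_div_iff₀ hpos]
      refine ContinuousLinearMap.opNorm_le_bound _ (by positivity) (fun x => ?_)
      have h1 := res_bound W hW z (J w x)
      have h2 : z • J w x - W (J w x) = w⁻¹ • x := by
        have h3 := congrArg (fun T : X →L[ℂ] X => w⁻¹ • T x) (hJl w)
        simp only [mul_apply_eq_comp, one_apply_eq_self,
          sub_apply, smul_apply] at h3
        rw [← h3, hWQ, hz, smul_sub, smul_smul, inv_mul_cancel₀ hw0]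
        simp only [add_apply, one_apply_eq_self]
        module
      rw [h2, norm_smul, norm_inv, hw, inv_inv] at h1
      rw [div_mul_eq_mul_div, le_div_iff₀ hpos]
      linarith
    rw [e, norm_mul, hP, hfac, norm_pow, hw]
    calc r⁻¹ ^ 2 * (r * (|‖z‖ - 1| * (‖z‖ + 1))) * ‖J w‖
        = r⁻¹ * (‖z‖ + 1) * (|‖z‖ - 1| * ‖J w‖) := by field_simp
      _ ≤ r⁻¹ * (2 + 1) * r := by gcongr
      _ = 3 := by field_simp; norm_num
  have hQ2b : ∀ r : ℝ, 0 < r → r ≤ 1 → ‖Q ^ 2‖ ≤ (6 + 3 * ‖Q‖) * r := by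
    intro r hr hr1
    set f : ℂ → (X →L[ℂ] X) := fun w => (1 + r ^ 2 * w + r ^ 2 * w ^ 2 : ℂ) • (Q ^ 2 * J w) with hf
    have hfd : Differentiable ℂ f := by
      rw [hf]; fun_prop
    have hb : ∀ w ∈ frontier (Metric.ball (0:ℂ) r⁻¹), ‖f w‖ ≤ (6 + 3 * ‖Q‖) * r := by
      intro w hw
      rw [frontier_ball _ (by positivity), mem_sphere_zero_iff_norm] at hw
      have hw0 : w ≠ 0 := by rintro rfl; simp at hw; linarith
      set p : ℂ := (1 + r ^ 2 * w + r ^ 2 * w ^ 2 : ℂ) with hp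
      have hpn : ‖p‖ ≤ 3 := by
        calc ‖p‖ ≤ ‖(1:ℂ)‖ + ‖(r:ℂ) ^ 2 * w‖ + ‖(r:ℂ) ^ 2 * w ^ 2‖ := norm_add₃_le
          _ = 1 + r ^ 2 * r⁻¹ + r ^ 2 * r⁻¹ ^ 2 := by
            simp [hw]
          _ = 1 + r + 1 := by field_simp
          _ ≤ 3 := by linarith
      have h1 : w ^ 2 • (Q ^ 2 * J w) = J w - 1 - w • Q := by
        have h := hJl w
        rw [sub_mul, one_mul, smul_mul_assoc] at h
        have h' : w • (Q * J w) = J w - 1 := by rw [← h]; abel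
        have h'' : w ^ 2 • (Q ^ 2 * J w) = w • (Q * (w • (Q * J w))) := by
          rw [mul_smul_comm, smul_smul, ← mul_assoc, pow_two, pow_two]
        rw [h'', h', mul_sub, smul_sub, h', mul_one]
      have h2 : f w = (w ^ 2)⁻¹ • (p • J w - p • (1 + w • Q)) := by
        rw [← smul_sub, show J w - (1 + w • Q) = w ^ 2 • (Q ^ 2 * J w) by rw [h1]; abel,
          smul_comm p, smul_smul, inv_mul_cancel₀ (pow_ne_zero 2 hw0), one_smul]
      have h3 : ‖(1 : X →L[ℂ] X)‖ ≤ 1 := ContinuousLinearMap.norm_id_le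
      have h4 : ‖1 + w • Q‖ ≤ 1 + r⁻¹ * ‖Q‖ := by
        refine (norm_add_le _ _).trans ?_
        rw [norm_smul, hw]; linarith
      rw [h2, norm_smul, norm_inv, norm_pow, hw]
      calc (r⁻¹ ^ 2)⁻¹ * ‖p • J w - p • (1 + w • Q)‖
          ≤ (r⁻¹ ^ 2)⁻¹ * (3 + 3 * (1 + r⁻¹ * ‖Q‖)) := by
            gcongr
            refine (norm_sub_le _ _).trans ?_
            rw [norm_smul, norm_smul]
            exact add_le_add (hJb r hr hr1 w hw) (by gcongr)
        _ = (6 * r + 3 * ‖Q‖) * r := by field_simp; ring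
        _ ≤ (6 + 3 * ‖Q‖) * r := by gcongr; linarith
    have h := Complex.norm_le_of_forall_mem_frontier_norm_le Metric.isBounded_ball hfd.diffContOnCl hb
      (subset_closure (Metric.mem_ball_self (by positivity : 0 < r⁻¹)))
    simpa [hf, hJ] using h
  have hQ2 : Q ^ 2 = 0 := by
    rw [← norm_le_zero_iff]
    by_contra hcon
    push Not at hcon
    set C := 6 + 3 * ‖Q‖ with hC
    have hC0 : 0 < C := by positivity
    have h := hQ2b (min 1 (‖Q ^ 2‖ / (2 * C))) (by positivity) (min_le_left _ _)
    have h2 : C * min 1 (‖Q ^ 2‖ / (2 * C)) ≤ C * (‖Q ^ 2‖ / (2 * C)) := by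
      gcongr; exact min_le_right _ _
    have h3 : C * (‖Q ^ 2‖ / (2 * C)) = ‖Q ^ 2‖ / 2 := by field_simp
    linarith
  have hWn : ∀ n : ℕ, W ^ n = 1 + (n : ℂ) • Q := by
    intro n
    induction n with
    | zero => simp
    | succ n ih =>
      rw [pow_succ, ih, hWQ, mul_add, mul_one, add_mul, one_mul, smul_mul_assoc, ← pow_two, hQ2]
      push_cast; module
  have hiso : ∀ (n : ℕ) x, ‖(W ^ n) x‖ = ‖x‖ := by
    intro n x
    induction n with
    | zero => simp
    | succ n ih => rw [pow_succ', mul_apply_eq_comp, hW, ih]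
  have hQ0 : Q = 0 := by
    ext x
    rw [zero_apply, ← norm_le_zero_iff]
    by_contra hcon
    push Not at hcon
    obtain ⟨n, hn⟩ := exists_nat_gt (2 * ‖x‖ / ‖Q x‖)
    rw [div_lt_iff₀ hcon] at hn
    have h1 := hiso n x
    rw [hWn] at h1
    have h2 : (n:ℂ) • Q x = (1 + (n:ℂ) • Q) x - x := by simp
    have h3 := norm_sub_le ((1 + (n:ℂ) • Q) x) x
    rw [← h2, h1, norm_smul, Complex.norm_natCast] at h3
    linarith
  rw [hWQ, hQ0, add_zero]

lemma pow_eq_one (V : X →L[ℂ] X) (hV : ∀ x, ‖V x‖ = ‖x‖) (m : ℕ) (hm : 0 < m)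
    (hs : ∀ z ∈ spectrum ℂ V, z ^ m = 1) : V ^ m = 1 := by
  apply gelfand
  · intro x
    clear hs hm
    induction m with
    | zero => simp
    | succ n ih => rw [pow_succ', mul_apply_eq_comp, hV, ih]
  · rw [spectrum.map_pow_of_pos V hm]
    rintro _ ⟨z, hz, rfl⟩
    exact hs z hz

lemma spec_sub {A : Type*} [NormedAddCommGroup A] [NormedSpace ℂ A] [CompleteSpace A]
    (U : A →L[ℂ] A) (V : X →L[ℂ] X) (hV : ∀ x, ‖V x‖ = ‖x‖) (hu : IsUnit V)
    (F : A →L[ℂ] X) (hF : DenseRange F) (hFU : ∀ a, F (U a) = V (F a))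
    (lam : ℂ) (hlam : ‖lam‖ = 1) (hU : lam ∉ spectrum ℂ U) : lam ∉ spectrum ℂ V := by
  have hopen : IsOpen (spectrum ℂ U)ᶜ := (spectrum.isClosed U).isOpen_compl
  obtain ⟨r, hr, hball⟩ := Metric.nhds_basis_closedBall.mem_iff.1 (hopen.mem_nhds hU)
  have hl0 : lam ≠ 0 := by rintro rfl; simp at hlam
  have hun : ∀ z ∈ Metric.closedBall lam r, IsUnit (algebraMap ℂ (A →L[ℂ] A) z - U) := by
    intro z hz
    exact spectrum.notMem_iff.1 (hball hz)
  have key : ∀ b : A, r * ‖F b‖ ≤ (2 + r) * ‖F (lam • b - U b)‖ := by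
    intro b
    set a := lam • b - U b with ha
    set g : ℂ → X := fun z => F (resolvent U z a) with hg
    set P : ℂ → ℂ := fun z => (z / lam - 1) ^ 2 + r ^ 2 * (z / lam - 1) + r ^ 2 with hP
    have hgeq : ∀ z ∈ Metric.closedBall lam r, z • g z - V (g z) = F a := by
      intro z hz
      rw [hg]
      simp only
      rw [← hFU, ← map_smul, ← map_sub]
      congr 1
      have := Ring.mul_inverse_cancel _ (hun z hz)
      have := congrArg (fun T : A →L[ℂ] A => T a) this
      simpa [Algebra.algebraMap_eq_smul_one, resolvent] using this
    have hglam : g lam = F b := by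
      rw [hg]
      simp only
      congr 1
      have := Ring.inverse_mul_cancel _ (hun lam (Metric.mem_closedBall_self hr.le))
      have := congrArg (fun T : A →L[ℂ] A => T b) this
      simpa [Algebra.algebraMap_eq_smul_one, resolvent, ha] using this
    have hgd : ∀ z ∈ Metric.closedBall lam r, DifferentiableAt ℂ g z := by
      intro z hz
      have h1 : DifferentiableAt ℂ (resolvent U) z :=
        (spectrum.hasDerivAt_resolvent_const_left (hun z hz)).differentiableAt
      exact F.differentiableAt.comp z (h1.clm_apply (differentiableAt_const a))
    have hd : DiffContOnCl ℂ (fun z => P z • g z) (Metric.ball lam r) := by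
      apply DifferentiableOn.diffContOnCl
      rw [closure_ball _ hr.ne']
      intro z hz
      have hPd : DifferentiableAt ℂ P z := by rw [hP]; fun_prop
      exact (hPd.smul (hgd z hz)).differentiableWithinAt
    have hb : ∀ z ∈ frontier (Metric.ball lam r), ‖P z • g z‖ ≤ r * (2 + r) * ‖F a‖ := by
      intro z hz
      rw [frontier_ball _ hr.ne'] at hz
      have hz' : ‖z - lam‖ = r := by simpa [dist_eq_norm] using hz
      have hzl : ‖z / lam‖ = ‖z‖ := by rw [norm_div, hlam, div_one]
      have hz1 : ‖z / lam - 1‖ = r := by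
        rw [div_sub_one hl0, norm_div, hlam, div_one, hz']
      have hPn := norm_P _ r hz1
      rw [hzl] at hPn
      have h1 := res_bound V hV z (g z)
      rw [hgeq z (Metric.sphere_subset_closedBall hz)] at h1
      have hz2 : ‖z‖ ≤ 1 + r := by
        have := norm_add_le (z - lam) lam
        rw [sub_add_cancel] at this
        linarith
      have hfac : |‖z‖ ^ 2 - 1| = |‖z‖ - 1| * (‖z‖ + 1) := by
        rw [show ‖z‖ ^ 2 - 1 = (‖z‖ - 1) * (‖z‖ + 1) by ring, abs_mul, abs_of_pos (by positivity : 0 < ‖z‖ + 1)]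
      rw [norm_smul]
      have hPn' : ‖P z‖ = r * (|‖z‖ - 1| * (‖z‖ + 1)) := by rw [← hfac, ← hPn]
      rw [hPn']
      calc r * (|‖z‖ - 1| * (‖z‖ + 1)) * ‖g z‖ = r * (‖z‖ + 1) * (|‖z‖ - 1| * ‖g z‖) := by ring
        _ ≤ r * ((1 + r) + 1) * ‖F a‖ := by gcongr
        _ = r * (2 + r) * ‖F a‖ := by ring
    have h := Complex.norm_le_of_forall_mem_frontier_norm_le Metric.isBounded_ball hd hb
      (subset_closure (Metric.mem_ball_self hr))
    have hPl : P lam = (r:ℂ) ^ 2 := by rw [hP]; simp [div_self hl0]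
    rw [hPl, hglam, norm_smul, norm_pow, Complex.norm_real, Real.norm_eq_abs, abs_of_pos hr] at h
    have h' : r * (r * ‖F b‖) ≤ r * ((2 + r) * ‖F a‖) := by nlinarith
    exact le_of_mul_le_mul_left h' hr
  have key2 : ∀ x : X, r * ‖x‖ ≤ (2 + r) * ‖lam • x - V x‖ := by
    intro x
    refine hF.induction_on x ?_ ?_
    · exact isClosed_le (by fun_prop) (by fun_prop)
    · intro b
      have := key b
      rwa [map_sub, map_smul, hFU] at this
  rw [spectrum.notMem_iff]
  refine isUnit_of_bdd_below V hV hu lam hlam (r / (2 + r)) (by positivity) (fun x => ?_)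
  rw [div_mul_eq_mul_div, div_le_iff₀ (by positivity)]
  linarith [key2 x]

end
section
open BoundedContinuousFunction

noncomputable def shift (j : ℤ) : (ℤ →ᵇ ℂ) →L[ℂ] (ℤ →ᵇ ℂ) :=
  LinearMap.mkContinuous
    { toFun := fun x => x.compContinuous ⟨fun n => n + j, continuous_of_discreteTopology⟩
      map_add' := fun x y => by ext n; rfl
      map_smul' := fun c x => by ext n; rfl } 1
    (fun x => by
      rw [one_mul]
      exact (BoundedContinuousFunction.norm_le (norm_nonneg x)).2 (fun n => x.norm_coe_le_norm _))

@[simp] lemma shift_apply (j n : ℤ) (x : ℤ →ᵇ ℂ) : shift j x n = x (n + j) := rfl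

lemma shift_mul (j : ℤ) (x y : ℤ →ᵇ ℂ) : shift j (x * y) = shift j x * shift j y := by
  ext n; rfl

lemma shift_shift (i j : ℤ) (x : ℤ →ᵇ ℂ) : shift i (shift j x) = shift (i + j) x := by
  ext n; simp [add_assoc]

lemma shift_zero (x : ℤ →ᵇ ℂ) : shift 0 x = x := by
  ext n; simp

lemma norm_shift_le (j : ℤ) (x : ℤ →ᵇ ℂ) : ‖shift j x‖ ≤ ‖x‖ :=
  (BoundedContinuousFunction.norm_le (norm_nonneg x)).2 (fun n => x.norm_coe_le_norm _)

lemma norm_shift (j : ℤ) (x : ℤ →ᵇ ℂ) : ‖shift j x‖ = ‖x‖ := by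
  refine le_antisymm (norm_shift_le j x) ?_
  have := norm_shift_le (-j) (shift j x)
  rwa [shift_shift, neg_add_cancel, shift_zero] at this

lemma exists_large (x : ℤ →ᵇ ℂ) : ∃ n, ‖x‖ / 2 ≤ ‖x n‖ := by
  by_contra hcon
  push Not at hcon
  have h : ‖x‖ ≤ ‖x‖ / 2 :=
    (BoundedContinuousFunction.norm_le (by positivity)).2 (fun n => (hcon n).le)
  have := hcon 0
  linarith [norm_nonneg (x 0)]

variable {A : Type*} [NormedCommRing A] [NormedAlgebra ℂ A] [CompleteSpace A]

noncomputable def orb (e : A ≃ₐ[ℂ] A) (φ : A →ₐ[ℂ] ℂ) : A →ₐ[ℂ] (ℤ →ᵇ ℂ) where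
  toFun a := BoundedContinuousFunction.ofNormedAddCommGroup (fun n : ℤ => φ ((e ^ n) a))
    continuous_of_discreteTopology (‖a‖ * ‖(1 : A)‖)
    (fun n => AlgHom.norm_apply_le_self_mul_norm_one (φ.comp (e ^ n).toAlgHom) a)
  map_one' := by ext n; simp
  map_mul' x y := by ext n; simp; rfl
  map_zero' := by ext n; simp
  map_add' x y := by ext n; simp; rfl
  commutes' c := by ext n; simp

@[simp] lemma orb_apply (e : A ≃ₐ[ℂ] A) (φ : A →ₐ[ℂ] ℂ) (a : A) (n : ℤ) :
    orb e φ a n = φ ((e ^ n) a) := rfl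

lemma orb_shift (e : A ≃ₐ[ℂ] A) (φ : A →ₐ[ℂ] ℂ) (a : A) (j : ℤ) :
    shift j (orb e φ a) = orb e φ ((e ^ j) a) := by
  ext n; simp [zpow_add]

lemma norm_orb_le (e : A ≃ₐ[ℂ] A) (φ : A →ₐ[ℂ] ℂ) (a : A) : ‖orb e φ a‖ ≤ ‖(1 : A)‖ * ‖a‖ := by
  refine (BoundedContinuousFunction.norm_le (by positivity)).2 (fun n => ?_)
  rw [mul_comm]
  exact AlgHom.norm_apply_le_self_mul_norm_one (φ.comp (e ^ n).toAlgHom) a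

noncomputable def BB (e : A ≃ₐ[ℂ] A) (φ : A →ₐ[ℂ] ℂ) : Subalgebra ℂ (ℤ →ᵇ ℂ) :=
  (orb e φ).range.topologicalClosure

lemma orb_mem (e : A ≃ₐ[ℂ] A) (φ : A →ₐ[ℂ] ℂ) (a : A) : orb e φ a ∈ BB e φ :=
  Subalgebra.le_topologicalClosure _ ⟨a, rfl⟩

lemma shift_mem (e : A ≃ₐ[ℂ] A) (φ : A →ₐ[ℂ] ℂ) (j : ℤ) (x : ℤ →ᵇ ℂ) (hx : x ∈ BB e φ) :
    shift j x ∈ BB e φ := by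
  have h : Set.MapsTo (shift j) (Set.range (orb e φ)) (Set.range (orb e φ)) := by
    rintro _ ⟨a, rfl⟩
    exact ⟨_, (orb_shift e φ a j).symm⟩
  have h2 := h.closure (shift j).continuous
  have e1 : ((BB e φ : Subalgebra ℂ (ℤ →ᵇ ℂ)) : Set (ℤ →ᵇ ℂ)) = closure (Set.range (orb e φ)) := by
    rw [BB, Subalgebra.topologicalClosure_coe, AlgHom.coe_range]
  have h3 : x ∈ closure (Set.range (orb e φ)) := by rw [← e1]; exact hx
  have h4 := h2 h3
  rw [← e1] at h4
  exact h4

noncomputable def BS (e : A ≃ₐ[ℂ] A) (φ : A →ₐ[ℂ] ℂ) (j : ℤ) : BB e φ →L[ℂ] BB e φ :=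
  LinearMap.mkContinuous
    { toFun := fun x => ⟨shift j x, shift_mem e φ j x x.2⟩
      map_add' := fun x y => by ext n; rfl
      map_smul' := fun c x => by ext n; rfl } 1
    (fun x => by
      rw [one_mul]
      exact norm_shift_le j x)

@[simp] lemma BS_coe (e : A ≃ₐ[ℂ] A) (φ : A →ₐ[ℂ] ℂ) (j : ℤ) (x : BB e φ) :
    ((BS e φ j x : BB e φ) : ℤ →ᵇ ℂ) = shift j x := rfl

instance (e : A ≃ₐ[ℂ] A) (φ : A →ₐ[ℂ] ℂ) : CompleteSpace (BB e φ) :=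
  (Subalgebra.isClosed_topologicalClosure _).completeSpace_coe

lemma BS_norm (e : A ≃ₐ[ℂ] A) (φ : A →ₐ[ℂ] ℂ) (j : ℤ) (x : BB e φ) : ‖BS e φ j x‖ = ‖x‖ :=
  norm_shift j x

lemma BS_mul_BS (e : A ≃ₐ[ℂ] A) (φ : A →ₐ[ℂ] ℂ) (i j : ℤ) :
    BS e φ i * BS e φ j = BS e φ (i + j) := by
  ext x : 2
  rw [mul_apply_eq_comp]
  exact shift_shift i j x

lemma BS_zero (e : A ≃ₐ[ℂ] A) (φ : A →ₐ[ℂ] ℂ) : BS e φ 0 = 1 := by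
  ext x : 2
  exact shift_zero _

lemma BS_pow (e : A ≃ₐ[ℂ] A) (φ : A →ₐ[ℂ] ℂ) (m : ℕ) : BS e φ 1 ^ m = BS e φ m := by
  induction m with
  | zero => simp [BS_zero]
  | succ n ih => rw [pow_succ, ih, BS_mul_BS]; push_cast; rfl

lemma BS_isUnit (e : A ≃ₐ[ℂ] A) (φ : A →ₐ[ℂ] ℂ) : IsUnit (BS e φ 1) :=
  ⟨⟨BS e φ 1, BS e φ (-1), by rw [BS_mul_BS, add_neg_cancel, BS_zero],
    by rw [BS_mul_BS, neg_add_cancel, BS_zero]⟩, rfl⟩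

lemma spec_norm (e : A ≃ₐ[ℂ] A) (φ : A →ₐ[ℂ] ℂ) (z : ℂ) (hz : z ∈ spectrum ℂ (BS e φ 1)) :
    ‖z‖ = 1 := by
  by_contra h
  exact hz (isUnit_off _ (BS_norm e φ 1) (BS_isUnit e φ) z h)

lemma approx (e : A ≃ₐ[ℂ] A) (φ : A →ₐ[ℂ] ℂ) (z : ℂ) (hz : z ∈ spectrum ℂ (BS e φ 1))
    (ε : ℝ) (hε : 0 < ε) : ∃ x ∈ BB e φ, ‖z • x - shift 1 x‖ < ε * ‖x‖ := by
  by_contra hcon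
  push Not at hcon
  refine hz (isUnit_of_bdd_below _ (BS_norm e φ 1) (BS_isUnit e φ) z (spec_norm e φ z hz) ε hε ?_)
  intro x
  exact hcon x x.2

lemma spec_mul (e : A ≃ₐ[ℂ] A) (φ : A →ₐ[ℂ] ℂ) (z w : ℂ) (hz : z ∈ spectrum ℂ (BS e φ 1))
    (hw : w ∈ spectrum ℂ (BS e φ 1)) : z * w ∈ spectrum ℂ (BS e φ 1) := by
  by_contra hcon
  rw [spectrum.notMem_iff] at hcon
  obtain ⟨u, hu⟩ := hcon
  set C : ℝ := ‖((u⁻¹ : (BB e φ →L[ℂ] BB e φ)ˣ) : BB e φ →L[ℂ] BB e φ)‖ + 1 with hC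
  have hC0 : 0 < C := by positivity
  have hlow : ∀ x ∈ BB e φ, ‖x‖ ≤ C * ‖(z * w) • x - shift 1 x‖ := by
    intro x hx
    have h1 : ((u⁻¹ : (BB e φ →L[ℂ] BB e φ)ˣ) : BB e φ →L[ℂ] BB e φ)
        ((u : BB e φ →L[ℂ] BB e φ) ⟨x, hx⟩) = ⟨x, hx⟩ := by
      rw [← mul_apply_eq_comp, Units.inv_mul]; rfl
    have h2 := ContinuousLinearMap.le_opNorm
      ((u⁻¹ : (BB e φ →L[ℂ] BB e φ)ˣ) : BB e φ →L[ℂ] BB e φ) ((u : BB e φ →L[ℂ] BB e φ) ⟨x, hx⟩)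
    rw [h1, hu] at h2
    have h3 : ‖(algebraMap ℂ (BB e φ →L[ℂ] BB e φ) (z * w) - BS e φ 1) ⟨x, hx⟩‖
        = ‖(z * w) • x - shift 1 x‖ := rfl
    rw [h3] at h2
    have h4 : ‖(⟨x, hx⟩ : BB e φ)‖ = ‖x‖ := rfl
    rw [h4] at h2
    refine h2.trans ?_
    gcongr
    rw [hC]; linarith
  set ε : ℝ := 1 / (16 * C) with hε
  have hε0 : 0 < ε := by positivity
  obtain ⟨x, hx, hxz⟩ := approx e φ z hz ε hε0
  obtain ⟨y, hy, hyw⟩ := approx e φ w hw ε hε0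
  obtain ⟨n, hn⟩ := exists_large x
  obtain ⟨k, hk⟩ := exists_large y
  set y' := shift (k - n) y with hy'
  have hy'm : y' ∈ BB e φ := shift_mem e φ _ y hy
  have hy'n : ‖y'‖ = ‖y‖ := norm_shift _ _
  have hy'w : ‖w • y' - shift 1 y'‖ < ε * ‖y‖ := by
    have : w • y' - shift 1 y' = shift (k - n) (w • y - shift 1 y) := by
      rw [hy', map_sub, map_smul, shift_shift, shift_shift, add_comm]
    rw [this, norm_shift]; exact hyw
  have hxpos : 0 < ‖x‖ := by
    by_contra h
    have h0 : ‖x‖ = 0 := le_antisymm (not_lt.1 h) (norm_nonneg _)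
    rw [h0, mul_zero] at hxz
    linarith [norm_nonneg (z • x - shift 1 x)]
  have hypos : 0 < ‖y‖ := by
    by_contra h
    have h0 : ‖y‖ = 0 := le_antisymm (not_lt.1 h) (norm_nonneg _)
    rw [h0, mul_zero] at hyw
    linarith [norm_nonneg (w • y - shift 1 y)]
  have hprod : ‖x‖ / 2 * (‖y‖ / 2) ≤ ‖x * y'‖ := by
    have h1 := (x * y').norm_coe_le_norm n
    have h2 : (x * y') n = x n * y k := by
      rw [BoundedContinuousFunction.mul_apply, hy', shift_apply, add_sub_cancel]
    rw [h2, norm_mul] at h1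
    refine le_trans ?_ h1
    gcongr
  have h1 := hlow (x * y') ((BB e φ).mul_mem hx hy'm)
  have h2 : (z * w) • (x * y') - shift 1 (x * y')
      = (z • x - shift 1 x) * (w • y') + shift 1 x * (w • y' - shift 1 y') := by
    rw [shift_mul, sub_mul, mul_sub, smul_mul_smul_comm]; abel
  have h3 : ‖(z * w) • (x * y') - shift 1 (x * y')‖ ≤ 2 * ε * (‖x‖ * ‖y‖) := by
    rw [h2]
    refine (norm_add_le _ _).trans ?_
    have a1 : ‖(z • x - shift 1 x) * (w • y')‖ ≤ (ε * ‖x‖) * ‖y‖ := by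
      refine (norm_mul_le _ _).trans ?_
      rw [norm_smul, spec_norm e φ w hw, one_mul, hy'n]
      gcongr
    have a2 : ‖shift 1 x * (w • y' - shift 1 y')‖ ≤ ‖x‖ * (ε * ‖y‖) := by
      refine (norm_mul_le _ _).trans ?_
      rw [norm_shift]
      gcongr
    linarith
  have h4 : C * ‖(z * w) • (x * y') - shift 1 (x * y')‖ ≤ C * (2 * ε * (‖x‖ * ‖y‖)) := by gcongr
  have h5 : C * (2 * ε * (‖x‖ * ‖y‖)) = ‖x‖ * ‖y‖ / 8 := by rw [hε]; field_simp; norm_num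
  have h6 : 0 < ‖x‖ * ‖y‖ := by positivity
  linarith

lemma char_period (U : A →L[ℂ] A) (e : A ≃ₐ[ℂ] A) (he : ∀ a, e a = U a) (lam : ℂ)
    (hlam : ‖lam‖ = 1) (hU : lam ∉ spectrum ℂ U) :
    ∃ m : ℕ, 0 < m ∧ ∀ (φ : A →ₐ[ℂ] ℂ) (a : A), φ ((e ^ m) a) = φ a := by
  have hopen : IsOpen (spectrum ℂ U)ᶜ := (spectrum.isClosed U).isOpen_compl
  obtain ⟨ε, hε, hball⟩ := Metric.isOpen_iff.1 hopen lam hU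
  obtain ⟨m, hm, hG⟩ := exists_period lam hlam ε hε
  refine ⟨m, hm, fun φ a => ?_⟩
  let F : A →L[ℂ] BB e φ := LinearMap.mkContinuous
    { toFun := fun a => ⟨orb e φ a, orb_mem e φ a⟩
      map_add' := fun x y => by ext n; simp
      map_smul' := fun c x => by ext n; simp } ‖(1 : A)‖ (fun a => norm_orb_le e φ a)
  have hF : DenseRange F := by
    intro x
    rw [closure_subtype]
    have hx : (x : ℤ →ᵇ ℂ) ∈ closure (Set.range (orb e φ)) := x.2
    have : Subtype.val '' (Set.range F) = Set.range (orb e φ) := by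
      rw [← Set.range_comp]; rfl
    rw [this]; exact hx
  have hFU : ∀ a, F (U a) = BS e φ 1 (F a) := by
    intro a
    apply Subtype.ext
    have := orb_shift e φ a 1
    rw [zpow_one, he] at this
    exact this.symm
  have hsp := fun z hz1 hz => spec_sub U (BS e φ 1) (BS_norm e φ 1) (BS_isUnit e φ) F hF hFU z hz1 hz
  have hroot := hG (spectrum ℂ (BS e φ 1)) (spec_norm e φ)
    (fun g hg h hh => spec_mul e φ g h hg hh) (by
      intro g hg
      by_contra hlt
      push Not at hlt
      exact hsp g (spec_norm e φ g hg) (hball (by rwa [Metric.mem_ball, dist_eq_norm])) hg)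
  have hV := pow_eq_one (BS e φ 1) (BS_norm e φ 1) m hm hroot
  rw [BS_pow] at hV
  have h1 : shift m (orb e φ a) = orb e φ a :=
    congrArg (fun T : BB e φ →L[ℂ] BB e φ => ((T ⟨orb e φ a, orb_mem e φ a⟩ : BB e φ) : ℤ →ᵇ ℂ)) hV
  have h2 := DFunLike.congr_fun h1 0
  simpa using h2

end
end KS


/-- Kamowitz–Scheinberg: if `U` is an automorphism of a commutative semi-simple
Banach algebra with `U ^ n ≠ I` for all positive `n`, then the spectrum of `U`
contains the whole unit circle. -/
theorem stmt1 {A : Type*} [NormedCommRing A] [NormedAlgebra ℂ A] [CompleteSpace A]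
    (hss : (⊥ : Ideal A).jacobson = ⊥)
    (U : A →L[ℂ] A) (hmul : ∀ x y : A, U (x * y) = U x * U y)
    (hbij : Function.Bijective U)
    (hnp : ∀ n : ℕ, 0 < n → U ^ n ≠ 1) :
    Metric.sphere (0 : ℂ) 1 ⊆ spectrum ℂ U := by
  intro lam hl
  by_contra hcon
  have hlam : ‖lam‖ = 1 := by simpa using hl
  have h1 : U 1 = 1 := by
    obtain ⟨b, hb⟩ := hbij.2 1
    have := hmul 1 b
    rw [one_mul, hb, mul_one] at this
    exact this.symm
  let f : A →ₐ[ℂ] A := AlgHom.ofLinearMap U.toLinearMap h1 hmul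
  let e : A ≃ₐ[ℂ] A := AlgEquiv.ofBijective f hbij
  have he : ∀ a, e a = U a := fun a => rfl
  obtain ⟨m, hm, hper⟩ := KS.char_period U e he lam hlam hcon
  have hpow : ∀ (n : ℕ) a, (e ^ n) a = (U ^ n) a := by
    intro n a
    induction n with
    | zero => simp
    | succ n ih =>
      rw [pow_succ', pow_succ', AlgEquiv.mul_apply, ih, he]; rfl
  refine hnp m hm ?_
  ext a
  rw [one_apply_eq_self, ← sub_eq_zero, ← Ideal.mem_bot, ← hss, Ideal.mem_jacobson_bot]
  intro y
  by_contra hu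
  obtain ⟨φ, hφ⟩ := WeakDual.CharacterSpace.exists_apply_eq_zero hu
  have h2 := hper (WeakDual.CharacterSpace.toAlgHom φ) a
  rw [hpow] at h2
  have h3 : φ ((U ^ m) a) = φ a := h2
  rw [map_add, map_mul, map_sub, h3, sub_self, zero_mul, zero_add, map_one] at hφ
  exact one_ne_zero hφ
end

section
/- Let A be a commutative semi-simple Banach algebra and U an automorphism of A with U^n ≠ I for all positive integers n. Then the spectrum σ(U) is a connected subset of ℂ. -/
section Q1
open Complex Metric

lemma ax_max {F : Type*} [NormedAddCommGroup F] [NormedSpace ℂ F] (h : ℂ → F) (z₀ : ℂ) (δ K : ℝ)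
    (hδ : 0 < δ) (hd : DiffContOnCl ℂ h (ball z₀ δ))
    (hK : ∀ z ∈ sphere z₀ δ, ‖h z‖ * |‖z‖ - 1| ≤ K) :
    ‖h z₀‖ * (‖z₀‖ * δ) ≤ K * (‖z₀‖ + δ + 1) := by
  set q : ℂ → ℂ := fun z => (starRingEnd ℂ z₀) * (z - z₀) ^ 2 + ((‖z₀‖ ^ 2 - 1 + δ ^ 2 : ℝ) : ℂ) * (z - z₀)
    + z₀ * (δ : ℂ) ^ 2 with hq
  have hqd : Differentiable ℂ q := by
    rw [hq]; fun_prop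
  have hq1 : ∀ z ∈ sphere z₀ δ, ‖q z‖ = δ * (|‖z‖ - 1| * (‖z‖ + 1)) := by
    intro z hz
    have hu : ‖z - z₀‖ = δ := by simpa [dist_eq_norm] using hz
    set u := z - z₀ with hudef
    have hz' : z = z₀ + u := by simp [hudef]
    have huu : u * starRingEnd ℂ u = (δ : ℂ) ^ 2 := by
      rw [Complex.mul_conj, Complex.normSq_eq_norm_sq, hu]; push_cast; rfl
    have hzz : z₀ * starRingEnd ℂ z₀ = ((‖z₀‖ : ℝ) : ℂ) ^ 2 := by
      rw [Complex.mul_conj, Complex.normSq_eq_norm_sq]; push_cast; rfl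
    have hzz2 : z * starRingEnd ℂ z = ((‖z‖ : ℝ) : ℂ) ^ 2 := by
      rw [Complex.mul_conj, Complex.normSq_eq_norm_sq]; push_cast; rfl
    have e : q z = u * ((‖z‖ ^ 2 - 1 : ℝ) : ℂ) := by
      simp only [hq]
      rw [← hudef]
      push_cast
      rw [← hzz2, ← hzz, ← huu, hz', map_add]
      ring
    rw [e, norm_mul, hu, Complex.norm_real, Real.norm_eq_abs]
    congr 1
    rw [show ‖z‖ ^ 2 - 1 = (‖z‖ - 1) * (‖z‖ + 1) by ring, abs_mul, abs_of_nonneg (by positivity : 0 ≤ ‖z‖ + 1)]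
  have hd2 : DiffContOnCl ℂ (fun z => q z • h z) (ball z₀ δ) := hqd.diffContOnCl.smul hd
  have key := Complex.norm_le_of_forall_mem_frontier_norm_le (C := δ * (K * (‖z₀‖ + δ + 1))) isBounded_ball hd2
    (fun z hz => by
      rw [frontier_ball _ hδ.ne'] at hz
      rw [norm_smul, hq1 z hz]
      have hz1 : ‖z‖ ≤ ‖z₀‖ + δ := by
        have hu : ‖z - z₀‖ = δ := by simpa [dist_eq_norm] using hz
        calc ‖z‖ = ‖z₀ + (z - z₀)‖ := by simp
          _ ≤ _ := (norm_add_le _ _).trans (by rw [hu])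
      have := hK z hz
      have h0 : 0 ≤ ‖h z‖ * |‖z‖ - 1| := by positivity
      calc δ * (|‖z‖ - 1| * (‖z‖ + 1)) * ‖h z‖ = δ * ((‖h z‖ * |‖z‖ - 1|) * (‖z‖ + 1)) := by ring
        _ ≤ _ := by gcongr; exact h0.trans this) (subset_closure (mem_ball_self hδ))
  rw [norm_smul] at key
  have : ‖q z₀‖ = ‖z₀‖ * δ ^ 2 := by simp [hq]
  rw [this] at key
  have : δ * (‖h z₀‖ * (‖z₀‖ * δ)) ≤ δ * (K * (‖z₀‖ + δ + 1)) := by linarith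
  exact le_of_mul_le_mul_left this hδ

section res
variable {E : Type*} [NormedAddCommGroup E] [NormedSpace ℂ E]

lemma ax_res1 (T : E →L[ℂ] E) {z : ℂ} (hz : z ∈ resolventSet ℂ T) :
    (algebraMap ℂ (E →L[ℂ] E) z - T) * resolvent T z = 1 := by
  rw [resolvent]; exact Ring.mul_inverse_cancel _ hz

lemma ax_res2 (T : E →L[ℂ] E) {z : ℂ} (hz : z ∈ resolventSet ℂ T) :
    resolvent T z * (algebraMap ℂ (E →L[ℂ] E) z - T) = 1 := by
  rw [resolvent]; exact Ring.inverse_mul_cancel _ hz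

lemma ax_res1' (T : E →L[ℂ] E) {z : ℂ} (hz : z ∈ resolventSet ℂ T) (x : E) :
    z • resolvent T z x - T (resolvent T z x) = x := by
  have := congrArg (fun S : E →L[ℂ] E => S x) (ax_res1 T hz)
  simpa [Algebra.algebraMap_eq_smul_one] using this

lemma ax_res2' (T : E →L[ℂ] E) {z : ℂ} (hz : z ∈ resolventSet ℂ T) (x : E) :
    resolvent T z (z • x - T x) = x := by
  have := congrArg (fun S : E →L[ℂ] E => S x) (ax_res2 T hz)
  simpa [Algebra.algebraMap_eq_smul_one] using this

lemma ax_low (V : E →L[ℂ] E) (hV : ∀ b, ‖V b‖ = ‖b‖) (z : ℂ) (b : E) :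
    |‖z‖ - 1| * ‖b‖ ≤ ‖z • b - V b‖ := by
  have := abs_norm_sub_norm_le (z • b) (V b)
  rw [norm_smul, hV] at this
  rwa [show ‖z‖ * ‖b‖ - ‖b‖ = (‖z‖ - 1) * ‖b‖ by ring, abs_mul, abs_norm] at this

lemma ax_resbound (V : E →L[ℂ] E) (hV : ∀ b, ‖V b‖ = ‖b‖) {z : ℂ} (hz : z ∈ resolventSet ℂ V) :
    ‖resolvent V z‖ * |‖z‖ - 1| ≤ 1 := by
  rcases eq_or_ne (|‖z‖ - 1|) 0 with h | h
  · rw [h]; simp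
  have hp : 0 < |‖z‖ - 1| := lt_of_le_of_ne (abs_nonneg _) h.symm
  rw [← le_div_iff₀ hp]
  refine ContinuousLinearMap.opNorm_le_bound _ (by positivity) fun x => ?_
  have := ax_low V hV z (resolvent V z x)
  rw [ax_res1' V hz] at this
  rw [div_mul_eq_mul_div, le_div_iff₀ hp]; linarith

variable [CompleteSpace E]

lemma ax_specsub (V : E →L[ℂ] E) (hV : ∀ b, ‖V b‖ = ‖b‖) (hu : IsUnit V) :
    spectrum ℂ V ⊆ sphere 0 1 := by
  obtain ⟨v, rfl⟩ := hu
  have h1 : ‖(1 : E →L[ℂ] E)‖ ≤ 1 := ContinuousLinearMap.norm_id_le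
  have hv : ‖(v : E →L[ℂ] E)‖ ≤ 1 :=
    ContinuousLinearMap.opNorm_le_bound _ zero_le_one fun x => by rw [hV, one_mul]
  have hv' : ‖((v⁻¹ : (E →L[ℂ] E)ˣ) : E →L[ℂ] E)‖ ≤ 1 :=
    ContinuousLinearMap.opNorm_le_bound _ zero_le_one fun x => by
      rw [← hV, one_mul, ← mul_apply_eq_comp, Units.mul_inv]; rfl
  intro z hz
  have hz0 : z ≠ 0 := spectrum.ne_zero_of_mem_of_unit hz
  have a1 := spectrum.norm_le_norm_mul_of_mem hz
  have a2 := spectrum.norm_le_norm_mul_of_mem ((spectrum.inv_mem_iff (r := Units.mk0 z hz0)).1 hz)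
  have b1 : ‖z‖ ≤ 1 := a1.trans (mul_le_one₀ hv (norm_nonneg _) h1)
  have b2 : ‖z⁻¹‖ ≤ 1 := by
    have := a2.trans (mul_le_one₀ hv' (norm_nonneg _) h1)
    simpa using this
  rw [norm_inv] at b2
  have : 1 ≤ ‖z‖ := (inv_le_one₀ (norm_pos_iff.2 hz0)).1 b2
  simp; linarith

lemma ax_bdry (V : E →L[ℂ] E) (hV : ∀ b, ‖V b‖ = ‖b‖) (hu : IsUnit V) (l : ℂ) (hl : ‖l‖ = 1)
    (c : ℝ) (hc : 0 < c) (hb : ∀ b, c * ‖b‖ ≤ ‖l • b - V b‖) : l ∈ resolventSet ℂ V := by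
  -- take z near l
  set t : ℝ := c / 4 with ht
  have ht0 : 0 < t := by positivity
  set z : ℂ := (1 + t : ℝ) • l with hz
  have hzn : ‖z‖ = 1 + t := by rw [hz, norm_smul, hl, Real.norm_of_nonneg (by positivity)]; ring
  have hzl : ‖z - l‖ = t := by
    have : z - l = (t : ℂ) * l := by rw [hz, Complex.real_smul]; push_cast; ring
    rw [this, norm_mul, hl, Complex.norm_real, Real.norm_of_nonneg ht0.le, mul_one]
  have hzr : z ∈ resolventSet ℂ V := by
    by_contra hcon
    have := ax_specsub V hV hu hcon
    simp [hzn] at this; linarith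
  have hR : ‖resolvent V z‖ ≤ 2 / c := by
    refine ContinuousLinearMap.opNorm_le_bound _ (by positivity) fun x => ?_
    set y := resolvent V z x with hy
    have e : z • y - V y = x := ax_res1' V hzr x
    have h2 := hb y
    have h3 : l • y - V y = x - (z - l) • y := by rw [← e, sub_smul]; abel
    rw [h3] at h2
    have h4 := norm_sub_le x ((z - l) • y)
    rw [norm_smul, hzl] at h4
    rw [div_mul_eq_mul_div, le_div_iff₀ hc]
    have : 0 ≤ c * ‖y‖ := by positivity
    rw [ht] at h4
    nlinarith
  have hsmall : ‖(z - l) • resolvent V z‖ < 1 := by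
    rw [norm_smul, hzl]
    calc t * ‖resolvent V z‖ ≤ t * (2 / c) := by gcongr
      _ < 1 := by rw [ht]; field_simp; norm_num
  have hun := isUnit_one_sub_of_norm_lt_one hsmall
  have : algebraMap ℂ (E →L[ℂ] E) l - V = (algebraMap ℂ (E →L[ℂ] E) z - V) * (1 - (z - l) • resolvent V z) := by
    rw [mul_sub, mul_one, mul_smul_comm, ax_res1 V hzr, Algebra.algebraMap_eq_smul_one, Algebra.algebraMap_eq_smul_one, sub_smul]
    abel
  rw [spectrum.mem_resolventSet_iff, this]
  exact (spectrum.mem_resolventSet_iff.1 hzr).mul hun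

lemma ax_gelfand (V : E →L[ℂ] E) (hV : ∀ b, ‖V b‖ = ‖b‖)
    (hs : spectrum ℂ V ⊆ {1}) : V = 1 := by
  have hr : ∀ z : ℂ, z ≠ 1 → z ∈ resolventSet ℂ V := fun z hz => by
    by_contra h; exact hz (hs h)
  have hd : ∀ z : ℂ, z ≠ 1 → DifferentiableAt ℂ (resolvent V) z := fun z hz =>
    (spectrum.hasDerivAt_resolvent_const_left (hr z hz)).differentiableAt
  set k : ℂ → (E →L[ℂ] E) := fun z => (z - 1) • resolvent V z with hk
  have hkd : ∀ z : ℂ, z ≠ 1 → DifferentiableAt ℂ k z := fun z hz => by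
    have := hd z hz
    rw [hk]; fun_prop
  have hb1 : ∀ z : ℂ, z ≠ 1 → ‖z - 1‖ < 1 / 2 → ‖k z‖ ≤ 12 := by
    intro z hz hz2
    have hp : 0 < ‖z - 1‖ := norm_pos_iff.2 (sub_ne_zero.2 hz)
    have hz3 : 1 / 2 ≤ ‖z‖ := by
      have : ‖(1 : ℂ)‖ ≤ ‖z‖ + ‖z - 1‖ := by
        calc ‖(1 : ℂ)‖ = ‖z - (z - 1)‖ := by simp
          _ ≤ _ := norm_sub_le _ _
      simp at this; linarith
    have hz4 : ‖z‖ ≤ 3 / 2 := by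
      have : ‖z‖ ≤ ‖(1 : ℂ)‖ + ‖z - 1‖ := by
        calc ‖z‖ = ‖1 + (z - 1)‖ := by simp
          _ ≤ _ := norm_add_le _ _
      simp at this; linarith
    have hne : ∀ w ∈ closedBall z (‖z - 1‖ / 2), w ≠ 1 := by
      rintro w hw rfl
      simp [dist_eq_norm] at hw
      rw [norm_sub_rev] at hw; linarith
    have := ax_max (resolvent V) z (‖z - 1‖ / 2) 1 (by positivity)
      (by
        apply DifferentiableOn.diffContOnCl
        intro w hw
        exact (hd w (hne w (closure_ball_subset_closedBall hw))).differentiableWithinAt)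
      (fun w hw => ax_resbound V hV (hr w (hne w (sphere_subset_closedBall hw))))
    rw [hk]; simp only [norm_smul]
    have h5 : ‖resolvent V z‖ * ((1/2) * (‖z - 1‖ / 2)) ≤ ‖resolvent V z‖ * (‖z‖ * (‖z - 1‖ / 2)) := by gcongr
    nlinarith
  set K := Function.update k 1 (Filter.limUnder (nhdsWithin 1 {1}ᶜ) k) with hK
  have hKk : ∀ z : ℂ, z ≠ 1 → K z = k z := fun z hz => by rw [hK, Function.update_of_ne hz]
  have hKd : Differentiable ℂ K := by
    intro z
    by_cases hz : z = 1
    · subst hz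
      have := Complex.differentiableOn_update_limUnder_of_bddAbove (f := k) (s := ball (1:ℂ) (1/2)) (c := 1)
        (ball_mem_nhds _ (by norm_num)) (fun w hw => (hkd w hw.2).differentiableWithinAt)
        ⟨12, by
          rintro _ ⟨w, hw, rfl⟩
          exact hb1 w hw.2 (by simpa [dist_eq_norm] using hw.1)⟩
      exact (this 1 (mem_ball_self (by norm_num))).differentiableAt (ball_mem_nhds _ (by norm_num))
    · refine (hkd z hz).congr_of_eventuallyEq ?_
      filter_upwards [isOpen_ne.mem_nhds hz] with w hw using hKk w hw
  have hKb : Bornology.IsBounded (Set.range K) := by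
    have h1 : Bornology.IsBounded (K '' closedBall 0 2) :=
      ((isCompact_closedBall (0:ℂ) 2).image hKd.continuous).isBounded
    obtain ⟨C, hC⟩ := h1.exists_norm_le
    refine isBounded_iff_forall_norm_le.2 ⟨max C 3, ?_⟩
    rintro _ ⟨z, rfl⟩
    by_cases hz : ‖z‖ ≤ 2
    · exact (hC _ ⟨z, by simpa using hz, rfl⟩).trans (le_max_left _ _)
    · refine le_trans ?_ (le_max_right _ _)
      push Not at hz
      have hz1 : z ≠ 1 := by rintro rfl; norm_num at hz
      rw [hKk z hz1, hk]; simp only [norm_smul]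
      have := ax_resbound V hV (hr z hz1)
      rw [abs_of_pos (by linarith)] at this
      have h2 : ‖z - 1‖ ≤ ‖z‖ + 1 := (norm_sub_le _ _).trans (by simp)
      have h3 : ‖z - 1‖ ≤ 3 * (‖z‖ - 1) := by linarith
      have := mul_le_mul_of_nonneg_right h3 (norm_nonneg (resolvent V z))
      nlinarith
  have e1 := hKd.apply_eq_apply_of_bounded hKb 0 2
  rw [hKk 0 (by norm_num), hKk 2 (by norm_num)] at e1
  simp only [hk] at e1
  have r0 := ax_res2 V (hr 0 (by norm_num))
  have r2 := ax_res2 V (hr 2 (by norm_num))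
  have e2 : -resolvent V (0:ℂ) = resolvent V (2:ℂ) := by
    simpa [show (2:ℂ) - 1 = 1 by norm_num] using e1
  rw [← e2, mul_sub] at r2
  rw [mul_sub] at r0
  have r0' : - (resolvent V (0:ℂ) * V) = 1 := by simpa using r0
  have r2' : - ((2:ℂ) • resolvent V (0:ℂ)) + resolvent V (0:ℂ) * V = 1 := by
    simpa [Algebra.algebraMap_eq_smul_one] using r2
  have : resolvent V (0:ℂ) = -1 := by
    have h : (2:ℂ) • resolvent V (0:ℂ) = (2:ℂ) • (-1 : E →L[ℂ] E) := by
      have h2 : resolvent V (0:ℂ) * V = -1 := by rw [← r0', neg_neg]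
      rw [h2] at r2'
      have : (2:ℂ) • resolvent V (0:ℂ) = -1 - 1 := by
        rw [neg_eq_iff_eq_neg.1 (eq_sub_of_add_eq r2')]; abel
      rw [this, two_smul]; abel
    exact smul_right_injective _ (two_ne_zero) h
  rw [this] at r0'
  simpa using r0'
end res
end Q1

section Q2
open Complex Metric

lemma ax_order (l₀ : ℂ) (hl₀ : ‖l₀‖ = 1) (η : ℝ) (hη : 0 < η) :
    ∃ N : ℕ, ∀ l : ℂ, ‖l‖ = 1 → (∀ n : ℕ, η ≤ ‖l ^ n - l₀‖) → ∃ k, 0 < k ∧ k ≤ N ∧ l ^ k = 1 := by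
  obtain ⟨N, hN⟩ := exists_nat_gt (2 * Real.pi / η)
  refine ⟨N + 1, fun l hl hn => ?_⟩
  have hrep : ∀ w : ℂ, ‖w‖ = 1 → ∃ x : ℝ, w = exp (((2 * Real.pi * x : ℝ) : ℂ) * I) := by
    intro w hw
    refine ⟨arg w / (2 * Real.pi), ?_⟩
    have := norm_mul_exp_arg_mul_I w
    rw [hw] at this
    rw [mul_div_cancel₀ _ (by positivity)]
    simpa using this.symm
  obtain ⟨x, hx⟩ := hrep l hl
  obtain ⟨t₀, ht₀⟩ := hrep l₀ hl₀
  obtain ⟨k, hk0, hkN, hk⟩ := Real.exists_nat_abs_mul_sub_round_le x (Nat.succ_pos N)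
  refine ⟨k, hk0, hkN, ?_⟩
  set y : ℝ := k * x - round (k * x) with hy
  have hper : ∀ (s : ℝ) (m : ℤ), exp (((2 * Real.pi * (s + m) : ℝ) : ℂ) * I) = exp (((2 * Real.pi * s : ℝ) : ℂ) * I) := by
    intro s m
    rw [← Complex.exp_periodic.int_mul m (((2 * Real.pi * s : ℝ) : ℂ) * I)]
    congr 1; push_cast; ring
  have hlk : l ^ k = exp (((2 * Real.pi * y : ℝ) : ℂ) * I) := by
    have := hper y (round (k * x))
    rw [← this, hx, ← Complex.exp_nat_mul]
    congr 1; rw [hy]; push_cast; ring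
  clear_value y
  by_contra hne
  have hy0 : y ≠ 0 := by
    intro h; rw [hlk, h] at hne; simp at hne
  -- choose t with t / y ≥ 0
  obtain ⟨m, hm⟩ : ∃ m : ℤ, 0 ≤ (t₀ + m) / y := by
    rcases lt_or_gt_of_ne hy0 with h | h
    · refine ⟨-⌈t₀⌉, div_nonneg_of_nonpos ?_ h.le⟩
      have := Int.le_ceil t₀
      push_cast; linarith
    · refine ⟨-⌊t₀⌋, div_nonneg ?_ h.le⟩
      have := Int.floor_le t₀
      push_cast; linarith
  set t := t₀ + m with ht
  set j := ⌊t / y⌋₊ with hj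
  have h1 : (j : ℝ) ≤ t / y := Nat.floor_le hm
  have h2 : t / y < j + 1 := Nat.lt_floor_add_one _
  have h3 : |j * y - t| ≤ |y| := by
    have : (j:ℝ) * y - t = (j - t / y) * y := by field_simp
    rw [this, abs_mul]
    have : |(j:ℝ) - t / y| ≤ 1 := by rw [abs_le]; constructor <;> linarith
    nlinarith [abs_nonneg y]
  have h4 := hn (k * j)
  have h5 : l ^ (k * j) = exp (((2 * Real.pi * (j * y) : ℝ) : ℂ) * I) := by
    rw [pow_mul, hlk, ← Complex.exp_nat_mul]
    congr 1; push_cast; ring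
  have h6 : l₀ = exp (((2 * Real.pi * t : ℝ) : ℂ) * I) := by rw [ht, hper, ← ht₀]
  have h7 : ‖l ^ (k * j) - l₀‖ ≤ 2 * Real.pi * |j * y - t| := by
    rw [h5, h6]
    have : exp (((2 * Real.pi * (j * y) : ℝ) : ℂ) * I) - exp (((2 * Real.pi * t : ℝ) : ℂ) * I)
      = exp (((2 * Real.pi * t : ℝ) : ℂ) * I) * (exp (I * ((2 * Real.pi * (j * y - t) : ℝ) : ℂ)) - 1) := by
      rw [mul_sub, mul_one, ← Complex.exp_add]
      congr 2; push_cast; ring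
    rw [this, norm_mul, Complex.norm_exp_ofReal_mul_I, one_mul]
    refine Real.norm_exp_I_mul_ofReal_sub_one_le.trans ?_
    rw [Real.norm_eq_abs, abs_mul, abs_of_pos (by positivity)]
  have h8 : |y| ≤ 1 / ((N : ℝ) + 1) := by
    refine hk.trans ?_
    push_cast
    gcongr; linarith
  have h9 : 2 * Real.pi * (1 / ((N : ℝ) + 1)) < η := by
    rw [mul_one_div, div_lt_iff₀ (by positivity)]
    rw [div_lt_iff₀ hη] at hN
    nlinarith
  have : 2 * Real.pi * |j * y - t| ≤ 2 * Real.pi * (1 / ((N : ℝ) + 1)) := by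
    gcongr; exact h3.trans h8
  linarith

lemma ax_powdiff {B : Type*} [NormedCommRing B] (hp : ∀ (b : B) (n : ℕ), ‖b ^ n‖ ≤ ‖b‖ ^ n)
    (x y : B) (r ε : ℝ) (hx : ‖x‖ = r) (hy : ‖y‖ = r) (hxy : ‖x - y‖ ≤ ε * r) (n : ℕ) :
    ‖x ^ n - y ^ n‖ ≤ n * ε * r ^ n := by
  have hr : 0 ≤ r := hx ▸ norm_nonneg _
  induction n with
  | zero => simp
  | succ n ih =>
    have : x ^ (n + 1) - y ^ (n + 1) = x ^ n * (x - y) + (x ^ n - y ^ n) * y := by ring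
    rw [this]
    calc _ ≤ ‖x ^ n‖ * ‖x - y‖ + ‖x ^ n - y ^ n‖ * ‖y‖ :=
          (norm_add_le _ _).trans (add_le_add (norm_mul_le _ _) (norm_mul_le _ _))
      _ ≤ r ^ n * (ε * r) + (n * ε * r ^ n) * r := by
          have := hp x n
          rw [hx] at this
          rw [hy]; gcongr
      _ = _ := by push_cast; ring

lemma ax_algB {B : Type*} [NormedCommRing B] [NormedAlgebra ℂ B] [CompleteSpace B]
    (hp : ∀ (b : B) (n : ℕ), ‖b ^ n‖ = ‖b‖ ^ n)
    (V : B →L[ℂ] B) (hV : ∀ b, ‖V b‖ = ‖b‖) (hu : IsUnit V)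
    (hVp : ∀ (b : B) (n : ℕ), V (b ^ n) = V b ^ n)
    (l₀ : ℂ) (hl₀ : ‖l₀‖ = 1) (hl : l₀ ∉ spectrum ℂ V) : ∃ M : ℕ, 0 < M ∧ V ^ M = 1 := by
  have hsub := ax_specsub V hV hu
  have hpow : ∀ l ∈ spectrum ℂ V, ∀ n : ℕ, l ^ n ∈ spectrum ℂ V := by
    intro l hls n hcon
    have hl1 : ‖l‖ = 1 := by simpa using hsub hls
    -- lower bound at l ^ n
    set C := ‖resolvent V (l ^ n)‖ + 1 with hC
    have hCp : 0 < C := by positivity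
    have hlow : ∀ b : B, ‖b‖ ≤ C * ‖(l ^ n) • b - V b‖ := fun b => by
      have h1 := ax_res2' V hcon b
      calc ‖b‖ = ‖resolvent V (l ^ n) ((l ^ n) • b - V b)‖ := by rw [h1]
        _ ≤ ‖resolvent V (l ^ n)‖ * ‖(l ^ n) • b - V b‖ := ContinuousLinearMap.le_opNorm _ _
        _ ≤ _ := by gcongr; rw [hC]; linarith
    set ε : ℝ := 1 / (C * (n + 1) * 2) with hε
    have hε0 : 0 < ε := by positivity
    have : ¬ ∀ b, ε * ‖b‖ ≤ ‖l • b - V b‖ := fun h => hls (ax_bdry V hV hu l hl1 ε hε0 h)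
    push Not at this
    obtain ⟨b, hb⟩ := this
    have hb0 : 0 < ‖b‖ := by
      by_contra h
      have h' : ‖b‖ = 0 := le_antisymm (not_lt.1 h) (norm_nonneg _)
      rw [h', mul_zero] at hb
      exact absurd hb (not_lt.2 (norm_nonneg _))
    have h1 := ax_powdiff (fun b n => (hp b n).le) (l • b) (V b) ‖b‖ ε (by rw [norm_smul, hl1, one_mul]) (hV b) hb.le n
    rw [smul_pow, ← hVp] at h1
    have h2 := hlow (b ^ n)
    rw [hp] at h2
    have hbn : 0 < ‖b‖ ^ n := by positivity
    have h3 : ‖b‖ ^ n ≤ C * (n * ε * ‖b‖ ^ n) := h2.trans (by gcongr)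
    have h4 : C * (n * ε) < 1 := by
      rw [hε]
      rw [show C * (n * (1 / (C * (n + 1) * 2))) = n / ((n + 1) * 2) by field_simp]
      rw [div_lt_one (by positivity)]; linarith [(Nat.cast_nonneg n : (0:ℝ) ≤ n)]
    nlinarith
  obtain ⟨η, hη, hball⟩ := Metric.isOpen_iff.1 (spectrum.isOpen_resolventSet (𝕜 := ℂ) V) l₀ (by
    by_contra h; exact hl h)
  obtain ⟨N, hN⟩ := ax_order l₀ hl₀ η hη
  refine ⟨N.factorial, N.factorial_pos, ?_⟩
  apply ax_gelfand
  · have : ∀ (n : ℕ) b, ‖(V ^ n) b‖ = ‖b‖ := by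
      intro n
      induction n with
      | zero => simp
      | succ n ih => intro b; rw [pow_succ, mul_apply_eq_comp]; exact (ih _).trans (hV b)
    exact this _
  · rw [spectrum.map_pow_of_pos V N.factorial_pos]
    rintro _ ⟨l, hls, rfl⟩
    obtain ⟨k, hk0, hkN, hk⟩ := hN l (by simpa using hsub hls) (fun n => by
      by_contra h
      push Not at h
      exact hpow l hls n (hball (by simpa [dist_eq_norm] using h)))
    obtain ⟨d, hd⟩ := Nat.dvd_factorial hk0 hkN
    simp [hd, pow_mul, hk]
end Q2

section Q3
open Complex Metric MeasureTheory
open scoped ContDiff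

noncomputable def axD {F : Type*} [NormedAddCommGroup F] [NormedSpace ℂ F] (f : ℂ → F) (z : ℂ) : F :=
  fderiv ℝ f z 1 + I • fderiv ℝ f z I

section
variable {F : Type*} [NormedAddCommGroup F] [NormedSpace ℂ F]

lemma axD_cont {f : ℂ → F} (hf : ContDiff ℝ 1 f) : Continuous (axD f) := by
  have := hf.continuous_fderiv (by norm_num)
  unfold axD
  fun_prop

lemma axD_tsupport (f : ℂ → F) : tsupport (axD f) ⊆ tsupport f := by
  refine closure_minimal ?_ isClosed_closure
  intro z hz
  by_contra h
  apply hz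
  have : fderiv ℝ f z = 0 := by
    by_contra h2
    exact h (support_fderiv_subset ℝ h2)
  simp [axD, this]

lemma axD_cs {f : ℂ → F} (hc : HasCompactSupport f) : HasCompactSupport (axD f) :=
  IsCompact.of_isClosed_subset hc (isClosed_tsupport _) (axD_tsupport f)

lemma axD_congr {f g : ℂ → F} {z : ℂ} (h : f =ᶠ[nhds z] g) : axD f z = axD g z := by
  simp [axD, h.fderiv_eq]

lemma axD_int {f : ℂ → F} (hf : ContDiff ℝ 1 f) (hc : HasCompactSupport f) :
    ∫ z, axD f z = 0 := by
  have hdc := hf.continuous_fderiv (by norm_num : (1 : WithTop ℕ∞) ≠ 0)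
  have hI : ∀ v : ℂ, Integrable (fun z => fderiv ℝ f z v) := fun v =>
    Continuous.integrable_of_hasCompactSupport (by fun_prop) (hc.fderiv_apply (𝕜 := ℝ) v)
  have h0 : ∀ v : ℂ, ∫ z, fderiv ℝ f z v = 0 := by
    intro v
    have := integral_bilinear_fderiv_right_eq_neg_left_of_integrable (μ := (volume : Measure ℂ))
      (f := fun _ : ℂ => (1:ℝ)) (g := f) (v := v) (B := ContinuousLinearMap.lsmul ℝ ℝ)
      (by simp) (by simpa using hI v)
      (by simpa using hf.continuous.integrable_of_hasCompactSupport hc)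
      (fun x _ => by fun_prop) (fun x _ => hf.differentiable (by norm_num) x)
    simpa using this
  unfold axD
  have hI2 : Integrable (fun z => I • fderiv ℝ f z I) := (hI I).smul I
  rw [integral_add (hI 1) hI2, integral_smul, h0, h0]; simp

lemma axD_smul {χ : ℂ → ℂ} {G : ℂ → F} {z : ℂ} (hχ : DifferentiableAt ℝ χ z)
    (hG : DifferentiableAt ℂ G z) : axD (fun w => χ w • G w) z = axD χ z • G z := by
  have hG' := hG.hasFDerivAt.restrictScalars ℝ
  have h := (hχ.hasFDerivAt.smul hG').fderiv
  unfold axD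
  have e : (fderiv ℝ (fun w => χ w • G w) z) = _ := h
  rw [e]
  have e2 : fderiv ℂ G z I = I • fderiv ℂ G z 1 := by
    rw [← map_smul]; simp
  simp only [add_apply, smul_apply,
    ContinuousLinearMap.smulRight_apply, ContinuousLinearMap.coe_restrictScalars', e2, smul_add, add_smul, smul_smul]
  simp
  rw [show I * (χ z * I) = - χ z by rw [mul_left_comm, I_mul_I]; ring]
  simp
  abel
end

lemma axD_radial : ∃ χ₀ : ℂ → ℂ, ContDiff ℝ 1 χ₀ ∧ HasCompactSupport χ₀ ∧ (∀ᶠ z in nhds 0, χ₀ z = 1) ∧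
    ∫ z, axD χ₀ z * z⁻¹ ≠ 0 := by
  set ψ : ℝ → ℝ := fun t => 1 - Real.smoothTransition (t - 1) with hψ
  have hψd : ContDiff ℝ 1 ψ := by
    have : ContDiff ℝ 1 Real.smoothTransition := Real.smoothTransition.contDiff (n := 1)
    rw [hψ]; fun_prop
  have hψ1 : ∀ t ≤ 1, ψ t = 1 := fun t ht => by
    simp [hψ, Real.smoothTransition.zero_of_nonpos (by linarith : t - 1 ≤ 0)]
  have hψ0 : ∀ t, 2 ≤ t → ψ t = 0 := fun t ht => by
    simp [hψ, Real.smoothTransition.one_of_one_le (by linarith : 1 ≤ t - 1)]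
  have hanti : Antitone ψ := fun s t hst => by
    have := Real.smoothTransition.monotone (by linarith : s - 1 ≤ t - 1)
    simp only [hψ]; linarith
  set χ₀ : ℂ → ℂ := fun z => ((ψ (normSq z) : ℝ) : ℂ) with hχ₀
  have hns : ContDiff ℝ 1 (fun z : ℂ => normSq z) := by
    have : (fun z : ℂ => normSq z) = fun z => ‖z‖ ^ 2 := by ext z; exact Complex.normSq_eq_norm_sq z
    rw [this]; exact contDiff_norm_sq ℝ
  have hχd : ContDiff ℝ 1 χ₀ := ofRealCLM.contDiff.comp (hψd.comp hns)
  have hDeq : ∀ z : ℂ, axD χ₀ z = ((2 * deriv ψ (normSq z) : ℝ) : ℂ) * z := by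
    intro z
    have hn : HasFDerivAt (fun z : ℂ => normSq z) ((2 * z.re) • reCLM + (2 * z.im) • imCLM) z := by
      have h1 : HasFDerivAt (fun z : ℂ => z.re) reCLM z := reCLM.hasFDerivAt
      have h2 : HasFDerivAt (fun z : ℂ => z.im) imCLM z := imCLM.hasFDerivAt
      have := (h1.mul h1).add (h2.mul h2)
      rw [two_mul, two_mul, add_smul, add_smul]
      exact this
    have hp := (hψd.differentiable (by norm_num) (normSq z)).hasDerivAt
    have hc := (ofRealCLM.hasFDerivAt (x := ψ (normSq z))).comp z (hp.comp_hasFDerivAt z hn)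
    have e : fderiv ℝ χ₀ z = _ := hc.fderiv
    simp only [axD]
    rw [e]
    apply Complex.ext <;> simp <;> ring
  have hc : HasCompactSupport χ₀ := by
    refine HasCompactSupport.intro (isCompact_closedBall (0:ℂ) 2) fun z hz => ?_
    have : 2 < ‖z‖ := by simpa using hz
    simp only [hχ₀]
    rw [hψ0 _ (by rw [Complex.normSq_eq_norm_sq]; nlinarith)]; simp
  refine ⟨χ₀, hχd, hc, ?_, ?_⟩
  · filter_upwards [ball_mem_nhds (0:ℂ) one_pos] with z hz
    have : ‖z‖ < 1 := by simpa using hz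
    simp only [hχ₀]
    rw [hψ1 _ (by rw [Complex.normSq_eq_norm_sq]; nlinarith [norm_nonneg z])]; simp
  · set g : ℂ → ℝ := fun z => - deriv ψ (normSq z) with hg
    have hψ'c : Continuous (deriv ψ) := hψd.continuous_deriv (by norm_num)
    have hgc : Continuous g := (hψ'c.comp hns.continuous).neg
    have hderiv0 : ∀ t, 2 < t → deriv ψ t = 0 := fun t ht => by
      have : ψ =ᶠ[nhds t] fun _ => 0 := by
        filter_upwards [lt_mem_nhds ht] with s hs using hψ0 s hs.le
      rw [this.deriv_eq]; simp
    have hgs : HasCompactSupport g := by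
      refine HasCompactSupport.intro (isCompact_closedBall (0:ℂ) 2) fun z hz => ?_
      have : 2 < ‖z‖ := by simpa using hz
      simp only [hg]
      rw [hderiv0 _ (by rw [Complex.normSq_eq_norm_sq]; nlinarith)]; simp
    obtain ⟨t, ht, hte⟩ := exists_deriv_eq_slope ψ (by norm_num : (1:ℝ) < 2) hψd.continuous.continuousOn
      (hψd.differentiable (by norm_num)).differentiableOn
    rw [hψ0 2 le_rfl, hψ1 1 le_rfl] at hte
    have hpos : 0 < ∫ z, g z := by
      refine hgc.integral_pos_of_hasCompactSupport_nonneg_nonzero hgs (fun z => ?_) (x := ((Real.sqrt t : ℝ) : ℂ)) ?_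
      · have := hanti.deriv_nonpos (x := normSq z)
        simp only [hg, Pi.zero_apply]; linarith
      · simp only [hg]
        rw [Complex.normSq_ofReal, Real.mul_self_sqrt (by linarith [ht.1]), hte]; norm_num
    have : ∫ z, axD χ₀ z * z⁻¹ = ∫ z, ((-2 * g z : ℝ) : ℂ) := by
      apply integral_congr_ae
      have : ∀ᵐ z : ℂ, z ≠ 0 := by
        simp [ae_iff]
      filter_upwards [this] with z hz
      rw [hDeq, mul_assoc, mul_inv_cancel₀ hz]; simp [hg]
    rw [this]
    have e : ∫ z, ((-2 * g z : ℝ) : ℂ) = ((∫ z, -2 * g z : ℝ) : ℂ) := integral_ofReal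
    rw [e, integral_const_mul]
    exact Complex.ofReal_ne_zero.2 (by intro h; linarith)

lemma axD_const {χ : ℂ → ℂ} (hχ : ContDiff ℝ 1 χ) (hc : HasCompactSupport χ) (w : ℂ)
    (h1 : ∀ᶠ z in nhds w, χ z = 1) : ∫ z, axD χ z * (z - w)⁻¹ ≠ 0 := by
  obtain ⟨χ₀, hd₀, hc₀, h1₀, hne⟩ := axD_radial
  set θ : ℂ → ℂ := fun z => χ (z + w) with hθ
  have hθd : ContDiff ℝ 1 θ := by rw [hθ]; fun_prop
  have hθc : HasCompactSupport θ := hc.comp_homeomorph (Homeomorph.addRight w)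
  have hθ1 : ∀ᶠ z in nhds 0, θ z = 1 := by
    have : Filter.Tendsto (fun z : ℂ => z + w) (nhds 0) (nhds w) := by
      have : Continuous fun z : ℂ => z + w := by fun_prop
      simpa using this.tendsto 0
    exact this.eventually h1
  have hDθ : ∀ z, axD θ z = axD χ (z + w) := by
    intro z
    simp only [axD, hθ, fderiv_comp_add_right]
  have e1 : ∫ z, axD χ z * (z - w)⁻¹ = ∫ z, axD θ z * z⁻¹ := by
    rw [← integral_add_right_eq_self _ w]
    simp [hDθ]
  rw [e1]
  suffices h : ∫ z, axD θ z * z⁻¹ = ∫ z, axD χ₀ z * z⁻¹ by rwa [h]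
  have hint : ∀ f : ℂ → ℂ, ContDiff ℝ 1 f → HasCompactSupport f → (∀ᶠ z in nhds 0, f z = 1) →
      Integrable fun z => axD f z * z⁻¹ := by
    intro f hf hfc hf1
    refine Continuous.integrable_of_hasCompactSupport ?_ ?_
    · rw [continuous_iff_continuousAt]
      intro z
      by_cases hz : z = 0
      · subst hz
        have : (fun z => axD f z * z⁻¹) =ᶠ[nhds 0] fun _ => 0 := by
          filter_upwards [hf1.eventually_nhds] with z hz
          rw [axD_congr (g := fun _ => 1) hz]; simp [axD]
        exact continuousAt_const.congr this.symm
      · exact (axD_cont hf).continuousAt.mul (continuousAt_inv₀ hz)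
    · exact (axD_cs hfc).mul_right
  rw [← sub_eq_zero, ← integral_sub (hint θ hθd hθc hθ1) (hint χ₀ hd₀ hc₀ h1₀)]
  have hg : ContDiff ℝ 1 (fun z => (θ z - χ₀ z) • z⁻¹) := by
    rw [contDiff_iff_contDiffAt]
    intro z
    by_cases hz : z = 0
    · subst hz
      have : (fun z => (θ z - χ₀ z) • z⁻¹) =ᶠ[nhds 0] fun _ => 0 := by
        filter_upwards [hθ1, h1₀] with z a b
        simp [a, b]
      exact contDiffAt_const.congr_of_eventuallyEq this
    · exact (hθd.sub hd₀).contDiffAt.smul (contDiffAt_inv ℝ hz)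
  have hgc : HasCompactSupport (fun z => (θ z - χ₀ z) • z⁻¹) :=
    (hθc.sub hc₀).smul_right
  rw [← axD_int hg hgc]
  apply integral_congr_ae
  have : ∀ᵐ z : ℂ, z ≠ 0 := by
    simp [ae_iff]
  filter_upwards [this] with z hz
  have hθz := hθd.differentiable (by norm_num) z
  have hχz := hd₀.differentiable (by norm_num) z
  rw [axD_smul (χ := fun z => θ z - χ₀ z) (hθz.sub hχz) (differentiableAt_inv hz)]
  have : axD (fun z => θ z - χ₀ z) z = axD θ z - axD χ₀ z := by
    simp only [axD]
    rw [fderiv_fun_sub hθz hχz]; simp; ring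
  rw [this]; simp [sub_mul]
end Q3

section Q4
open Complex Metric MeasureTheory
open scoped ContDiff

lemma ax_cutoff (K C : Set ℂ) (hK : IsCompact K) (hC : IsClosed C) (hd : Disjoint K C) :
    ∃ χ : ℂ → ℂ, ContDiff ℝ 1 χ ∧ HasCompactSupport χ ∧ (∀ z ∈ K, ∀ᶠ w in nhds z, χ w = 1) ∧
      Disjoint (tsupport χ) C := by
  obtain ⟨L, hL, hKL, hLC⟩ := exists_compact_between hK hC.isOpen_compl hd.subset_compl_right
  obtain ⟨f, hf1, hf0, -⟩ := exists_contMDiffMap_one_nhds_of_subset_interior (n := 1) (modelWithCornersSelf ℝ ℂ)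
    hK.isClosed hKL
  have hfd : ContDiff ℝ 1 f := f.contMDiff.contDiff
  have hts : tsupport (fun z => ((f z : ℝ) : ℂ)) ⊆ L := by
    refine closure_minimal ?_ hL.isClosed
    intro z hz
    by_contra h
    exact hz (by simp [hf0 z h])
  refine ⟨fun z => ((f z : ℝ) : ℂ), ofRealCLM.contDiff.comp hfd, ?_, ?_, ?_⟩
  · exact IsCompact.of_isClosed_subset hL (isClosed_tsupport _) hts
  · intro z hz
    filter_upwards [(eventually_nhdsSet_iff_forall.1 hf1) z hz] with w hw
    simp [hw]
  · rw [Set.disjoint_left]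
    intro z hz
    exact hLC (hts hz)

lemma ax_clopen {A B : Type*} [NormedAddCommGroup A] [NormedSpace ℂ A] [CompleteSpace A]
    [NormedAddCommGroup B] [NormedSpace ℂ B] [CompleteSpace B]
    (U : A →L[ℂ] A) (V : B →L[ℂ] B) (i : A →L[ℂ] B) (hi : Function.Injective i)
    (hUV : ∀ a, i (U a) = V (i a)) (K₁ K₂ : Set ℂ) (h1 : IsClosed K₁) (h2 : IsCompact K₂)
    (hs : spectrum ℂ U ⊆ K₁ ∪ K₂) (hK : Disjoint K₂ K₁) (hV : Disjoint K₂ (spectrum ℂ V)) :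
    ∀ w ∈ K₂, w ∉ spectrum ℂ U := by
  intro w hw
  obtain ⟨χ, hχ, hχc, hχ1, hχd⟩ := ax_cutoff K₂ (K₁ ∪ spectrum ℂ V) h2
    (h1.union (spectrum.isClosed V)) (Set.disjoint_union_right.2 ⟨hK, hV⟩)
  rw [Set.disjoint_union_right] at hχd
  -- vanishing of axD χ near the spectrum of U
  have hD0 : ∀ z ∈ K₁ ∪ K₂, ∀ᶠ y in nhds z, axD χ y = 0 := by
    rintro z (hz | hz)
    · have : z ∈ (tsupport χ)ᶜ := fun h => Set.disjoint_left.1 hχd.1 h hz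
      filter_upwards [(isClosed_tsupport χ).isOpen_compl.mem_nhds this] with y hy
      by_contra hne
      exact hy (axD_tsupport χ (subset_tsupport _ hne))
    · filter_upwards [(hχ1 z hz).eventually_nhds] with y hy
      rw [axD_congr (g := fun _ => 1) hy]; simp [axD]
  have hrd : ∀ z ∉ K₁ ∪ K₂, ContinuousAt (resolvent U) z := fun z hz => by
    have : z ∈ resolventSet ℂ U := by by_contra h; exact hz (hs h)
    exact (spectrum.hasDerivAt_resolvent_const_left this).continuousAt
  have hint : ∀ g : ℂ → ℂ, (∀ z ∉ K₁ ∪ K₂, ContinuousAt g z) →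
      Integrable (fun z => (axD χ z * g z) • resolvent U z) ∧ Integrable (fun z => axD χ z * g z) := by
    intro g hg
    have hcg : Continuous (fun z => axD χ z * g z) := by
      rw [continuous_iff_continuousAt]
      intro z
      by_cases hz : z ∈ K₁ ∪ K₂
      · refine continuousAt_const.congr (f := fun _ => 0) ?_
        filter_upwards [hD0 z hz] with y hy
        simp [hy]
      · exact (axD_cont hχ).continuousAt.mul (hg z hz)
    have hcs : HasCompactSupport (fun z => axD χ z * g z) := (axD_cs hχc).mul_right
    refine ⟨Continuous.integrable_of_hasCompactSupport ?_ hcs.smul_right, hcg.integrable_of_hasCompactSupport hcs⟩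
    rw [continuous_iff_continuousAt]
    intro z
    by_cases hz : z ∈ K₁ ∪ K₂
    · refine continuousAt_const.congr (f := fun _ => 0) ?_
      filter_upwards [hD0 z hz] with y hy
      simp [hy]
    · exact hcg.continuousAt.smul (hrd z hz)
  -- E
  have hE : ∫ z, axD χ z • resolvent U z = 0 := by
    have hEi : Integrable (fun z => axD χ z • resolvent U z) := by
      simpa using (hint (fun _ => 1) (fun _ _ => continuousAt_const)).1
    ext a
    apply hi
    rw [ContinuousLinearMap.integral_apply hEi, ← i.integral_comp_comm (hEi.apply_continuousLinearMap a)]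
    simp only [zero_apply, map_zero]
    set f : ℂ → B := fun z => χ z • resolvent V z (i a) with hf
    have hVd : ∀ z ∈ resolventSet ℂ V, DifferentiableAt ℂ (fun z => resolvent V z (i a)) z := fun z hz => by
      have := (spectrum.hasDerivAt_resolvent_const_left hz).differentiableAt
      fun_prop
    have hfd : ContDiff ℝ 1 f := by
      rw [contDiff_iff_contDiffAt]
      intro z
      by_cases hz : z ∈ spectrum ℂ V
      · have : z ∈ (tsupport χ)ᶜ := fun h => Set.disjoint_left.1 hχd.2 h hz
        refine (contDiffAt_const (c := 0)).congr_of_eventuallyEq ?_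
        filter_upwards [(isClosed_tsupport χ).isOpen_compl.mem_nhds this] with y hy
        simp [hf, image_eq_zero_of_notMem_tsupport hy]
      · have hz' : z ∈ resolventSet ℂ V := by by_contra h; exact hz h
        have : ContDiffAt ℂ 1 (fun z => resolvent V z (i a)) z := by
          have hdo : DifferentiableOn ℂ (fun z => resolvent V z (i a)) (resolventSet ℂ V) :=
            fun y hy => (hVd y hy).differentiableWithinAt
          exact (hdo.analyticAt ((spectrum.isOpen_resolventSet V).mem_nhds hz')).contDiffAt
        exact hχ.contDiffAt.smul (this.restrict_scalars ℝ)
    rw [← axD_int hfd hχc.smul_right]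
    congr 1
    ext z
    by_cases hz : z ∈ spectrum ℂ V
    · have : z ∈ (tsupport χ)ᶜ := fun h => Set.disjoint_left.1 hχd.2 h hz
      have h0 : axD χ z = 0 := by
        by_contra hne
        exact this (axD_tsupport χ (subset_tsupport _ hne))
      have h0' : axD f z = 0 := by
        have : f =ᶠ[nhds z] fun _ => 0 := by
          filter_upwards [(isClosed_tsupport χ).isOpen_compl.mem_nhds this] with y hy
          simp [hf, image_eq_zero_of_notMem_tsupport hy]
        rw [axD_congr this]; simp [axD]
      simp [h0, h0']
    · have hz' : z ∈ resolventSet ℂ V := by by_contra h; exact hz h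
      rw [hf, axD_smul (hχ.differentiable (by norm_num) z) (hVd z hz')]
      by_cases hzU : z ∈ K₁ ∪ K₂
      · simp [(hD0 z hzU).self_of_nhds]
      · have hzr : z ∈ resolventSet ℂ U := by by_contra h; exact hzU (hs h)
        have e1 := ax_res1' U hzr a
        have e2 := ax_res2' V hz' (i (resolvent U z a))
        rw [← hUV, ← map_smul, ← map_sub, e1] at e2
        simp [e2]
  set c := ∫ z, axD χ z * (z - w)⁻¹ with hc
  have hc0 : c ≠ 0 := axD_const hχ hχc w (hχ1 w hw)
  have hg := hint (fun z => (z - w)⁻¹) (fun z hz => by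
    have : z - w ≠ 0 := fun h => hz (by rw [sub_eq_zero.1 h]; exact Or.inr hw)
    exact ContinuousAt.inv₀ (by fun_prop) this)
  set S := ∫ z, (axD χ z * (z - w)⁻¹) • resolvent U z with hS
  have hEi : Integrable (fun z => axD χ z • resolvent U z) := by
    simpa using (hint (fun _ => 1) (fun _ _ => continuousAt_const)).1
  have hsum : ∫ z, ((axD χ z * (z - w)⁻¹) • (1 : A →L[ℂ] A) - axD χ z • resolvent U z) = c • (1 : A →L[ℂ] A) := by
    rw [integral_sub (hg.2.smul_const _) hEi, hE, sub_zero, integral_smul_const]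
  set W := algebraMap ℂ (A →L[ℂ] A) w - U with hW
  have hWz : ∀ z, W = (algebraMap ℂ (A →L[ℂ] A) z - U) - (z - w) • 1 := fun z => by
    rw [hW, Algebra.algebraMap_eq_smul_one, Algebra.algebraMap_eq_smul_one, sub_smul]; abel
  have l1 : W * S = c • 1 := by
    rw [← hsum, hS]
    have := (ContinuousLinearMap.mul ℂ (A →L[ℂ] A) W).integral_comp_comm hg.1
    simp only [ContinuousLinearMap.mul_apply'] at this
    rw [← this]
    congr 1
    ext1 z
    by_cases hzU : z ∈ K₁ ∪ K₂
    · simp [(hD0 z hzU).self_of_nhds]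
    · have hzr : z ∈ resolventSet ℂ U := by by_contra h; exact hzU (hs h)
      have hzw : z - w ≠ 0 := fun h => hzU (by rw [sub_eq_zero.1 h]; exact Or.inr hw)
      rw [mul_smul_comm, hWz z, sub_mul, ax_res1 U hzr, smul_sub, smul_mul_assoc, one_mul, smul_smul,
        mul_assoc, inv_mul_cancel₀ hzw, mul_one]
  have l2 : S * W = c • 1 := by
    rw [← hsum, hS]
    have := ((ContinuousLinearMap.mul ℂ (A →L[ℂ] A)).flip W).integral_comp_comm hg.1
    simp only [ContinuousLinearMap.flip_apply, ContinuousLinearMap.mul_apply'] at this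
    rw [← this]
    congr 1
    ext1 z
    by_cases hzU : z ∈ K₁ ∪ K₂
    · simp [(hD0 z hzU).self_of_nhds]
    · have hzr : z ∈ resolventSet ℂ U := by by_contra h; exact hzU (hs h)
      have hzw : z - w ≠ 0 := fun h => hzU (by rw [sub_eq_zero.1 h]; exact Or.inr hw)
      rw [smul_mul_assoc, hWz z, mul_sub, ax_res2 U hzr, smul_sub, mul_smul_comm, mul_one, smul_smul,
        mul_assoc, inv_mul_cancel₀ hzw, mul_one]
  intro hmem
  apply hmem
  rw [spectrum.mem_resolventSet_iff]
  refine ⟨⟨W, c⁻¹ • S, ?_, ?_⟩, rfl⟩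
  · rw [mul_smul_comm, l1, smul_smul, inv_mul_cancel₀ hc0, one_smul]
  · rw [smul_mul_assoc, l2, smul_smul, inv_mul_cancel₀ hc0, one_smul]
end Q4

section P5
open Complex Metric WeakDual

section gel
variable {A : Type*} [NormedCommRing A] [NormedAlgebra ℂ A] [CompleteSpace A]

noncomputable def axPhi (e : A →ₐ[ℂ] A) : C(characterSpace ℂ A, characterSpace ℂ A) where
  toFun m := CharacterSpace.equivAlgHom.symm ((CharacterSpace.equivAlgHom m).comp e)
  continuous_toFun := by
    refine Continuous.subtype_mk (WeakDual.continuous_of_continuous_eval fun a => ?_) _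
    exact (map_continuous (gelfandTransform ℂ A (e a)))

lemma axPhi_apply (e : A →ₐ[ℂ] A) (m : characterSpace ℂ A) (a : A) : axPhi e m a = m (e a) := rfl

noncomputable def axW (e : A →ₐ[ℂ] A) : C(characterSpace ℂ A, ℂ) →L[ℂ] C(characterSpace ℂ A, ℂ) :=
  LinearMap.mkContinuous (ContinuousMap.compRightAlgHom ℂ ℂ (axPhi e)).toLinearMap 1 (fun f => by
    rw [one_mul]
    exact (ContinuousMap.norm_le _ (norm_nonneg _)).2 fun m => f.norm_coe_le_norm _)

lemma axW_apply (e : A →ₐ[ℂ] A) (f : C(characterSpace ℂ A, ℂ)) (m : characterSpace ℂ A) :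
    axW e f m = f (axPhi e m) := rfl

lemma axW_gel (e : A →ₐ[ℂ] A) (a : A) : axW e (gelfandTransform ℂ A a) = gelfandTransform ℂ A (e a) := rfl

lemma axW_le (e : A →ₐ[ℂ] A) (f : C(characterSpace ℂ A, ℂ)) : ‖axW e f‖ ≤ ‖f‖ :=
  (ContinuousMap.norm_le _ (norm_nonneg _)).2 fun m => f.norm_coe_le_norm _

lemma axW_comp (e e' : A →ₐ[ℂ] A) (h : ∀ a, e (e' a) = a) (f : C(characterSpace ℂ A, ℂ)) :
    axW e (axW e' f) = f := by
  ext m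
  rw [axW_apply, axW_apply]
  congr 1
  apply CharacterSpace.ext
  intro a
  rw [axPhi_apply, axPhi_apply, h]

noncomputable abbrev axB (A : Type*) [NormedCommRing A] [NormedAlgebra ℂ A] [CompleteSpace A] :
    Subalgebra ℂ C(characterSpace ℂ A, ℂ) := (gelfandTransform ℂ A).range.topologicalClosure

lemma axB_maps (e : A →ₐ[ℂ] A) (f : C(characterSpace ℂ A, ℂ)) (hf : f ∈ axB A) : axW e f ∈ axB A := by
  refine map_mem_closure (axW e).continuous hf ?_
  rintro _ ⟨a, rfl⟩
  exact ⟨e a, rfl⟩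

noncomputable def axV (e : A →ₐ[ℂ] A) : axB A →L[ℂ] axB A where
  toFun f := ⟨axW e f, axB_maps e f f.2⟩
  map_add' f g := by ext1; simp
  map_smul' c f := by ext1; simp
  cont := by
    refine Continuous.subtype_mk ?_ _
    exact (axW e).continuous.comp continuous_subtype_val

lemma axV_coe (e : A →ₐ[ℂ] A) (f : axB A) : ((axV e f : axB A) : C(characterSpace ℂ A, ℂ)) = axW e f := rfl

noncomputable def axI : A →L[ℂ] axB A :=
  LinearMap.mkContinuous
    { toFun := fun a => (⟨gelfandTransform ℂ A a, subset_closure ⟨a, rfl⟩⟩ : axB A)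
      map_add' := fun a b => by ext1; simp
      map_smul' := fun c a => by ext1; simp } ‖(1 : A)‖ (fun a => by
    refine (ContinuousMap.norm_le _ (by positivity)).2 fun m => ?_
    have := spectrum.norm_le_norm_mul_of_mem (CharacterSpace.apply_mem_spectrum m a)
    rw [mul_comm]
    exact this)

lemma axI_coe (a : A) : ((axI a : axB A) : C(characterSpace ℂ A, ℂ)) = gelfandTransform ℂ A a := rfl

lemma axI_inj (hss : (⊥ : Ideal A).jacobson = ⊥) : Function.Injective (axI (A := A)) := by
  rw [injective_iff_map_eq_zero]
  intro a ha
  have h0 : ∀ m : characterSpace ℂ A, m a = 0 := fun m => by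
    have := congrArg (fun f : axB A => (f : C(characterSpace ℂ A, ℂ)) m) ha
    simpa [axI_coe] using this
  have : a ∈ (⊥ : Ideal A).jacobson := by
    rw [Ideal.mem_jacobson_bot]
    intro y
    by_contra hu
    haveI : Nontrivial A := by
      by_contra hn
      rw [not_nontrivial_iff_subsingleton] at hn
      exact hu (isUnit_of_subsingleton _)
    obtain ⟨m, hm⟩ := CharacterSpace.exists_apply_eq_zero hu
    simp [h0 m] at hm
  rw [hss] at this
  simpa using this

lemma ax_normpow {X : Type*} [TopologicalSpace X] [CompactSpace X] (f : C(X, ℂ)) (n : ℕ) (hX : Nonempty X) :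
    ‖f ^ n‖ = ‖f‖ ^ n := by
  apply le_antisymm
  · refine (ContinuousMap.norm_le _ (by positivity)).2 fun m => ?_
    rw [ContinuousMap.pow_apply, norm_pow]
    exact pow_le_pow_left₀ (norm_nonneg _) (f.norm_coe_le_norm m) n
  · obtain ⟨m, -, hm⟩ := isCompact_univ.exists_isMaxOn Set.univ_nonempty
      (f := fun m => ‖f m‖) (by fun_prop)
    have : ‖f‖ ≤ ‖f m‖ := (ContinuousMap.norm_le _ (norm_nonneg _)).2 fun x => hm (Set.mem_univ x)
    calc ‖f‖ ^ n ≤ ‖f m‖ ^ n := pow_le_pow_left₀ (norm_nonneg _) this n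
      _ = ‖(f ^ n) m‖ := by rw [ContinuousMap.pow_apply, norm_pow]
      _ ≤ _ := (f ^ n).norm_coe_le_norm m

lemma axV_pow (e : A →ₐ[ℂ] A) (b : axB A) (n : ℕ) : axV e (b ^ n) = axV e b ^ n := by
  apply Subtype.ext
  ext m
  simp [axV_coe, axW_apply]

lemma axI_dense : DenseRange (axI (A := A)) := by
  intro f
  rw [Topology.IsInducing.subtypeVal.closure_eq_preimage_closure_image]
  have := f.2
  refine closure_mono ?_ (this : (f : C(characterSpace ℂ A, ℂ)) ∈ closure _)
  rintro _ ⟨a, rfl⟩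
  exact ⟨axI a, ⟨a, rfl⟩, rfl⟩

end gel

theorem ax_final {A B : Type*} [NormedAddCommGroup A] [NormedSpace ℂ A] [CompleteSpace A]
    [NormedCommRing B] [NormedAlgebra ℂ B] [CompleteSpace B]
    (U : A →L[ℂ] A) (V V' : B →L[ℂ] B) (i : A →L[ℂ] B) (hi : Function.Injective i)
    (hdense : DenseRange i) (hiU : ∀ a, i (U a) = V (i a))
    (hp : ∀ (b : B) (n : ℕ), ‖b ^ n‖ = ‖b‖ ^ n)
    (hle : ∀ b, ‖V b‖ ≤ ‖b‖) (hle' : ∀ b, ‖V' b‖ ≤ ‖b‖)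
    (hVV' : ∀ b, V (V' b) = b) (hV'V : ∀ b, V' (V b) = b)
    (hVp : ∀ (b : B) (n : ℕ), V (b ^ n) = V b ^ n)
    (hnp : ∀ n : ℕ, 0 < n → U ^ n ≠ 1) :
    IsConnected (spectrum ℂ U) := by
  have hVu : IsUnit V := ⟨⟨V, V', by ext b; exact hVV' b, by ext b; exact hV'V b⟩, rfl⟩
  have hV : ∀ b, ‖V b‖ = ‖b‖ := by
    intro b
    refine le_antisymm (hle b) ?_
    calc ‖b‖ = ‖V' (V b)‖ := by rw [hV'V]
      _ ≤ _ := hle' (V b)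
  -- the spectrum of V is contained in the spectrum of U
  have hsVU : ∀ l : ℂ, ‖l‖ = 1 → l ∈ resolventSet ℂ U → l ∈ resolventSet ℂ V := by
    intro l hl hlr
    obtain ⟨δ, hδ, hball⟩ := Metric.isOpen_iff.1 (spectrum.isOpen_resolventSet (𝕜 := ℂ) U) l hlr
    have hcb : closedBall l (δ / 2) ⊆ resolventSet ℂ U := (closedBall_subset_ball (by linarith)).trans hball
    set C : ℝ := (1 + δ / 2 + 1) / (δ / 2) with hC
    have hCp : 0 < C := by positivity
    have hbd : ∀ a : A, ‖i (resolvent U l a)‖ ≤ C * ‖i a‖ := by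
      intro a
      have := ax_max (fun z => i (resolvent U z a)) l (δ / 2) ‖i a‖ (by positivity)
        (by
          apply DifferentiableOn.diffContOnCl
          intro w hw
          have := (spectrum.hasDerivAt_resolvent_const_left (hcb (closure_ball_subset_closedBall hw))).differentiableAt
          refine DifferentiableAt.differentiableWithinAt ?_
          exact i.differentiableAt.comp w (by fun_prop))
        (fun z hz => by
          have h := ax_low V hV z (i (resolvent U z a))
          rw [← hiU, ← map_smul, ← map_sub, ax_res1' U (hcb (sphere_subset_closedBall hz))] at h
          linarith)
      rw [hl, one_mul, ← le_div_iff₀ (by positivity)] at this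
      refine this.trans (le_of_eq ?_)
      rw [hC]; ring
    refine ax_bdry V hV hVu l hl C⁻¹ (by positivity) ?_
    have hb0 : ∀ a : A, C⁻¹ * ‖i a‖ ≤ ‖l • i a - V (i a)‖ := by
      intro a
      have := hbd (l • a - U a)
      rw [ax_res2' U hlr, map_sub, map_smul, hiU] at this
      rwa [inv_mul_le_iff₀ hCp]
    intro b
    refine hdense.induction_on (p := fun b => C⁻¹ * ‖b‖ ≤ ‖l • b - V b‖) b ?_ hb0
    exact isClosed_le (by fun_prop) (by fun_prop)
  -- the circle lies in the spectrum
  have hcirc : sphere (0:ℂ) 1 ⊆ spectrum ℂ U := by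
    intro l hl
    have hl1 : ‖l‖ = 1 := by simpa using hl
    intro hlr
    obtain ⟨M, hM, hVM⟩ := ax_algB hp V hV hVu hVp l hl1 (fun h => h (hsVU l hl1 hlr))
    apply hnp M hM
    ext a
    apply hi
    have : ∀ n a, i ((U ^ n) a) = (V ^ n) (i a) := by
      intro n
      induction n with
      | zero => intro a; rfl
      | succ n ih => intro a; rw [pow_succ, pow_succ, mul_apply_eq_comp, mul_apply_eq_comp, ih, hiU]
    rw [this, hVM]; rfl
  refine ⟨⟨1, hcirc (by simp)⟩, ?_⟩
  have hsV : spectrum ℂ V ⊆ sphere 0 1 := ax_specsub V hV hVu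
  have hconn : IsPreconnected (sphere (0:ℂ) 1) :=
    isPreconnected_sphere (by simp [Complex.rank_real_complex]) 0 1
  have main : ∀ u v : Set ℂ, IsClosed u → IsClosed v → spectrum ℂ U ⊆ u ∪ v → spectrum ℂ U ∩ (u ∩ v) = ∅ →
      sphere (0:ℂ) 1 ⊆ u → spectrum ℂ U ⊆ u := by
    intro u v hu hv hsub hdis hcu
    have hdis' : ∀ z, z ∈ spectrum ℂ U → z ∈ u → z ∈ v → False := fun z a b c => by
      have : z ∈ spectrum ℂ U ∩ (u ∩ v) := ⟨a, b, c⟩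
      rw [hdis] at this; exact this
    have := ax_clopen U V i hi hiU (spectrum ℂ U ∩ u) (spectrum ℂ U ∩ v)
      ((spectrum.isClosed U).inter hu) ((spectrum.isCompact U).inter_right hv)
      (fun z hz => (hsub hz).imp (fun h => ⟨hz, h⟩) (fun h => ⟨hz, h⟩))
      (Set.disjoint_left.2 fun z a b => hdis' z a.1 b.2 a.2)
      (Set.disjoint_left.2 fun z a b => hdis' z a.1 (hcu (hsV b)) a.2)
    intro z hz
    rcases hsub hz with h | h
    · exact h
    · exact absurd hz (this z ⟨hz, h⟩)
  rw [isPreconnected_iff_subset_of_disjoint_closed]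
  intro u v hu hv hsub hdis
  have hc := isPreconnected_iff_subset_of_disjoint_closed.1 hconn u v hu hv (hcirc.trans hsub)
    (Set.subset_empty_iff.1 (fun z hz => by rw [← hdis]; exact ⟨hcirc hz.1, hz.2⟩))
  rcases hc with hc | hc
  · exact Or.inl (main u v hu hv hsub hdis hc)
  · exact Or.inr (main v u hv hu (by rwa [Set.union_comm]) (by rwa [Set.inter_comm v u]) hc)

end P5

/-- If `U` is an automorphism of a commutative semi-simple Banach algebra with
`U ^ n ≠ I` for all positive `n`, then the spectrum of `U` is a connected subset of `ℂ`. -/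
theorem stmt2 {A : Type*} [NormedCommRing A] [NormedAlgebra ℂ A] [CompleteSpace A]
    (hss : (⊥ : Ideal A).jacobson = ⊥)
    (U : A →L[ℂ] A) (hmul : ∀ x y : A, U (x * y) = U x * U y)
    (hbij : Function.Bijective U)
    (hnp : ∀ n : ℕ, 0 < n → U ^ n ≠ 1) :
    IsConnected (spectrum ℂ U) := by
  haveI : Nontrivial A := by
    by_contra hn
    rw [not_nontrivial_iff_subsingleton] at hn
    exact hnp 1 one_pos (by ext a; exact Subsingleton.elim _ _)
  have hone : U 1 = 1 := by
    obtain ⟨x, hx⟩ := hbij.2 1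
    have := hmul 1 x
    rw [one_mul, hx, mul_one] at this
    exact this.symm
  set e : A →ₐ[ℂ] A := AlgHom.ofLinearMap U.toLinearMap hone hmul with he
  have heU : ∀ a, e a = U a := fun a => rfl
  set E : A ≃ₐ[ℂ] A := AlgEquiv.ofBijective e hbij with hE
  set e' : A →ₐ[ℂ] A := E.symm.toAlgHom with he'
  have h1 : ∀ a, e (e' a) = a := fun a => E.apply_symm_apply a
  have h2 : ∀ a, e' (e a) = a := fun a => E.symm_apply_apply a
  haveI : CompleteSpace (axB A) := (Subalgebra.isClosed_topologicalClosure _).completeSpace_coe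
  have hX : Nonempty (WeakDual.characterSpace ℂ A) := by
    obtain ⟨m, -⟩ := WeakDual.CharacterSpace.exists_apply_eq_zero (a := (0 : A)) not_isUnit_zero
    exact ⟨m⟩
  exact ax_final (A := A) (B := axB A) U (axV (A := A) e) (axV (A := A) e') (axI (A := A)) (axI_inj hss) (axI_dense (A := A)) (fun a => rfl)
    (fun b n => ax_normpow (b : C(WeakDual.characterSpace ℂ A, ℂ)) n hX)
    (fun b => axW_le e b) (fun b => axW_le e' b)
    (fun b => Subtype.ext (axW_comp e e' h1 b)) (fun b => Subtype.ext (axW_comp e' e h2 b))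
    (fun b n => axV_pow e b n) hnp
end

section
/- Let T be an invertible bounded operator on a Banach space X such that σ(Ť) = 𝕋 ⊆ σ(T) for an associated quotient/restriction operator Ť on a Banach space Z with a bounded intertwining map π : X → Z satisfying ‖π(T^n f)‖ ≤ ‖T^n f‖ for all n and f (e.g. π norm-nonincreasing). Then σ(T) has no connected component entirely contained in the open unit disc; in particular if in addition σ(T) is rotation-symmetric near 𝕋 as given, σ(T) is connected. -/
open MeasureTheory Filter Topology

namespace RieszAux

/-- Twice the Cauchy-Riemann operator. -/
noncomputable def dbar (h : ℂ → ℂ) (z : ℂ) : ℂ :=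
  fderiv ℝ h z 1 + Complex.I * fderiv ℝ h z Complex.I

theorem integrable_smul {E : Type*} [NormedAddCommGroup E] [NormedSpace ℂ E]
    {φ : ℂ → ℂ} {F : ℂ → E} {W : Set ℂ} (hW : IsOpen W) (hφ : Continuous φ)
    (hc : HasCompactSupport φ) (hs : tsupport φ ⊆ W) (hF : ContinuousOn F W) :
    Integrable (fun z => φ z • F z) := by
  apply Continuous.integrable_of_hasCompactSupport
  · apply continuous_of_tsupport
    intro x hx
    have hx' : x ∈ W := hs (tsupport_smul_subset_left φ F hx)
    exact hφ.continuousAt.smul (hF.continuousAt (hW.mem_nhds hx'))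
  · exact hc.smul_right

theorem continuous_dbar {χ : ℂ → ℂ} (hχ : ContDiff ℝ 1 χ) : Continuous (dbar χ) := by
  have h := hχ.continuous_fderiv one_ne_zero
  unfold dbar
  fun_prop

theorem tsupport_dbar (χ : ℂ → ℂ) : tsupport (dbar χ) ⊆ tsupport χ := by
  apply closure_minimal _ (isClosed_tsupport _)
  intro x hx
  by_contra h
  apply hx
  simp [dbar, fderiv_of_notMem_tsupport ℝ h]

theorem notMem_tsupport_dbar {χ : ℂ → ℂ} {x : ℂ} {c : ℂ} (h : ∀ᶠ y in 𝓝 x, χ y = c) :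
    x ∉ tsupport (dbar χ) := by
  rw [notMem_tsupport_iff_eventuallyEq]
  filter_upwards [h.eventually_nhds] with y hy
  have : χ =ᶠ[𝓝 y] fun _ => c := hy
  simp [dbar, this.fderiv_eq]

theorem integral_dbar_smul {E : Type*} [NormedAddCommGroup E] [NormedSpace ℂ E] [CompleteSpace E]
    {χ : ℂ → ℂ} {F : ℂ → E} {W : Set ℂ} (hW : IsOpen W) (hχ : ContDiff ℝ 1 χ)
    (hc : HasCompactSupport χ) (hs : tsupport χ ⊆ W) (hF : DifferentiableOn ℂ F W) :
    ∫ z, dbar χ z • F z = 0 := by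
  have hdiff : ∀ x ∈ tsupport χ, HasFDerivAt F ((fderiv ℂ F x).restrictScalars ℝ) x := fun x hx =>
    ((hF.differentiableAt (hW.mem_nhds (hs hx))).hasFDerivAt).restrictScalars ℝ
  have heq : ∀ v x, χ x • fderiv ℝ F x v = (χ x * v) • deriv F x := by
    intro v x
    by_cases hx : x ∈ tsupport χ
    · rw [(hdiff x hx).fderiv]
      have : fderiv ℂ F x v = v • deriv F x := by
        rw [← fderiv_apply_one_eq_deriv, ← map_smul]; simp
      simp [this, mul_smul]
    · simp [image_eq_zero_of_notMem_tsupport hx]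
  have hdc : ContinuousOn (deriv F) W := (hF.deriv hW).continuousOn
  have hfc := hχ.continuous_fderiv one_ne_zero
  have i1 : ∀ v, Integrable (fun x => fderiv ℝ χ x v • F x) := fun v => by
    refine integrable_smul hW (by fun_prop) ?_ ?_ hF.continuousOn
    · exact hc.fderiv_apply ℝ v
    · refine (closure_minimal ?_ (isClosed_tsupport _)).trans hs
      intro x hx
      by_contra h
      apply hx
      simp [fderiv_of_notMem_tsupport ℝ h]
  have i2 : ∀ v, Integrable (fun x => χ x • fderiv ℝ F x v) := fun v => by
    simp only [heq]
    refine integrable_smul hW (by have := hχ.continuous; fun_prop) ?_ ?_ hdc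
    · exact hc.mul_right
    · exact (tsupport_mul_subset_left).trans hs
  have i3 : Integrable (fun x => χ x • F x) :=
    integrable_smul hW hχ.continuous hc hs hF.continuousOn
  have key : ∀ v, ∫ x, χ x • fderiv ℝ F x v = - ∫ x, fderiv ℝ χ x v • F x := fun v =>
    integral_smul_fderiv_eq_neg_fderiv_smul_of_integrable (i1 v) (i2 v) i3
      (fun x _ => (hχ.differentiable one_ne_zero) x) (fun x hx => (hdiff x hx).differentiableAt)
  have h1 := key 1
  have hI := key Complex.I
  simp only [heq] at h1 hI
  have e : ∀ z, dbar χ z • F z = fderiv ℝ χ z 1 • F z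
      + Complex.I • (fderiv ℝ χ z Complex.I • F z) := fun z => by
    rw [dbar, add_smul, mul_smul]
  simp only [e]
  have i4 : Integrable (fun x => Complex.I • (fderiv ℝ χ x Complex.I • F x)) :=
    (i1 Complex.I).smul Complex.I
  rw [integral_add (i1 _) i4, integral_smul, ← neg_inj, neg_add, ← smul_neg, ← h1, ← hI,
    ← integral_smul, neg_zero]
  have : ∀ x, Complex.I • (χ x * Complex.I) • deriv F x = - ((χ x * 1) • deriv F x) := by
    intro x
    rw [smul_smul, ← neg_smul]
    congr 1
    linear_combination χ x * Complex.I_mul_I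
  simp only [this, integral_neg]
  simp

theorem integral_dbar_inv_ne {χ : ℂ → ℂ} {μ : ℂ} (hχ : ContDiff ℝ 1 χ)
    (hc : HasCompactSupport χ) (h1 : ∀ᶠ z in 𝓝 μ, χ z = 1) :
    ∫ z, dbar χ z • (z - μ)⁻¹ ≠ 0 := by
  let ψ : ℝ → ℝ := fun s => Real.smoothTransition (2 - s)
  have hψ : ContDiff ℝ 1 ψ := by
    have : ContDiff ℝ 1 Real.smoothTransition := Real.smoothTransition.contDiff (n := 1)
    exact this.comp (contDiff_const.sub contDiff_id)
  have hψ0 : ∀ s, 2 ≤ s → ψ s = 0 := fun s hs => Real.smoothTransition.zero_of_nonpos (by linarith)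
  have hψ1 : ∀ s, s ≤ 1 → ψ s = 1 := fun s hs => Real.smoothTransition.one_of_one_le (by linarith)
  have hψa : Antitone ψ := fun a b hab => Real.smoothTransition.monotone (by linarith)
  let q : ℂ → ℝ := fun z => Complex.normSq (z - μ)
  have hqe : ∀ z, q z = (z - μ).re * (z - μ).re + (z - μ).im * (z - μ).im := fun z =>
    Complex.normSq_apply _
  have hqd : ∀ z, HasFDerivAt q ((2 * (z - μ).re) • Complex.reCLM + (2 * (z - μ).im) • Complex.imCLM) z := by
    intro z
    have hs : HasFDerivAt (fun z : ℂ => z - μ) (ContinuousLinearMap.id ℝ ℂ) z :=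
      (hasFDerivAt_id z).sub_const μ
    have hr : HasFDerivAt (fun z : ℂ => (z - μ).re) Complex.reCLM z :=
      (Complex.reCLM.hasFDerivAt).comp z hs
    have hi : HasFDerivAt (fun z : ℂ => (z - μ).im) Complex.imCLM z :=
      (Complex.imCLM.hasFDerivAt).comp z hs
    have := (hr.mul hr).add (hi.mul hi)
    have e : q = (fun z : ℂ => (z - μ).re) * (fun z : ℂ => (z - μ).re) + (fun z : ℂ => (z - μ).im) * (fun z : ℂ => (z - μ).im) := by
      funext z; simp [hqe]
    rw [e]
    have e2 : (2 * (z - μ).re) • Complex.reCLM + (2 * (z - μ).im) • Complex.imCLM =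
      (z - μ).re • Complex.reCLM + (z - μ).re • Complex.reCLM +
      ((z - μ).im • Complex.imCLM + (z - μ).im • Complex.imCLM) := by
      rw [two_mul, two_mul, add_smul, add_smul]
    rw [e2]
    exact this
  have hqc : ContDiff ℝ 1 q := by
    have e : q = fun z => Complex.reCLM (z - μ) * Complex.reCLM (z - μ) + Complex.imCLM (z - μ) * Complex.imCLM (z - μ) := by
      funext z; simp [hqe]
    rw [e]
    fun_prop
  let χ2 : ℂ → ℂ := fun z => (ψ (q z) : ℂ)
  have hχ2 : ContDiff ℝ 1 χ2 := Complex.ofRealCLM.contDiff.comp (hψ.comp hqc)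
  have hball : ∀ z, z ∉ Metric.closedBall μ 2 → 2 ≤ q z := by
    intro z hz
    rw [Metric.mem_closedBall, not_le, Complex.dist_eq] at hz
    simp only [q, Complex.normSq_eq_norm_sq]
    nlinarith
  have hc2 : HasCompactSupport χ2 := by
    refine HasCompactSupport.intro (isCompact_closedBall μ 2) fun z hz => ?_
    simp [χ2, hψ0 _ (hball z hz)]
  have hnear : ∀ᶠ z in 𝓝 μ, q z < 1 := by
    have : Tendsto q (𝓝 μ) (𝓝 (q μ)) := hqc.continuous.continuousAt
    exact this.eventually_lt_const (by simp [q])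
  have hχ21 : ∀ᶠ z in 𝓝 μ, χ2 z = 1 := by
    filter_upwards [hnear] with z hz
    simp [χ2, hψ1 _ hz.le]
  have hFd : DifferentiableOn ℂ (fun z : ℂ => (z - μ)⁻¹) {μ}ᶜ := by
    intro z hz
    have : z - μ ≠ 0 := sub_ne_zero.2 hz
    exact DifferentiableAt.differentiableWithinAt (by fun_prop (disch := assumption))
  have hW : IsOpen ({μ}ᶜ : Set ℂ) := isOpen_compl_singleton
  have hzero := integral_dbar_smul (F := fun z : ℂ => (z - μ)⁻¹) hW (hχ.sub hχ2)
    (hc.sub hc2) (by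
      intro x hx hx'
      rw [Set.mem_singleton_iff] at hx'
      subst hx'
      refine (notMem_tsupport_iff_eventuallyEq.2 ?_) hx
      filter_upwards [h1, hχ21] with z a b
      simp [a, b]) hFd
  have hdd : ∀ z, dbar (fun x => χ x - χ2 x) z = dbar χ z - dbar χ2 z := by
    intro z
    have a := (hχ.differentiable one_ne_zero) z
    have b := (hχ2.differentiable one_ne_zero) z
    simp only [dbar, fderiv_fun_sub a b, ContinuousLinearMap.sub_apply]
    ring
  have hint : ∀ η : ℂ → ℂ, ContDiff ℝ 1 η → HasCompactSupport η → (∀ᶠ z in 𝓝 μ, η z = 1) →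
      Integrable (fun z => dbar η z • (z - μ)⁻¹) := by
    intro η a b c
    refine integrable_smul hW (continuous_dbar a) (b.mono' (subset_closure.trans (tsupport_dbar η))) ?_ hFd.continuousOn
    intro x hx hx'
    rw [Set.mem_singleton_iff] at hx'
    subst hx'
    exact notMem_tsupport_dbar c hx
  have hzero' : ∫ z, dbar χ z • (z - μ)⁻¹ = ∫ z, dbar χ2 z • (z - μ)⁻¹ := by
    rw [← sub_eq_zero, ← integral_sub (hint χ hχ hc h1) (hint χ2 hχ2 hc2 hχ21), ← hzero]
    congr 1
    funext z
    change _ = dbar (fun x => χ x - χ2 x) z • _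
    rw [hdd, sub_smul]
  rw [hzero']
  have hval : ∀ z, dbar χ2 z • (z - μ)⁻¹ = (((2 * deriv ψ (q z) : ℝ)) : ℂ) := by
    intro z
    have hd : HasFDerivAt (fun z => ψ (q z)) (deriv ψ (q z) • ((2 * (z - μ).re) • Complex.reCLM + (2 * (z - μ).im) • Complex.imCLM)) z :=
      ((hψ.differentiable one_ne_zero) (q z)).hasDerivAt.comp_hasFDerivAt z (hqd z)
    have hd2 : HasFDerivAt χ2 (Complex.ofRealCLM.comp (deriv ψ (q z) • ((2 * (z - μ).re) • Complex.reCLM + (2 * (z - μ).im) • Complex.imCLM))) z :=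
      Complex.ofRealCLM.hasFDerivAt.comp z hd
    have hdb : dbar χ2 z = (((2 * deriv ψ (q z) : ℝ)) : ℂ) * (z - μ) := by
      rw [dbar, hd2.fderiv]
      apply Complex.ext <;> simp <;> ring
    rw [hdb]
    by_cases hz : z = μ
    · subst hz
      have : ψ =ᶠ[𝓝 (q z)] fun _ => 1 := by
        have : q z < 1 := by simp [q]
        filter_upwards [gt_mem_nhds this] with s hs using hψ1 s hs.le
      simp [this.deriv_eq]
    · have : z - μ ≠ 0 := sub_ne_zero.2 hz
      simp [this]
  simp only [hval]
  rw [integral_complex_ofReal]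
  -- positivity
  have hdc : Continuous (deriv ψ) := hψ.continuous_deriv le_rfl
  obtain ⟨c, ⟨hc1, hc3⟩, hcd⟩ := exists_deriv_eq_slope ψ (show (1:ℝ) < 2 by norm_num)
    hψ.continuous.continuousOn (hψ.differentiable one_ne_zero).differentiableOn
  rw [hψ0 2 le_rfl, hψ1 1 le_rfl] at hcd
  have hqz : q (μ + (Real.sqrt c : ℝ)) = c := by
    simp [q, Complex.normSq_ofReal, Real.mul_self_sqrt (by linarith : (0:ℝ) ≤ c)]
  have hpos : 0 < ∫ z, (-(2 * deriv ψ (q z))) := by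
    refine Continuous.integral_pos_of_hasCompactSupport_nonneg_nonzero (x := μ + (Real.sqrt c : ℝ)) ?_ ?_ ?_ ?_
    · have := hqc.continuous; fun_prop
    · refine HasCompactSupport.intro (isCompact_closedBall μ 2) fun z hz => ?_
      have h2 : 2 < q z := by
        rw [Metric.mem_closedBall, not_le, Complex.dist_eq] at hz
        simp only [q, Complex.normSq_eq_norm_sq]
        nlinarith
      have : ψ =ᶠ[𝓝 (q z)] fun _ => 0 := by
        filter_upwards [lt_mem_nhds h2] with s hs using hψ0 s hs.le
      simp [this.deriv_eq]
    · intro z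
      have := hψa.deriv_nonpos (x := q z)
      simp only [Pi.zero_apply]
      linarith
    · rw [hqz, hcd]; norm_num
  rw [integral_neg] at hpos
  intro h
  rw [Complex.ofReal_eq_zero] at h
  linarith

theorem exists_clopen_piece {S : Set ℂ} (hS : IsCompact S) {z : ℂ} (hz : z ∈ S) {U : Set ℂ}
    (hU : IsOpen U) (h : connectedComponentIn S z ⊆ U) :
    ∃ K L : Set ℂ, IsCompact K ∧ IsClosed L ∧ z ∈ K ∧ K ⊆ U ∧ Disjoint K L ∧ S ⊆ K ∪ L := by
  haveI : CompactSpace S := isCompact_iff_compactSpace.1 hS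
  rw [connectedComponentIn_eq_image hz, Set.image_subset_iff,
    connectedComponent_eq_iInter_isClopen] at h
  let N := { s : Set S // IsClopen s ∧ (⟨z, hz⟩ : S) ∈ s }
  haveI : Nonempty N := ⟨⟨Set.univ, isClopen_univ, Set.mem_univ _⟩⟩
  obtain ⟨⟨s, hs, hzs⟩, hsU⟩ : ∃ s : N, s.val ⊆ Subtype.val ⁻¹' U := by
    refine exists_subset_nhds_of_compactSpace ?_ (fun s => s.2.1.1) ?_
    · rintro ⟨s, hs, hs'⟩ ⟨t, ht, ht'⟩
      exact ⟨⟨s ∩ t, hs.inter ht, ⟨hs', ht'⟩⟩, Set.inter_subset_left, Set.inter_subset_right⟩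
    · intro x hx
      exact (hU.preimage continuous_subtype_val).mem_nhds (h hx)
  refine ⟨Subtype.val '' s, Subtype.val '' sᶜ, hs.1.isCompact.image continuous_subtype_val,
    (hs.2.isClosed_compl.isCompact.image continuous_subtype_val).isClosed, ⟨_, hzs, rfl⟩,
    Set.image_subset_iff.2 hsU, ?_, ?_⟩
  · exact (Set.disjoint_image_iff Subtype.val_injective).2 disjoint_compl_right
  · intro x hx
    rw [← Set.image_union, Set.union_compl_self]
    exact ⟨⟨x, hx⟩, trivial, rfl⟩

theorem exists_cutoff {K C : Set ℂ} (hK : IsCompact K) (hC : IsClosed C) (hd : Disjoint K C) :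
    ∃ χ : ℂ → ℂ, ContDiff ℝ 1 χ ∧ HasCompactSupport χ ∧ tsupport χ ⊆ Cᶜ ∧
      ∀ z ∈ K, ∀ᶠ y in 𝓝 z, χ y = 1 := by
  obtain ⟨t, ht, hKt, htC⟩ := exists_compact_between hK hC.isOpen_compl
    (Set.subset_compl_iff_disjoint_right.2 hd)
  obtain ⟨f, hf1, hf0, -⟩ := exists_contMDiffMap_one_nhds_of_subset_interior
    (n := 1) (modelWithCornersSelf ℝ ℂ) hK.isClosed hKt
  have hf : ContDiff ℝ 1 f := f.contMDiff.contDiff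
  have hts : tsupport (fun z => (f z : ℂ)) ⊆ t := by
    refine closure_minimal (fun x hx => ?_) ht.isClosed
    by_contra h
    exact hx (by simp [hf0 x h])
  refine ⟨fun z => (f z : ℂ), Complex.ofRealCLM.contDiff.comp hf, ?_, hts.trans htC, ?_⟩
  · exact ht.of_isClosed_subset (isClosed_tsupport _) hts
  · intro z hz
    filter_upwards [(eventually_nhdsSet_iff_forall.1 hf1) z hz] with y hy
    simp [hy]

theorem differentiableOn_resolvent {A : Type*} [NormedRing A] [NormedAlgebra ℂ A] [CompleteSpace A]
    (a : A) : DifferentiableOn ℂ (resolvent a) (resolventSet ℂ a) := fun _ hz =>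
  (spectrum.hasDerivAt_resolvent_const_left hz).differentiableAt.differentiableWithinAt

end RieszAux


/-- If `T` is invertible on `X`, `Ť` invertible on `Z`, and `p : X → Z` is an injective
bounded map with dense range intertwining `T` and `Ť`, with `‖p(Tⁿf)‖ ≤ ‖Tⁿf‖`,
`σ(Ť) = 𝕋` and `𝕋 ⊆ σ(T)`, then no connected component of `σ(T)` is entirely
contained in the open unit disc. -/
theorem stmt6 {X Z : Type*} [NormedAddCommGroup X] [NormedSpace ℂ X] [CompleteSpace X]
    [NormedAddCommGroup Z] [NormedSpace ℂ Z] [CompleteSpace Z]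
    (p : X →L[ℂ] Z) (hdense : DenseRange p) (hinj : Function.Injective p)
    (T : X →L[ℂ] X) (hT : IsUnit T)
    (Tc : Z →L[ℂ] Z) (hTc : IsUnit Tc)
    (hint : ∀ f : X, p (T f) = Tc (p f))
    (hnorm : ∀ (n : ℕ) (f : X), ‖p ((T ^ n) f)‖ ≤ ‖(T ^ n) f‖)
    (hspec : spectrum ℂ Tc = Metric.sphere (0 : ℂ) 1)
    (hsub : Metric.sphere (0 : ℂ) 1 ⊆ spectrum ℂ T) :
    ∀ z ∈ spectrum ℂ T, ¬ connectedComponentIn (spectrum ℂ T) z ⊆ Metric.ball (0 : ℂ) 1 := by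
  intro μ hμ hsubball
  obtain ⟨K, L, hK, hL, hμK, hKU, hKL, hS⟩ :=
    RieszAux.exists_clopen_piece (spectrum.isCompact T) hμ Metric.isOpen_ball hsubball
  obtain ⟨χ, hχ, hc, hts, hone⟩ := RieszAux.exists_cutoff (C := L ∪ (Metric.ball (0:ℂ) 1)ᶜ) hK
    (hL.union Metric.isOpen_ball.isClosed_compl)
    (by rw [Set.disjoint_union_right]; exact ⟨hKL, Set.disjoint_compl_right_iff_subset.2 hKU⟩)
  have htsball : tsupport χ ⊆ Metric.ball (0:ℂ) 1 := fun x hx => by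
    by_contra h; exact hts hx (Or.inr h)
  have hdc := RieszAux.continuous_dbar hχ
  have hdK : HasCompactSupport (RieszAux.dbar χ) :=
    hc.mono' (subset_closure.trans (RieszAux.tsupport_dbar χ))
  have hballres : Metric.ball (0:ℂ) 1 ⊆ resolventSet ℂ Tc := by
    intro x hx
    by_contra h
    have : x ∈ spectrum ℂ Tc := h
    rw [hspec, mem_sphere_zero_iff_norm] at this
    rw [mem_ball_zero_iff] at hx
    linarith
  have hdK1 : ∀ x ∈ K, x ∉ tsupport (RieszAux.dbar χ) := fun x hx =>
    RieszAux.notMem_tsupport_dbar (hone x hx)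
  have hdres : tsupport (RieszAux.dbar χ) ⊆ resolventSet ℂ T := by
    intro x hx
    by_contra h
    rcases hS h with h' | h'
    · exact hdK1 x h' hx
    · exact hts (RieszAux.tsupport_dbar χ hx) (Or.inl h')
  have hdμ : tsupport (RieszAux.dbar χ) ⊆ {μ}ᶜ := by
    intro x hx hx'
    rw [Set.mem_singleton_iff] at hx'
    exact hdK1 x (hx' ▸ hμK) hx
  have hRT := RieszAux.differentiableOn_resolvent T
  have hRTc := RieszAux.differentiableOn_resolvent Tc
  have hTopen := spectrum.isOpen_resolventSet (𝕜 := ℂ) T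
  have hTcopen := spectrum.isOpen_resolventSet (𝕜 := ℂ) Tc
  have hinv : ContinuousOn (fun z : ℂ => (z - μ)⁻¹) {μ}ᶜ := by
    intro z hz
    have : z - μ ≠ 0 := sub_ne_zero.2 hz
    exact ContinuousAt.continuousWithinAt (by fun_prop (disch := assumption))
  have iP : Integrable (fun z => RieszAux.dbar χ z • resolvent T z) :=
    RieszAux.integrable_smul hTopen hdc hdK hdres hRT.continuousOn
  have iPc : Integrable (fun z => RieszAux.dbar χ z • resolvent Tc z) :=
    RieszAux.integrable_smul hTcopen hdc hdK
      (((RieszAux.tsupport_dbar χ).trans htsball).trans hballres) hRTc.continuousOn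
  have ic : Integrable (fun z => RieszAux.dbar χ z • (z - μ)⁻¹) :=
    RieszAux.integrable_smul isOpen_compl_singleton hdc hdK hdμ hinv
  have iQ : Integrable (fun z => RieszAux.dbar χ z • ((z - μ)⁻¹ • resolvent T z)) :=
    RieszAux.integrable_smul (hTopen.inter isOpen_compl_singleton) hdc hdK
      (Set.subset_inter hdres hdμ)
      ((hinv.mono Set.inter_subset_right).smul (hRT.continuousOn.mono Set.inter_subset_left))
  have hPc : ∫ z, RieszAux.dbar χ z • resolvent Tc z = 0 :=
    RieszAux.integral_dbar_smul hTcopen hχ hc (htsball.trans hballres) hRTc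
  have hcne := RieszAux.integral_dbar_inv_ne hχ hc (hone μ hμK)
  set c := ∫ z, RieszAux.dbar χ z • (z - μ)⁻¹ with hcdef
  -- resolvent identities
  have hr1 : ∀ z ∈ resolventSet ℂ T, (algebraMap ℂ (X →L[ℂ] X) z - T) * resolvent T z = 1 :=
    fun z hz => Ring.mul_inverse_cancel _ hz
  have hr2 : ∀ z ∈ resolventSet ℂ T, resolvent T z * (algebraMap ℂ (X →L[ℂ] X) z - T) = 1 :=
    fun z hz => Ring.inverse_mul_cancel _ hz
  have hr3 : ∀ z ∈ resolventSet ℂ Tc, resolvent Tc z * (algebraMap ℂ (Z →L[ℂ] Z) z - Tc) = 1 :=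
    fun z hz => Ring.inverse_mul_cancel _ hz
  have hinter : ∀ z ∈ resolventSet ℂ T, z ∈ resolventSet ℂ Tc → ∀ f,
      p (resolvent T z f) = resolvent Tc z (p f) := by
    intro z hz hz' f
    have a := congrArg (fun A : X →L[ℂ] X => A f) (hr1 z hz)
    have b := congrArg (fun A : Z →L[ℂ] Z => A (p (resolvent T z f))) (hr3 z hz')
    rw [Algebra.algebraMap_eq_smul_one] at a b
    change z • resolvent T z f - T (resolvent T z f) = f at a
    change resolvent Tc z (z • p (resolvent T z f) - Tc (p (resolvent T z f)))
      = p (resolvent T z f) at b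
    rw [← b, ← hint, ← map_smul, ← map_sub, a]
  have hP : ∫ z, RieszAux.dbar χ z • resolvent T z = 0 := by
    ext f
    apply hinj
    rw [ContinuousLinearMap.integral_apply iP, ← ContinuousLinearMap.integral_comp_comm p
      (iP.apply_continuousLinearMap f)]
    have : ∀ z, p ((RieszAux.dbar χ z • resolvent T z) f)
        = (RieszAux.dbar χ z • resolvent Tc z) (p f) := by
      intro z
      by_cases hz : z ∈ tsupport (RieszAux.dbar χ)
      · simp only [ContinuousLinearMap.smul_apply, map_smul]
        rw [hinter z (hdres hz) (hballres (htsball (RieszAux.tsupport_dbar χ hz)))]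
      · simp [image_eq_zero_of_notMem_tsupport hz]
    simp only [this]
    rw [← ContinuousLinearMap.integral_apply iPc, hPc]
    simp
  set Q := ∫ z, RieszAux.dbar χ z • ((z - μ)⁻¹ • resolvent T z) with hQ
  have hc1 : c • (1 : X →L[ℂ] X) = ∫ z, (RieszAux.dbar χ z • (z - μ)⁻¹) • (1 : X →L[ℂ] X) := by
    rw [integral_smul_const]
  have hval : c • (1 : X →L[ℂ] X) = ∫ z, ((RieszAux.dbar χ z • (z - μ)⁻¹) • (1 : X →L[ℂ] X)
      - RieszAux.dbar χ z • resolvent T z) := by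
    rw [integral_sub (ic.smul_const _) iP, hP, sub_zero, hc1]
  have hl : (algebraMap ℂ (X →L[ℂ] X) μ - T) * Q = c • 1 := by
    rw [hval, hQ, ← integral_const_mul_of_integrable iQ]
    congr 1
    funext z
    by_cases hz : z ∈ tsupport (RieszAux.dbar χ)
    · have hne : z - μ ≠ 0 := sub_ne_zero.2 (hdμ hz)
      have e : (algebraMap ℂ (X →L[ℂ] X) μ - T) * resolvent T z
          = 1 - (z - μ) • resolvent T z := by
        rw [← hr1 z (hdres hz)]
        simp only [Algebra.algebraMap_eq_smul_one, sub_mul, smul_mul_assoc, one_mul, sub_smul]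
        abel
      rw [mul_smul_comm, mul_smul_comm, e, smul_sub, smul_smul _ (z - μ), inv_mul_cancel₀ hne,
        one_smul, smul_sub, smul_assoc]
    · simp [image_eq_zero_of_notMem_tsupport hz]
  have hr : Q * (algebraMap ℂ (X →L[ℂ] X) μ - T) = c • 1 := by
    rw [hval, hQ, ← integral_mul_const_of_integrable iQ]
    congr 1
    funext z
    by_cases hz : z ∈ tsupport (RieszAux.dbar χ)
    · have hne : z - μ ≠ 0 := sub_ne_zero.2 (hdμ hz)
      have e : resolvent T z * (algebraMap ℂ (X →L[ℂ] X) μ - T)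
          = 1 - (z - μ) • resolvent T z := by
        rw [← hr2 z (hdres hz)]
        simp only [Algebra.algebraMap_eq_smul_one, mul_sub, mul_smul_comm, mul_one, sub_smul]
        abel
      rw [smul_mul_assoc, smul_mul_assoc, e, smul_sub, smul_smul _ (z - μ), inv_mul_cancel₀ hne,
        one_smul, smul_sub, smul_assoc]
    · simp [image_eq_zero_of_notMem_tsupport hz]
  apply hμ
  refine ⟨⟨algebraMap ℂ (X →L[ℂ] X) μ - T, c⁻¹ • Q, ?_, ?_⟩, rfl⟩
  · rw [mul_smul_comm, hl, smul_smul, inv_mul_cancel₀ hcne, one_smul]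
  · rw [smul_mul_assoc, hr, smul_smul, inv_mul_cancel₀ hcne, one_smul]
end

section
/- Let K be a compact metric space, φ an isometry of K onto itself such that the set of φ-periodic points is of first category (meagre) in K, let 0 < α ≤ 1, w an invertible element of Lip_α(K), and T f = w · (f ∘ φ) on Lip_α(K). Then σ(T, Lip_α(K)) = σ(T, C(K)), the spectrum of the same weighted composition operator acting on C(K). -/
/-- Sup norm of a function, as a real supremum. -/
noncomputable def supNorm {K : Type*} (f : K → ℂ) : ℝ :=
  sSup (Set.range fun x => ‖f x‖)

/-- The norm of the Hölder algebra `Lip_α(K)`. -/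
noncomputable def holderNorm {K : Type*} [MetricSpace K] (a : ℝ) (f : K → ℂ) : ℝ :=
  supNorm f + sSup {r : ℝ | ∃ x y : K, x ≠ y ∧ r = ‖f x - f y‖ / dist x y ^ a}

/-- The set of α-Hölder functions on `K` (for `α > 0` these are automatically continuous). -/
def HolSet {K : Type*} [MetricSpace K] (a : ℝ) : Set (K → ℂ) :=
  {f | ∃ C : ℝ, ∀ x y : K, ‖f x - f y‖ ≤ C * dist x y ^ a}

/-- `lam` belongs to the resolvent set of the operator `T` acting on the subalgebra `A`
(with norm `N`): `lam • I - T` maps `A` bijectively onto `A` and has a bounded inverse. -/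
def InResolvent {K : Type*} (A : Set (K → ℂ)) (N : (K → ℂ) → ℝ)
    (T : (K → ℂ) → (K → ℂ)) (lam : ℂ) : Prop :=
  (∀ f ∈ A, lam • f - T f ∈ A) ∧
  (∀ f ∈ A, lam • f - T f = 0 → f = 0) ∧
  ∃ C > 0, ∀ g ∈ A, ∃ f ∈ A, lam • f - T f = g ∧ N f ≤ C * N g


set_option linter.unusedSectionVars false

namespace S13

section
variable {K : Type*} [MetricSpace K]

def P (a : ℝ) (f : K → ℂ) (M : ℝ) : Prop :=
  0 ≤ M ∧ (∀ x, ‖f x‖ ≤ M) ∧ ∀ x y, ‖f x - f y‖ ≤ M * dist x y ^ a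

theorem P.add {a : ℝ} {f g : K → ℂ} {M N : ℝ} (hf : P a f M) (hg : P a g N) :
    P a (f + g) (M + N) := by
  obtain ⟨h0, h1, h2⟩ := hf
  obtain ⟨k0, k1, k2⟩ := hg
  refine ⟨by linarith, fun x => (norm_add_le _ _).trans (add_le_add (h1 x) (k1 x)), fun x y => ?_⟩
  have : (f + g) x - (f + g) y = (f x - f y) + (g x - g y) := by simp; ring
  rw [this, add_mul]
  exact (norm_add_le _ _).trans (add_le_add (h2 x y) (k2 x y))

theorem P.smul {a : ℝ} {f : K → ℂ} {M : ℝ} (c : ℂ) (hf : P a f M) : P a (c • f) (‖c‖ * M) := by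
  obtain ⟨h0, h1, h2⟩ := hf
  refine ⟨by positivity, fun x => ?_, fun x y => ?_⟩
  · simp only [Pi.smul_apply, norm_smul]; gcongr; exact h1 x
  · simp only [Pi.smul_apply, ← smul_sub, norm_smul, mul_assoc]; gcongr; exact h2 x y

theorem P.mono {a : ℝ} {f : K → ℂ} {M N : ℝ} (hf : P a f M) (h : M ≤ N) : P a f N := by
  obtain ⟨h0, h1, h2⟩ := hf
  refine ⟨h0.trans h, fun x => (h1 x).trans h, fun x y => (h2 x y).trans ?_⟩
  have := Real.rpow_nonneg (dist_nonneg (x := x) (y := y)) a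
  gcongr

theorem P.mul {a : ℝ} {f g : K → ℂ} {M N : ℝ} (hf : P a f M) (hg : P a g N) :
    P a (fun x => f x * g x) (2 * M * N) := by
  obtain ⟨h0, h1, h2⟩ := hf
  obtain ⟨k0, k1, k2⟩ := hg
  refine ⟨by positivity, fun x => ?_, fun x y => ?_⟩
  · rw [norm_mul]
    have := mul_le_mul (h1 x) (k1 x) (norm_nonneg _) h0
    nlinarith [mul_nonneg h0 k0]
  · have e : f x * g x - f y * g y = f x * (g x - g y) + (f x - f y) * g y := by ring
    rw [e]
    refine (norm_add_le _ _).trans ?_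
    rw [norm_mul, norm_mul]
    have i1 := mul_le_mul (h1 x) (k2 x y) (norm_nonneg _) h0
    have i2 := mul_le_mul (h2 x y) (k1 y) (norm_nonneg _) ((norm_nonneg _).trans (h2 x y))
    nlinarith

theorem P.comp {a : ℝ} {f : K → ℂ} {M : ℝ} (hf : P a f M) {φ : K → K} (hφ : Isometry φ) :
    P a (fun x => f (φ x)) M :=
  ⟨hf.1, fun x => hf.2.1 _, fun x y => by have := hf.2.2 (φ x) (φ y); rwa [hφ.dist_eq] at this⟩

def cw (φ : K → K) (w : K → ℂ) (n : ℕ) (x : K) : ℂ := ∏ i ∈ Finset.range n, w (φ^[i] x)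

theorem cw_succ (φ : K → K) (w : K → ℂ) (n : ℕ) (x : K) :
    cw φ w (n + 1) x = cw φ w n x * w (φ^[n] x) := by
  simp [cw, Finset.prod_range_succ]

theorem cw_succ' (φ : K → K) (w : K → ℂ) (n : ℕ) (x : K) :
    cw φ w (n + 1) x = w x * cw φ w n (φ x) := by
  simp [cw, Finset.prod_range_succ', mul_comm]

theorem cw_ne (φ : K → K) (w : K → ℂ) (hw : ∀ t, w t ≠ 0) (n : ℕ) (x : K) : cw φ w n x ≠ 0 :=
  Finset.prod_ne_zero_iff.2 fun _ _ => hw _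

theorem cw_cont {φ : K → K} (hφ : Isometry φ) {w : K → ℂ} (hw : Continuous w) (n : ℕ) :
    Continuous (cw φ w n) :=
  continuous_finsetProd _ fun i _ => hw.comp (hφ.continuous.iterate i)

theorem iso_iter {φ : K → K} (hφ : Isometry φ) (n : ℕ) : Isometry (φ^[n]) := by
  induction n with
  | zero => exact isometry_id
  | succ n ih => rw [Function.iterate_succ]; exact ih.comp hφ

theorem cw_P {a : ℝ} {φ : K → K} (hφ : Isometry φ) {w : K → ℂ} {W : ℝ} (hw : P a w W) (n : ℕ) :
    ∃ M, P a (cw φ w n) M := by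
  induction n with
  | zero =>
    refine ⟨1, by norm_num, by simp [cw], fun x y => ?_⟩
    simp only [cw, Finset.range_zero, Finset.prod_empty, sub_self, norm_zero]
    positivity
  | succ n ih =>
    obtain ⟨M, hM⟩ := ih
    have : cw φ w (n+1) = fun x => cw φ w n x * w (φ^[n] x) := funext fun x => cw_succ φ w n x
    rw [this]
    exact ⟨_, hM.mul (hw.comp (iso_iter hφ n))⟩

theorem cw_inv (φ : K → K) (w : K → ℂ) (n : ℕ) (x : K) :
    cw φ (fun t => (w t)⁻¹) n x = (cw φ w n x)⁻¹ := by
  simp [cw]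

/-- The operator. -/
def TL (φ : K → K) (w : K → ℂ) : Module.End ℂ (K → ℂ) where
  toFun f := fun t => w t * f (φ t)
  map_add' f g := by ext; simp [mul_add]
  map_smul' c f := by ext; simp; ring

theorem TL_pow (φ : K → K) (w : K → ℂ) (n : ℕ) (f : K → ℂ) (x : K) :
    ((TL φ w) ^ n) f x = cw φ w n x * f (φ^[n] x) := by
  induction n generalizing x with
  | zero => simp [cw]
  | succ n ih =>
    rw [pow_succ', Module.End.mul_apply, cw_succ']
    change w x * _ = _
    rw [ih, Function.iterate_succ_apply, mul_assoc]

def Bd (a : ℝ) (R : Module.End ℂ (K → ℂ)) : Prop :=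
  ∃ C, 0 ≤ C ∧ ∀ f M, Continuous f → P a f M → Continuous (R f) ∧ P a (R f) (C * M)

theorem Bd.add {a : ℝ} {R S : Module.End ℂ (K → ℂ)} (hR : Bd a R) (hS : Bd a S) : Bd a (R + S) := by
  obtain ⟨C, hC, h⟩ := hR
  obtain ⟨D, hD, k⟩ := hS
  refine ⟨C + D, by positivity, fun f M hf hM => ⟨(h f M hf hM).1.add (k f M hf hM).1, ?_⟩⟩
  rw [add_mul]
  exact (h f M hf hM).2.add (k f M hf hM).2

theorem Bd.mul {a : ℝ} {R S : Module.End ℂ (K → ℂ)} (hR : Bd a R) (hS : Bd a S) : Bd a (R * S) := by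
  obtain ⟨C, hC, h⟩ := hR
  obtain ⟨D, hD, k⟩ := hS
  refine ⟨C * D, by positivity, fun f M hf hM => ?_⟩
  obtain ⟨k1, k2⟩ := k f M hf hM
  rw [mul_assoc]
  exact h _ _ k1 k2

theorem Bd.one {a : ℝ} : Bd a (1 : Module.End ℂ (K → ℂ)) :=
  ⟨1, by norm_num, fun f M hf hM => ⟨hf, by simpa using hM⟩⟩

theorem Bd.zero {a : ℝ} : Bd a (0 : Module.End ℂ (K → ℂ)) :=
  ⟨0, by norm_num, fun f M hf hM => ⟨continuous_const, by simp [P]⟩⟩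

theorem Bd.smul {a : ℝ} {R : Module.End ℂ (K → ℂ)} (c : ℂ) (hR : Bd a R) : Bd a (c • R) := by
  obtain ⟨C, hC, h⟩ := hR
  refine ⟨‖c‖ * C, by positivity, fun f M hf hM => ⟨(h f M hf hM).1.const_smul c, ?_⟩⟩
  rw [mul_assoc]
  exact (h f M hf hM).2.smul c

theorem Bd.pow {a : ℝ} {R : Module.End ℂ (K → ℂ)} (hR : Bd a R) (n : ℕ) : Bd a (R ^ n) := by
  induction n with
  | zero => exact Bd.one
  | succ n ih => rw [pow_succ]; exact ih.mul hR

theorem Bd.sum {a : ℝ} {R : ℕ → Module.End ℂ (K → ℂ)} (hR : ∀ i, Bd a (R i)) (n : ℕ) :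
    Bd a (∑ i ∈ Finset.range n, R i) := by
  induction n with
  | zero => exact Bd.zero
  | succ n ih => rw [Finset.sum_range_succ]; exact ih.add (hR n)

theorem Bd.TL {a : ℝ} {φ : K → K} (hφ : Isometry φ) {w : K → ℂ} (hwc : Continuous w) {W : ℝ}
    (hw : P a w W) : Bd a (TL φ w) :=
  ⟨2 * W, by have := hw.1; positivity, fun f M hf hM =>
    ⟨hwc.mul (hf.comp hφ.continuous), hw.mul (hM.comp hφ)⟩⟩

def GoodRes (a : ℝ) (R : Module.End ℂ (K → ℂ)) : Prop :=
  (∀ f M, Continuous f → P a f M → R f = 0 → f = 0) ∧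
  ∃ C, 0 ≤ C ∧ ∀ g M, Continuous g → P a g M → ∃ f, Continuous f ∧ P a f (C * M) ∧ R f = g

theorem goodRes_of_pow {a : ℝ} (T : Module.End ℂ (K → ℂ)) (hT : Bd a T) (lam : ℂ) (m : ℕ)
    (h : GoodRes a (lam ^ m • (1 : Module.End ℂ (K → ℂ)) - T ^ m)) : GoodRes a (lam • (1 : Module.End ℂ (K → ℂ)) - T) := by
  have hc : Commute (lam • (1 : Module.End ℂ (K → ℂ))) T := (Commute.one_left T).smul_left lam
  have e1 := hc.mul_geom_sum₂ m
  have e2 := hc.geom_sum₂_mul m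
  have hp : (lam • (1 : Module.End ℂ (K → ℂ))) ^ m = lam ^ m • (1 : Module.End ℂ (K → ℂ)) := by
    rw [smul_pow, one_pow]
  rw [hp] at e1 e2
  have hb : Bd a (∑ i ∈ Finset.range m, (lam • (1 : Module.End ℂ (K → ℂ))) ^ i * T ^ (m - 1 - i)) :=
    Bd.sum (fun i => ((Bd.one.smul lam).pow i).mul (hT.pow _)) m
  set Q := ∑ i ∈ Finset.range m, (lam • (1 : Module.End ℂ (K → ℂ))) ^ i * T ^ (m - 1 - i)
  obtain ⟨hi, C, hC, hs⟩ := h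
  obtain ⟨D, hD, hQ⟩ := hb
  refine ⟨fun f M hf hM h0 => hi f M hf hM ?_, D * C, by positivity, fun g M hg hM => ?_⟩
  · rw [← e2, Module.End.mul_apply, h0, map_zero]
  · obtain ⟨f, hf, hfP, hfe⟩ := hs g M hg hM
    obtain ⟨q1, q2⟩ := hQ f _ hf hfP
    refine ⟨Q f, q1, by rwa [mul_assoc], ?_⟩
    rw [← Module.End.mul_apply, e1, hfe]
end

section
variable {K : Type*} [MetricSpace K] [CompactSpace K]

theorem iter_bound {X : Type*} (s : X → Prop) (θ : X → X) (hs : ∀ x, s x → s (θ x)) (F b : X → ℝ)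
    (hb : ∀ x, s x → b (θ x) = b x) (M r : ℝ) (hr0 : 0 ≤ r) (hr1 : r < 1)
    (hF : ∀ x, s x → F x ≤ M) (h : ∀ x, s x → F x ≤ b x + r * F (θ x)) :
    ∀ x, s x → F x ≤ b x / (1 - r) := by
  have key : ∀ k : ℕ, ∀ x, s x → F x ≤ b x / (1 - r) + r ^ k * (M - b x / (1 - r)) := by
    intro k
    induction k with
    | zero => intro x hx; simpa using hF x hx
    | succ k ih =>
      intro x hx
      have h1 := h x hx
      have h2 := ih _ (hs x hx)
      rw [hb x hx] at h2
      have h3 := mul_le_mul_of_nonneg_left h2 hr0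
      have h4 : b x + r * (b x / (1 - r)) = b x / (1 - r) := by
        have : 1 - r ≠ 0 := by linarith
        field_simp; ring
      calc F x ≤ b x + r * (b x / (1 - r) + r ^ k * (M - b x / (1 - r))) := by linarith
        _ = (b x + r * (b x / (1 - r))) + r ^ (k+1) * (M - b x / (1 - r)) := by ring
        _ = _ := by rw [h4]
  intro x hx
  have ht : Filter.Tendsto (fun k : ℕ => b x / (1 - r) + r ^ k * (M - b x / (1 - r)))
      Filter.atTop (nhds (b x / (1 - r) + 0 * (M - b x / (1 - r)))) :=
    ((tendsto_pow_atTop_nhds_zero_of_lt_one hr0 hr1).mul_const _).const_add _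
  have := ge_of_tendsto' ht (fun k => key k x hx)
  simpa using this

theorem clopen_sep {E : Set K} (hE : IsClopen E) :
    ∃ δ > 0, ∀ x y, ¬ (x ∈ E ↔ y ∈ E) → δ ≤ dist x y := by
  classical
  have hc : Continuous (fun x => if x ∈ E then (1:ℝ) else 0) :=
    continuous_const.if (by intro a ha; rw [show {x | x ∈ E} = E from rfl, hE.frontier_eq] at ha; exact ha.elim) continuous_const
  have hu := CompactSpace.uniformContinuous_of_continuous hc
  obtain ⟨δ, hδ, h⟩ := Metric.uniformContinuous_iff.1 hu 1 one_pos
  refine ⟨δ, hδ, fun x y hxy => ?_⟩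
  by_contra hlt
  have := h (not_le.1 hlt)
  by_cases hx : x ∈ E <;> by_cases hy : y ∈ E <;> simp_all

theorem solve_fix (a : ℝ) (ha : 0 ≤ a) (E : Set K) (hE : IsClopen E) (A B : K → ℂ) (θ γ : K → K)
    (hA : Continuous A) (hB : Continuous B) (hθ : Continuous θ) (hγ : Continuous γ)
    (r : ℝ) (hr0 : 0 ≤ r) (hr1 : r < 1) (hAr : ∀ x, ‖A x‖ ≤ r) (β : ℝ) (hβ : 0 ≤ β)
    (hBβ : ∀ x, ‖B x‖ ≤ β)
    (hθE : ∀ x, θ x ∈ E ↔ x ∈ E)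
    (hAh : ∀ x y, (x ∈ E ↔ y ∈ E) → ‖A x - A y‖ ≤ β * dist x y ^ a)
    (hBh : ∀ x y, (x ∈ E ↔ y ∈ E) → ‖B x - B y‖ ≤ β * dist x y ^ a)
    (hθd : ∀ x y, (x ∈ E ↔ y ∈ E) → dist (θ x) (θ y) = dist x y)
    (hγd : ∀ x y, (x ∈ E ↔ y ∈ E) → dist (γ x) (γ y) = dist x y) :
    ∃ C, 0 ≤ C ∧ ∀ g M, Continuous g → P a g M → ∃ f, Continuous f ∧ P a f (C * M) ∧
      ∀ x, f x = A x * f (θ x) + B x * g (γ x) := by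
  obtain ⟨δ, hδ, hsep⟩ := clopen_sep hE
  have h1r : 0 < 1 - r := by linarith
  have hδa : 0 < δ ^ a := Real.rpow_pos_of_pos hδ a
  set c1 := β / (1 - r) with hc1
  set c2 := (β * c1 + 2 * β) / (1 - r) with hc2
  set c3 := 2 * c1 / δ ^ a with hc3
  have p1 : 0 ≤ c1 := by positivity
  have p2 : 0 ≤ c2 := by positivity
  have p3 : 0 ≤ c3 := by positivity
  refine ⟨c1 + c2 + c3, by positivity, fun g M hg hM => ?_⟩
  obtain ⟨hM0, hM1, hM2⟩ := hM
  let Φ : C(K, ℂ) → C(K, ℂ) := fun f => ⟨fun x => A x * f (θ x) + B x * g (γ x), by fun_prop⟩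
  have hΦ : ContractingWith ⟨r, hr0⟩ Φ := by
    refine ⟨by exact_mod_cast hr1, LipschitzWith.of_dist_le_mul fun f f' => ?_⟩
    rw [ContinuousMap.dist_le (by positivity)]
    intro x
    change dist (A x * f (θ x) + B x * g (γ x)) (A x * f' (θ x) + B x * g (γ x)) ≤ r * _
    rw [dist_add_right, dist_eq_norm, ← mul_sub, norm_mul, ← dist_eq_norm]
    exact mul_le_mul (hAr x) (ContinuousMap.dist_apply_le_dist _) dist_nonneg hr0
  obtain ⟨f, hf⟩ : ∃ f, Φ f = f := ⟨_, hΦ.fixedPoint_isFixedPt⟩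
  have he : ∀ x, f x = A x * f (θ x) + B x * g (γ x) := fun x => (DFunLike.congr_fun hf x).symm
  have hb1 : ∀ x, ‖f x‖ ≤ c1 * M := by
    intro x
    have := iter_bound (fun _ : K => True) θ (fun _ _ => trivial) (fun x => ‖f x‖) (fun _ => β * M)
      (fun _ _ => rfl) ‖f‖ r hr0 hr1 (fun x _ => f.norm_coe_le_norm x) (fun x _ => by
        rw [he x]
        refine (norm_add_le _ _).trans ?_
        rw [norm_mul, norm_mul, add_comm]
        exact add_le_add (mul_le_mul (hBβ x) (hM1 _) (norm_nonneg _) hβ)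
          (mul_le_mul_of_nonneg_right (hAr x) (norm_nonneg _))) x trivial
    refine this.trans (le_of_eq ?_)
    rw [hc1]; ring
  have hb2 : ∀ x y, (x ∈ E ↔ y ∈ E) → ‖f x - f y‖ ≤ c2 * M * dist x y ^ a := by
    intro x y hxy
    have := iter_bound (fun p : K × K => (p.1 ∈ E ↔ p.2 ∈ E)) (fun p => (θ p.1, θ p.2))
      (fun p hp => by simpa [hθE] using hp) (fun p => ‖f p.1 - f p.2‖)
      (fun p => (β * c1 + 2 * β) * M * dist p.1 p.2 ^ a)
      (fun p hp => by simp only [hθd _ _ hp]) (2 * (c1 * M)) r hr0 hr1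
      (fun p _ => (norm_sub_le _ _).trans (by linarith [hb1 p.1, hb1 p.2]))
      (fun p hp => by
        obtain ⟨x, y⟩ := p
        change ‖f x - f y‖ ≤ (β * c1 + 2 * β) * M * dist x y ^ a + r * ‖f (θ x) - f (θ y)‖
        have hp' : x ∈ E ↔ y ∈ E := hp
        have e : f x - f y = (A x * (f (θ x) - f (θ y)) + (A x - A y) * f (θ y)) +
          (B x * (g (γ x) - g (γ y)) + (B x - B y) * g (γ y)) := by rw [he x, he y]; ring
        have hd : 0 ≤ dist x y ^ a := by positivity
        have i1 := mul_le_mul_of_nonneg_right (hAr x) (norm_nonneg (f (θ x) - f (θ y)))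
        have i2 := mul_le_mul (hAh x y hp') (hb1 (θ y)) (norm_nonneg _) (by positivity)
        have i3 := mul_le_mul (hBβ x) (hM2 (γ x) (γ y)) (norm_nonneg _) hβ
        have i4 := mul_le_mul (hBh x y hp') (hM1 (γ y)) (norm_nonneg _) (by positivity)
        rw [hγd x y hp'] at i3
        rw [e]
        refine (norm_add_le _ _).trans ((add_le_add (norm_add_le _ _) (norm_add_le _ _)).trans ?_)
        simp only [norm_mul]
        nlinarith) (x, y) hxy
    refine this.trans (le_of_eq ?_)
    rw [hc2]; ring
  refine ⟨f, f.continuous, ⟨by positivity, fun x => (hb1 x).trans ?_, fun x y => ?_⟩, he⟩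
  · gcongr; linarith
  · by_cases hxy : x ∈ E ↔ y ∈ E
    · refine (hb2 x y hxy).trans ?_
      gcongr; linarith
    · have hd : δ ^ a ≤ dist x y ^ a := Real.rpow_le_rpow hδ.le (hsep x y hxy) ha
      have : ‖f x - f y‖ ≤ c3 * M * dist x y ^ a := by
        calc ‖f x - f y‖ ≤ 2 * (c1 * M) := (norm_sub_le _ _).trans (by linarith [hb1 x, hb1 y])
          _ = c3 * M * δ ^ a := by rw [hc3]; field_simp
          _ ≤ _ := by gcongr
      refine this.trans ?_
      gcongr; linarith

theorem solve_step (a : ℝ) (ha : 0 ≤ a) (ψ : K ≃ₜ K) (hψ : Isometry ψ) (E : Set K)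
    (hE : IsClopen E) (hEψ : ∀ x, ψ x ∈ E ↔ x ∈ E) (v : K → ℂ) (hv : Continuous v)
    (hv0 : ∀ x, v x ≠ 0) (V : ℝ) (hV : P a v V) (hV' : P a (fun x => (v x)⁻¹) V) (μ : ℂ) (r : ℝ)
    (hr0 : 0 ≤ r) (hr1 : r < 1) (h1 : ∀ x ∈ E, ‖v x‖ ≤ r * ‖μ‖) (h2 : ∀ x ∉ E, ‖μ‖ ≤ r * ‖v x‖) :
    GoodRes a (μ • (1 : Module.End ℂ (K → ℂ)) - TL ψ v) := by
  classical
  have hψs : Isometry ψ.symm := by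
    refine Isometry.of_dist_eq fun x y => ?_
    rw [← hψ.dist_eq]; simp
  have hEs : ∀ x, ψ.symm x ∈ E ↔ x ∈ E := fun x => by rw [← hEψ]; simp
  have hfr : ∀ a ∈ frontier {x | x ∈ E}, False := by
    intro a ha; rw [show {x | x ∈ E} = E from rfl, hE.frontier_eq] at ha; exact ha
  let A : K → ℂ := fun x => if x ∈ E then v x * μ⁻¹ else μ * (v (ψ.symm x))⁻¹
  let B : K → ℂ := fun x => if x ∈ E then μ⁻¹ else - (v (ψ.symm x))⁻¹
  let θ : K → K := fun x => if x ∈ E then ψ x else ψ.symm x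
  let γ : K → K := fun x => if x ∈ E then x else ψ.symm x
  have hvi : Continuous fun x => (v (ψ.symm x))⁻¹ :=
    (hv.comp ψ.symm.continuous).inv₀ fun x => hv0 _
  have cA : Continuous A := Continuous.if (fun a ha => (hfr a ha).elim) (by fun_prop) (by fun_prop)
  have cB : Continuous B := Continuous.if (fun a ha => (hfr a ha).elim) (by fun_prop) (by fun_prop)
  have cθ : Continuous θ := Continuous.if (fun a ha => (hfr a ha).elim) (by fun_prop) (by fun_prop)
  have cγ : Continuous γ := Continuous.if (fun a ha => (hfr a ha).elim) (by fun_prop) (by fun_prop)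
  have hμ : ∀ x ∈ E, μ ≠ 0 := by
    rintro x hx rfl
    have := h1 x hx
    simp [hv0 x] at this
  have hAr : ∀ x, ‖A x‖ ≤ r := by
    intro x
    by_cases hx : x ∈ E
    · simp only [A, if_pos hx, norm_mul, norm_inv]
      rw [← div_eq_mul_inv, div_le_iff₀ (norm_pos_iff.2 (hμ x hx))]
      exact h1 x hx
    · simp only [A, if_neg hx, norm_mul, norm_inv]
      rw [← div_eq_mul_inv, div_le_iff₀ (norm_pos_iff.2 (hv0 _))]
      exact h2 _ (by rwa [hEs])
  obtain ⟨V0, V1, V2⟩ := hV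
  obtain ⟨-, V1', V2'⟩ := hV'
  set β := V * ‖μ‖⁻¹ + ‖μ‖ * V + ‖μ‖⁻¹ + V with hβ
  have hβ0 : 0 ≤ β := by positivity
  have t1 : 0 ≤ V * ‖μ‖⁻¹ := by positivity
  have t2 : 0 ≤ ‖μ‖ * V := by positivity
  have t3 : 0 ≤ ‖μ‖⁻¹ := by positivity
  obtain ⟨C, hC, hsol⟩ := solve_fix a ha E hE A B θ γ cA cB cθ cγ r hr0 hr1 hAr β hβ0
    (by
      intro x
      by_cases hx : x ∈ E
      · simp only [B, if_pos hx, norm_inv]; linarith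
      · simp only [B, if_neg hx, norm_neg]; linarith [V1' (ψ.symm x)])
    (by
      intro x
      by_cases hx : x ∈ E
      · simp only [θ, if_pos hx, hEψ]
      · simp only [θ, if_neg hx, hEs])
    (by
      intro x y hxy
      by_cases hx : x ∈ E
      · have hy := hxy.1 hx
        simp only [A, if_pos hx, if_pos hy, ← sub_mul, norm_mul, norm_inv]
        calc _ ≤ V * dist x y ^ a * ‖μ‖⁻¹ := by gcongr; exact V2 x y
          _ = V * ‖μ‖⁻¹ * dist x y ^ a := by ring
          _ ≤ _ := by gcongr; linarith
      · have hy := fun h => hx (hxy.2 h)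
        simp only [A, if_neg hx, if_neg hy, ← mul_sub, norm_mul]
        have := V2' (ψ.symm x) (ψ.symm y)
        rw [hψs.dist_eq] at this
        calc _ ≤ ‖μ‖ * (V * dist x y ^ a) := by gcongr
          _ = ‖μ‖ * V * dist x y ^ a := by ring
          _ ≤ _ := by gcongr; linarith)
    (by
      intro x y hxy
      by_cases hx : x ∈ E
      · have hy := hxy.1 hx
        simp only [B, if_pos hx, if_pos hy, sub_self, norm_zero]
        positivity
      · have hy := fun h => hx (hxy.2 h)
        simp only [B, if_neg hx, if_neg hy]
        have := V2' (ψ.symm x) (ψ.symm y)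
        rw [hψs.dist_eq, norm_sub_rev] at this
        rw [show -(v (ψ.symm x))⁻¹ - -(v (ψ.symm y))⁻¹ = (v (ψ.symm y))⁻¹ - (v (ψ.symm x))⁻¹ by ring]
        refine this.trans ?_
        gcongr; linarith)
    (by
      intro x y hxy
      by_cases hx : x ∈ E
      · have hy := hxy.1 hx
        simp only [θ, if_pos hx, if_pos hy, hψ.dist_eq]
      · have hy := fun h => hx (hxy.2 h)
        simp only [θ, if_neg hx, if_neg hy, hψs.dist_eq])
    (by
      intro x y hxy
      by_cases hx : x ∈ E
      · have hy := hxy.1 hx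
        simp only [γ, if_pos hx, if_pos hy]
      · have hy := fun h => hx (hxy.2 h)
        simp only [γ, if_neg hx, if_neg hy, hψs.dist_eq])
  refine ⟨fun f M hf hM h0 => ?_, C, hC, fun g M hg hM => ?_⟩
  · have h0' : ∀ x, μ * f x = v x * f (ψ x) := fun x => by
      have := congrFun h0 x
      exact sub_eq_zero.1 this
    have hfix : ∀ x, f x = A x * f (θ x) := by
      intro x
      by_cases hx : x ∈ E
      · simp only [A, θ, if_pos hx]
        have := hμ x hx
        have h := h0' x
        field_simp
        linear_combination h
      · simp only [A, θ, if_neg hx]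
        have h := h0' (ψ.symm x)
        have := hv0 (ψ.symm x)
        rw [ψ.apply_symm_apply] at h
        field_simp
        linear_combination -h
    ext x
    have := iter_bound (fun _ : K => True) θ (fun _ _ => trivial) (fun x => ‖f x‖) (fun _ => 0)
      (fun _ _ => rfl) M r hr0 hr1 (fun x _ => hM.2.1 x) (fun x _ => by
        rw [zero_add]
        conv_lhs => rw [hfix x, norm_mul]
        exact mul_le_mul_of_nonneg_right (hAr x) (norm_nonneg _)) x trivial
    simpa using this
  · obtain ⟨f, hf, hfP, he⟩ := hsol g M hg hM
    refine ⟨f, hf, hfP, funext fun x => ?_⟩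
    change μ * f x - v x * f (ψ x) = g x
    by_cases hx : x ∈ E
    · have h := he x
      simp only [A, B, θ, γ, if_pos hx] at h
      have := hμ x hx
      field_simp at h
      linear_combination h
    · have h := he (ψ x)
      have hx' : ψ x ∉ E := by rwa [hEψ]
      simp only [A, B, θ, γ, if_neg hx', ψ.symm_apply_apply] at h
      have := hv0 x
      field_simp at h
      linear_combination -h

def Dich (φ : K → K) (w : K → ℂ) (lam : ℂ) : Prop :=
  ∃ m : ℕ, ∃ r : ℝ, ∃ E : Set K, 0 ≤ r ∧ r < 1 ∧ IsClopen E ∧ (∀ x, φ^[m] x ∈ E ↔ x ∈ E) ∧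
    (∀ x ∈ E, ‖cw φ w m x‖ ≤ r * ‖lam ^ m‖) ∧ (∀ x ∉ E, ‖lam ^ m‖ ≤ r * ‖cw φ w m x‖)

def hiter (φ : K ≃ₜ K) : ℕ → (K ≃ₜ K)
  | 0 => Homeomorph.refl K
  | n + 1 => φ.trans (hiter φ n)

theorem hiter_eq (φ : K ≃ₜ K) (n : ℕ) : ⇑(hiter φ n) = (⇑φ)^[n] := by
  induction n with
  | zero => rfl
  | succ n ih => rw [Function.iterate_succ, ← ih]; rfl

theorem goodRes_of_dich {a : ℝ} (ha : 0 ≤ a) (φ : K ≃ₜ K) (hφ : Isometry φ) {w : K → ℂ}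
    (hw : Continuous w) (hw0 : ∀ t, w t ≠ 0) {W : ℝ} (hW : P a w W)
    (hW' : P a (fun t => (w t)⁻¹) W) {lam : ℂ} (h : Dich φ w lam) :
    GoodRes a (lam • (1 : Module.End ℂ (K → ℂ)) - TL φ w) := by
  obtain ⟨m, r, E, hr0, hr1, hE, hEφ, h1, h2⟩ := h
  refine goodRes_of_pow _ (Bd.TL hφ hw hW) lam m ?_
  obtain ⟨V, hV⟩ := cw_P hφ hW m
  obtain ⟨V', hV'⟩ := cw_P hφ hW' m
  have hT : TL φ w ^ m = TL (hiter φ m) (cw φ w m) := by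
    ext f x
    rw [TL_pow, ← hiter_eq]; rfl
  rw [hT]
  refine solve_step a ha (hiter φ m) (by rw [hiter_eq]; exact iso_iter hφ m) E hE
    (by rw [hiter_eq]; exact hEφ) (cw φ w m) (cw_cont hφ hw m) (cw_ne _ _ hw0 m) (max V V')
    (hV.mono (le_max_left _ _)) ?_ _ r hr0 hr1 h1 h2
  have := hV'.mono (le_max_right V V')
  rwa [show cw φ (fun t => (w t)⁻¹) m = fun x => (cw φ w m x)⁻¹ from
    funext fun x => cw_inv _ _ _ _] at this

theorem dich_zero (φ : K → K) {w : K → ℂ} : Dich φ w 0 :=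
  ⟨1, 0, ∅, le_rfl, by norm_num, isClopen_empty, by simp, by simp, by simp⟩
end

section
variable {K : Type*} [MetricSpace K] [CompactSpace K]
open Filter Topology

theorem bs_equi {φ : K → K} (hφ : Isometry φ) {u : K → ℝ} (hu : Continuous u) {δ : ℝ} (hδ : 0 < δ) :
    ∃ η > 0, ∀ x y, dist x y < η → ∀ m : ℕ,
      |birkhoffSum φ u m x - birkhoffSum φ u m y| ≤ δ * m := by
  obtain ⟨η, hη, h⟩ := Metric.uniformContinuous_iff.1
    (CompactSpace.uniformContinuous_of_continuous hu) δ hδ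
  refine ⟨η, hη, fun x y hxy m => ?_⟩
  rw [birkhoffSum, birkhoffSum, ← Finset.sum_sub_distrib]
  refine (Finset.abs_sum_le_sum_abs _ _).trans ?_
  have : ∀ i ∈ Finset.range m, |u (φ^[i] x) - u (φ^[i] y)| ≤ δ := fun i _ => by
    have := h (a := φ^[i] x) (b := φ^[i] y) (by rwa [(iso_iter hφ i).dist_eq])
    rw [Real.dist_eq] at this
    exact this.le
  refine (Finset.sum_le_sum this).trans (le_of_eq ?_)
  simp [mul_comm]

theorem bs_shift {φ : K → K} {u : K → ℝ} {B : ℝ} (hB : ∀ x, |u x| ≤ B) (x : K) (k m : ℕ) :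
    |birkhoffSum φ u m (φ^[k] x) - birkhoffSum φ u m x| ≤ 2 * B * k := by
  induction k with
  | zero => simp
  | succ k ih =>
    rw [Function.iterate_succ_apply']
    have h := birkhoffSum_apply_sub_birkhoffSum φ u m (φ^[k] x)
    have h1 := hB (φ^[m] (φ^[k] x))
    have h2 := hB (φ^[k] x)
    rw [abs_le] at *
    push_cast
    constructor <;> linarith

theorem erg_point {φ : K → K} (hφ : Isometry φ) {u : K → ℝ} (hu : Continuous u) {B : ℝ}
    (hB : ∀ x, |u x| ≤ B) {δ : ℝ} (hδ : 0 < δ) (x : K) :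
    ∀ᶠ m : ℕ in atTop, ∀ k : ℕ,
      |birkhoffSum φ u m (φ^[k] x) - birkhoffSum φ u m x| ≤ 2 * δ * m := by
  obtain ⟨η, hη, h⟩ := bs_equi hφ hu hδ
  have htb : TotallyBounded (Set.range fun k : ℕ => φ^[k] x) :=
    isCompact_univ.totallyBounded.subset (Set.subset_univ _)
  obtain ⟨t, ht, htf, hcov⟩ := Metric.finite_approx_of_totallyBounded htb η hη
  have hev : ∀ y ∈ t, ∀ᶠ m : ℕ in atTop, |birkhoffSum φ u m y - birkhoffSum φ u m x| ≤ δ * m := by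
    intro y hy
    obtain ⟨k, rfl⟩ := ht hy
    have : Tendsto (fun m : ℕ => δ * (m : ℝ)) atTop atTop :=
      tendsto_natCast_atTop_atTop.const_mul_atTop hδ
    filter_upwards [this.eventually_ge_atTop (2 * B * k)] with m hm
    exact (bs_shift hB x k m).trans hm
  filter_upwards [(Filter.eventually_all_finite htf).2 hev] with m hm k
  obtain ⟨y, hy, hky⟩ := Set.mem_iUnion₂.1 (hcov ⟨k, rfl⟩)
  have h1 := h _ _ (Metric.mem_ball.1 hky) m
  have h2 := hm y hy
  simp only at h1
  rw [abs_le] at *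
  constructor <;> linarith

theorem erg_unif {φ : K → K} (hφ : Isometry φ) {u : K → ℝ} (hu : Continuous u) {B : ℝ}
    (hB : ∀ x, |u x| ≤ B) {δ : ℝ} (hδ : 0 < δ) :
    ∀ᶠ m : ℕ in atTop, ∀ x, ∀ k : ℕ,
      |birkhoffSum φ u m (φ^[k] x) - birkhoffSum φ u m x| ≤ δ * m := by
  have hδ4 : 0 < δ / 4 := by positivity
  obtain ⟨η, hη, h⟩ := bs_equi hφ hu hδ4
  obtain ⟨t, ht, htf, hcov⟩ := Metric.finite_approx_of_totallyBounded
    (isCompact_univ (X := K)).totallyBounded η hη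
  filter_upwards [(Filter.eventually_all_finite htf).2 fun y _ => erg_point hφ hu hB hδ4 y]
    with m hm x k
  obtain ⟨y, hy, hky⟩ := Set.mem_iUnion₂.1 (hcov (Set.mem_univ x))
  have h1 := h _ _ (Metric.mem_ball.1 hky) m
  have h3 := h (φ^[k] x) (φ^[k] y) (by rw [(iso_iter hφ k).dist_eq]; exact Metric.mem_ball.1 hky) m
  have h2 := hm y hy k
  rw [abs_le] at *
  constructor <;> linarith

theorem bs_lin {φ : K → K} {u : K → ℝ} {B : ℝ} (hB : ∀ x, |u x| ≤ B) (hB0 : 0 ≤ B) {δ ε : ℝ}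
    (hδ : 0 ≤ δ) (hε : 0 ≤ ε) {m : ℕ} (hm : 0 < m) (x : K)
    (h : ∀ k : ℕ, |birkhoffSum φ u m (φ^[k] x) - birkhoffSum φ u m x| ≤ δ * m)
    (h1 : |birkhoffSum φ u m x| ≤ ε * m) (N : ℕ) :
    |birkhoffSum φ u N x| ≤ (ε + δ) * N + m * B := by
  induction N using Nat.strong_induction_on with
  | _ N ih =>
    by_cases hN : N < m
    · have : |birkhoffSum φ u N x| ≤ N * B := by
        rw [birkhoffSum]
        refine (Finset.abs_sum_le_sum_abs _ _).trans
          ((Finset.sum_le_sum fun i _ => hB _).trans (le_of_eq ?_))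
        simp
      have h2 : (N : ℝ) ≤ m := by exact_mod_cast hN.le
      have h3 : (N : ℝ) * B ≤ m * B := by gcongr
      have h4 : 0 ≤ (ε + δ) * N := by positivity
      linarith
    · obtain ⟨k, rfl⟩ := Nat.exists_eq_add_of_le' (not_lt.1 hN)
      have h2 := ih k (by omega)
      rw [birkhoffSum_add]
      have h3 := h k
      push_cast
      rw [abs_le] at *
      constructor <;> linarith

theorem bs_chain {φ : K → K} {u : K → ℝ} {n : ℕ} {c : ℝ}
    (h : ∀ z, ∃ j ≤ 2 * n, birkhoffSum φ u j z ≤ birkhoffSum φ u n z - c) (z : K) (N t : ℕ)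
    (ht : t ≤ N) : ∃ i, i ≤ (N + t) * n ∧ (N - t) * n ≤ i ∧
      birkhoffSum φ u i z ≤ birkhoffSum φ u (N * n) z - t * c := by
  induction t with
  | zero => exact ⟨N * n, by simp, by simp, by simp⟩
  | succ t ih =>
    obtain ⟨i, h1, h2, h3⟩ := ih (by omega)
    obtain ⟨s, hs⟩ : ∃ s, N - t = s + 1 := ⟨N - t - 1, by omega⟩
    have hs' : N - (t + 1) = s := by omega
    rw [hs, add_mul, one_mul] at h2
    obtain ⟨k, rfl⟩ := Nat.exists_eq_add_of_le' (show n ≤ i by omega)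
    obtain ⟨j, hj, hj'⟩ := h (φ^[k] z)
    refine ⟨k + j, ?_, ?_, ?_⟩
    · rw [← add_assoc, add_mul _ 1]; omega
    · rw [hs']; omega
    · rw [birkhoffSum_add] at *
      push_cast
      linarith

theorem erg_dich {φ : K → K} (hφ : Isometry φ) {u : K → ℝ} (hu : Continuous u) {n : ℕ} (hn : 0 < n)
    (h : ∀ z, ∃ j ≤ 2 * n, birkhoffSum φ u j z ≤ birkhoffSum φ u n z - Real.log 2) :
    ∃ m : ℕ, ∃ κ > 0, (∀ x, κ ≤ |birkhoffSum φ u m x|) ∧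
      ∀ x, (birkhoffSum φ u m (φ^[m] x) < 0 ↔ birkhoffSum φ u m x < 0) := by
  obtain ⟨B, hB0, hB⟩ : ∃ B : ℝ, 0 ≤ B ∧ ∀ x, |u x| ≤ B := by
    obtain ⟨B, hB⟩ := isCompact_univ.exists_bound_of_continuousOn hu.continuousOn
    exact ⟨max B 0, le_max_right _ _, fun x => (hB x trivial).trans (le_max_left _ _)⟩
  have hl : 0 < Real.log 2 := Real.log_pos (by norm_num)
  have hn' : (0 : ℝ) < n := by exact_mod_cast hn
  set ε := Real.log 2 / (16 * n) with hε
  have hε0 : 0 < ε := by positivity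
  obtain ⟨m, hm, hm0⟩ := ((erg_unif hφ hu hB hε0).and (eventually_gt_atTop 0)).exists
  have hm' : (0 : ℝ) < m := by exact_mod_cast hm0
  have key : ∀ x, ε * m ≤ |birkhoffSum φ u m x| := by
    intro x
    by_contra hc
    have hlin := bs_lin hB hB0 hε0.le hε0.le hm0 x (hm x) (not_le.1 hc).le
    obtain ⟨N, hN⟩ := exists_nat_gt (4 * (m * B) / Real.log 2)
    rw [div_lt_iff₀ hl] at hN
    obtain ⟨i, h1, -, h3⟩ := bs_chain h x N N le_rfl
    have a1 := (abs_le.1 (hlin i)).1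
    have a2 := (abs_le.1 (hlin (N * n))).2
    have hi : (i : ℝ) ≤ (N + N) * n := by exact_mod_cast h1
    have a3 : (ε + ε) * i ≤ (ε + ε) * ((N + N) * n) := by gcongr
    have a4 : ε * n = Real.log 2 / 16 := by rw [hε]; field_simp
    push_cast at a2
    have a5 : (ε + ε) * ((N + N) * n) = N * Real.log 2 / 4 := by
      linear_combination (4 * (N : ℝ)) * a4
    have a6 : (ε + ε) * (N * n) = N * Real.log 2 / 8 := by
      linear_combination (2 * (N : ℝ)) * a4
    have : 0 ≤ m * B := by positivity
    nlinarith
  refine ⟨m, ε * m, by positivity, key, fun x => ?_⟩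
  have k1 := key x
  have k2 := key (φ^[m] x)
  have k3 := abs_le.1 (hm x m)
  have : 0 < ε * m := by positivity
  constructor
  · intro hx
    by_contra hx'
    rw [abs_of_neg hx] at k2
    rw [abs_of_nonneg (not_lt.1 hx')] at k1
    linarith
  · intro hx
    by_contra hx'
    rw [abs_of_neg hx] at k1
    rw [abs_of_nonneg (not_lt.1 hx')] at k2
    linarith

theorem dich_of_ratio {φ : K → K} (hφ : Isometry φ) {w : K → ℂ} (hw : Continuous w)
    (hw0 : ∀ t, w t ≠ 0) {lam : ℂ} (hlam : lam ≠ 0) {n : ℕ} (hn : 0 < n)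
    (h : ∀ z, ∃ j ≤ 2 * n, 2 * ‖cw φ (fun t => lam⁻¹ * w t) j z‖ ≤ ‖cw φ (fun t => lam⁻¹ * w t) n z‖) :
    Dich φ w lam := by
  set o : K → ℂ := fun t => lam⁻¹ * w t with ho
  have ho0 : ∀ t, o t ≠ 0 := fun t => mul_ne_zero (inv_ne_zero hlam) (hw0 t)
  set u : K → ℝ := fun t => Real.log ‖o t‖ with hu
  have hoc : Continuous o := by fun_prop
  have huc : Continuous u := hoc.norm.log fun x => norm_ne_zero_iff.2 (ho0 x)
  have hlog : ∀ k z, birkhoffSum φ u k z = Real.log ‖cw φ o k z‖ := by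
    intro k z
    rw [cw, norm_prod, Real.log_prod (fun i _ => norm_ne_zero_iff.2 (ho0 _))]
    rfl
  have hpos : ∀ k z, 0 < ‖cw φ o k z‖ := fun k z => norm_pos_iff.2 (cw_ne _ _ ho0 k z)
  obtain ⟨m, κ, hκ, h1, h2⟩ := erg_dich hφ huc hn (fun z => by
    obtain ⟨j, hj, hj'⟩ := h z
    refine ⟨j, hj, ?_⟩
    have := Real.log_le_log (by have := hpos j z; positivity) hj'
    rw [Real.log_mul (by norm_num) (hpos j z).ne'] at this
    rw [hlog, hlog]
    linarith)
  have hcwo : ∀ z, ‖cw φ w m z‖ = ‖lam ^ m‖ * ‖cw φ o m z‖ := by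
    intro z
    rw [← norm_mul]
    congr 1
    simp only [cw, ho, Finset.prod_mul_distrib, Finset.prod_const, Finset.card_range]
    rw [← mul_assoc, ← mul_pow, mul_inv_cancel₀ hlam, one_pow, one_mul]
  have hSc : Continuous fun x => birkhoffSum φ u m x := by
    simp only [hlog]
    exact (cw_cont hφ hoc m).norm.log fun x => (hpos m x).ne'
  refine ⟨m, Real.exp (-κ), {x | birkhoffSum φ u m x < 0}, (Real.exp_pos _).le, by
    rw [Real.exp_lt_one_iff]; linarith, ⟨?_, isOpen_lt hSc continuous_const⟩, h2, ?_, ?_⟩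
  · have : {x | birkhoffSum φ u m x < 0} = {x | birkhoffSum φ u m x ≤ -κ} := by
      ext x
      simp only [Set.mem_ofPred_eq]
      have := h1 x
      refine ⟨fun hx => ?_, fun hx => by linarith⟩
      rw [abs_of_neg hx] at this; linarith
    rw [this]
    exact isClosed_le hSc continuous_const
  · intro x hx
    have hx' : birkhoffSum φ u m x < 0 := hx
    have := h1 x
    rw [abs_of_neg hx', hlog] at this
    rw [hcwo, mul_comm]
    gcongr
    rw [← Real.log_le_iff_le_exp (hpos m x)]
    linarith
  · intro x hx
    have hx' : 0 ≤ birkhoffSum φ u m x := not_lt.1 hx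
    have := h1 x
    rw [abs_of_nonneg hx', hlog] at this
    rw [hcwo]
    have h3 : Real.exp κ ≤ ‖cw φ o m x‖ := by
      rwa [← Real.le_log_iff_exp_le (hpos m x)]
    calc ‖lam ^ m‖ = Real.exp (-κ) * (‖lam ^ m‖ * Real.exp κ) := by
          rw [mul_comm, mul_assoc, ← Real.exp_add]; simp
      _ ≤ _ := by gcongr
end

section
variable {K : Type*} [MetricSpace K]
open Filter Topology

theorem sum_single_cases {L : ℕ} (G : ℕ → ℂ) (h : ∀ i < L, ∀ j < L, G i ≠ 0 → G j ≠ 0 → i = j) :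
    (∀ i < L, G i = 0) ∨ ∃ i < L, G i ≠ 0 ∧ (∀ j < L, j ≠ i → G j = 0) ∧
      ∑ j ∈ Finset.range L, G j = G i := by
  by_cases hi : ∃ i < L, G i ≠ 0
  · obtain ⟨i, hi, hi0⟩ := hi
    have h0 : ∀ j < L, j ≠ i → G j = 0 := fun j hj hji => by
      by_contra hj0
      exact hji (h j hj i hi hj0 hi0)
    refine Or.inr ⟨i, hi, hi0, h0, ?_⟩
    exact Finset.sum_eq_single_of_mem i (Finset.mem_range.2 hi) fun j hj hji =>
      h0 j (Finset.mem_range.1 hj) hji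
  · left
    push Not at hi
    exact hi

theorem sum_disj {L : ℕ} (G G' : ℕ → ℂ) (h : ∀ i < L, ∀ j < L, G i ≠ 0 → G j ≠ 0 → i = j)
    (h' : ∀ i < L, ∀ j < L, G' i ≠ 0 → G' j ≠ 0 → i = j) {R : ℝ} (hR : 0 ≤ R)
    (hd : ∀ i < L, ‖G i - G' i‖ ≤ R) :
    ‖∑ j ∈ Finset.range L, G j - ∑ j ∈ Finset.range L, G' j‖ ≤ 2 * R := by
  rcases sum_single_cases G h with h0 | ⟨i, hi, hi0, hi1, hs⟩
  · rw [Finset.sum_eq_zero (fun j hj => h0 j (Finset.mem_range.1 hj))]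
    rcases sum_single_cases G' h' with h0' | ⟨i', hi', hi0', hi1', hs'⟩
    · rw [Finset.sum_eq_zero (fun j hj => h0' j (Finset.mem_range.1 hj))]
      simpa using hR
    · rw [hs']
      have := hd i' hi'
      rw [h0 i' hi'] at this
      linarith
  · rw [hs]
    rcases sum_single_cases G' h' with h0' | ⟨i', hi', hi0', hi1', hs'⟩
    · rw [Finset.sum_eq_zero (fun j hj => h0' j (Finset.mem_range.1 hj))]
      have := hd i hi
      rw [h0' i hi] at this
      linarith
    · rw [hs']
      by_cases hii : i = i'
      · subst hii
        linarith [hd i hi]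
      · have a1 := hd i hi
        have a2 := hd i' hi'
        rw [hi1' i hi hii, sub_zero] at a1
        rw [hi1 i' hi' (Ne.symm hii), zero_sub, norm_neg] at a2
        exact (norm_sub_le _ _).trans (by linarith)

theorem P_sum {a : ℝ} {L : ℕ} (c : ℕ → ℂ) (t : ℕ → K → ℂ) (h : ∀ i < L, ∃ M, P a (t i) M) :
    ∃ M, P a (fun y => ∑ i ∈ Finset.range L, c i * t i y) M := by
  induction L with
  | zero => exact ⟨0, by simp [P]⟩
  | succ L ih =>
    obtain ⟨M, hM⟩ := ih fun i hi => h i (by omega)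
    obtain ⟨N, hN⟩ := h L (by omega)
    have := hM.add (hN.smul (c L))
    refine ⟨M + ‖c L‖ * N, ?_⟩
    convert this using 2 with y
    rw [Finset.sum_range_succ]; rfl

theorem tower {a : ℝ} (ha0 : 0 ≤ a) (ha1 : a ≤ 1) {φ : K → K} (hφ : Isometry φ) {o : K → ℂ}
    (hoc : Continuous o) (ho0 : ∀ t, o t ≠ 0) {W : ℝ} (hW : P a o W) {D : ℝ} (hD0 : 0 ≤ D)
    (hD : ∀ f M N, Continuous f → P a f N → P a (f - TL φ o f) M → P a f (D * M))
    {n : ℕ} (hn : 12 * D < n) (z : K) (hz : ∀ k : ℕ, 0 < k → φ^[k] z ≠ z)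
    (hacc : ∀ η > 0, ∃ z', z' ≠ φ^[n] z ∧ dist z' (φ^[n] z) < η) :
    ∃ j ≤ 2 * n, 2 * ‖cw φ o j z‖ ≤ ‖cw φ o n z‖ := by
  by_contra hcon
  push Not at hcon
  have hnpos : (0 : ℝ) < n := by linarith
  have hn0 : 0 < n := by exact_mod_cast hnpos
  set L := 2 * n with hL
  set ξ : ℕ → K := fun i => φ^[L - i] z with hξ
  set q := ‖cw φ o n (ξ n)‖ with hq
  have hq0 : 0 < q := norm_pos_iff.2 (cw_ne _ _ ho0 _ _)
  set Q := 2 * q with hQ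
  have hQ0 : 0 < Q := by positivity
  have cw_add : ∀ i j y, cw φ o (i + j) y = cw φ o i y * cw φ o j (φ^[i] y) := by
    intro i j y
    simp only [cw, Finset.prod_range_add, ← Function.iterate_add_apply]
    simp only [add_comm]
  have hlt : ∀ i ≤ L, ‖cw φ o i (ξ i)‖ < Q := by
    intro i hi
    have e1 := cw_add (L - i) i z
    have e2 := cw_add (L - n) n z
    rw [show L - i + i = L by omega] at e1
    rw [show L - n + n = L by omega] at e2
    have e3 : ‖cw φ o (L - i) z‖ * ‖cw φ o i (ξ i)‖ = ‖cw φ o n z‖ * q := by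
      rw [hq, ← norm_mul, ← norm_mul]
      congr 1
      rw [← e1, e2, show L - n = n by omega, hξ]
      simp only [show L - n = n by omega]
    have h1 := hcon (L - i) (by omega)
    have p1 : 0 < ‖cw φ o i (ξ i)‖ := norm_pos_iff.2 (cw_ne _ _ ho0 _ _)
    have p2 : 0 < ‖cw φ o n z‖ := norm_pos_iff.2 (cw_ne _ _ ho0 _ _)
    by_contra hge
    have hge := not_lt.1 hge
    have p3 : 0 < ‖cw φ o (L - i) z‖ := norm_pos_iff.2 (cw_ne _ _ ho0 _ _)
    have := mul_le_mul_of_nonneg_left hge p3.le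
    rw [e3] at this
    nlinarith
  -- conditions on ε
  have small : ∀ η : ℝ, 0 < η → ∀ᶠ ε in 𝓝[>] (0:ℝ), ε < η := fun η hη =>
    eventually_nhdsWithin_of_eventually_nhds (eventually_lt_nhds hη)
  have E1 : ∀ᶠ ε in 𝓝[>] (0:ℝ), ∀ k ∈ Finset.range (L + 1), 0 < k → 2 * ε ≤ dist (φ^[k] z) z := by
    rw [Filter.eventually_all_finset]
    intro k _
    by_cases hk : 0 < k
    · have hp := dist_pos.2 (hz k hk)
      filter_upwards [small _ (half_pos hp)] with ε hε _
      linarith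
    · exact Eventually.of_forall fun ε h => absurd h hk
  have E2 : ∀ᶠ ε in 𝓝[>] (0:ℝ), ∀ i ∈ Finset.range (L + 1), ∀ y, dist y (ξ i) < 2 * ε →
      ‖cw φ o i y‖ ≤ Q := by
    rw [Filter.eventually_all_finset]
    intro i hi
    have hc := ((cw_cont hφ hoc i).norm.tendsto (ξ i)).eventually_lt_const
      (hlt i (by simpa [Nat.lt_succ_iff] using hi))
    obtain ⟨η, hη, hη'⟩ := Metric.eventually_nhds_iff.1 hc
    filter_upwards [small _ (half_pos hη)] with ε hε y hy
    exact (hη' (by linarith)).le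
  have E3 : ∀ᶠ ε in 𝓝[>] (0:ℝ), ∀ i ∈ Finset.range (L + 1), ∀ y y', dist y (ξ i) < 2 * ε →
      dist y' (ξ i) < 2 * ε → ‖cw φ o i y - cw φ o i y'‖ ≤ 2 * Q * (dist y y' / ε) ^ a := by
    rw [Filter.eventually_all_finset]
    intro i hi
    rcases ha0.eq_or_lt with h0 | hpos
    · filter_upwards [E2] with ε hε y y' hy hy'
      rw [← h0, Real.rpow_zero, mul_one]
      exact (norm_sub_le _ _).trans (by linarith [hε i hi y hy, hε i hi y' hy'])
    · obtain ⟨H, hH0, -, hH⟩ := cw_P hφ hW i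
      have ht : Tendsto (fun ε : ℝ => H * ε ^ a) (𝓝[>] 0) (𝓝 (H * 0 ^ a)) :=
        (((Real.continuous_rpow_const ha0).tendsto 0).mono_left nhdsWithin_le_nhds).const_mul _
      rw [Real.zero_rpow hpos.ne', mul_zero] at ht
      filter_upwards [ht.eventually_lt_const (show (0:ℝ) < 2 * Q by positivity),
        self_mem_nhdsWithin] with ε hε hε0 y y' _ _
      have hε0 : 0 < ε := hε0
      have hεa : 0 < ε ^ a := Real.rpow_pos_of_pos hε0 a
      refine (hH y y').trans ?_
      rw [Real.div_rpow dist_nonneg hε0.le, ← mul_div_assoc, le_div_iff₀ hεa]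
      have : 0 ≤ dist y y' ^ a := by positivity
      nlinarith
  obtain ⟨ε0, hε0, hsub⟩ := mem_nhdsGT_iff_exists_Ioo_subset.1
    ((E1.and (E2.and E3)).and (small 1 one_pos))
  have hε0 : 0 < ε0 := hε0
  obtain ⟨z', hz'ne, hz'd⟩ := hacc ε0 hε0
  have hξn : ξ n = φ^[n] z := by simp only [hξ]; rw [show L - n = n by omega]
  rw [← hξn] at hz'ne hz'd
  set ε := dist z' (ξ n) with hεdef
  have hε : 0 < ε := dist_pos.2 hz'ne
  obtain ⟨⟨F1, F2, F3⟩, F4⟩ := hsub ⟨hε, hz'd⟩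
  have hεa : 0 < ε ^ a := Real.rpow_pos_of_pos hε a
  have hεa1 : ε ^ a ≤ 1 := Real.rpow_le_one hε.le (le_of_lt F4) ha0
  -- separation
  have sepz : ∀ i j, i < j → j ≤ L → 2 * ε ≤ dist (φ^[j] z) (φ^[i] z) := by
    intro i j hij hj
    have := F1 (j - i) (by simp; omega) (by omega)
    rw [← (iso_iter hφ i).dist_eq, ← Function.iterate_add_apply, show i + (j - i) = j by omega]
      at this
    exact this
  have sep : ∀ i ≤ L, ∀ j ≤ L, i ≠ j → 2 * ε ≤ dist (ξ i) (ξ j) := by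
    intro i hi j hj hij
    rcases lt_or_gt_of_ne hij with h | h
    · exact sepz (L - j) (L - i) (by omega) (by omega)
    · rw [dist_comm]; exact sepz (L - i) (L - j) (by omega) (by omega)
  let b : ℕ → K → ℝ := fun i y => max 0 (1 - dist y (ξ i) / ε)
  have hb0 : ∀ i y, 0 ≤ b i y := fun i y => le_max_left _ _
  have hb1 : ∀ i y, b i y ≤ 1 := fun i y => max_le (by norm_num) (by
    have : 0 ≤ dist y (ξ i) / ε := by positivity
    linarith)
  have hbz : ∀ i y, ε ≤ dist y (ξ i) → b i y = 0 := fun i y h => max_eq_left (by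
    have : 1 ≤ dist y (ξ i) / ε := by rwa [le_div_iff₀ hε, one_mul]
    linarith)
  have hbd : ∀ i y y', |b i y - b i y'| ≤ dist y y' / ε := by
    intro i y y'
    refine (abs_max_sub_max_le_max _ _ _ _).trans (max_le (by simp; positivity) ?_)
    rw [show 1 - dist y (ξ i) / ε - (1 - dist y' (ξ i) / ε) = (dist y' (ξ i) - dist y (ξ i)) / ε by ring,
      abs_div, abs_of_pos hε]
    gcongr
    rw [dist_comm y y']
    exact abs_dist_sub_le _ _ _
  have hbc : ∀ i, Continuous (b i) := fun i => by
    simp only [b]; fun_prop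
  let t : ℕ → K → ℂ := fun i y => cw φ o i y * (b i y : ℂ)
  have htc : ∀ i, Continuous (t i) := fun i =>
    (cw_cont hφ hoc i).mul (Complex.continuous_ofReal.comp (hbc i))
  have ht0 : ∀ i y, ε ≤ dist y (ξ i) → t i y = 0 := fun i y h => by simp [t, hbz i y h]
  have hnb : ∀ i y, ‖(b i y : ℂ)‖ = b i y := fun i y => by
    rw [Complex.norm_real, Real.norm_of_nonneg (hb0 i y)]
  have htQ : ∀ i ≤ L, ∀ y, ‖t i y‖ ≤ Q := by
    intro i hi y
    by_cases hy : ε ≤ dist y (ξ i)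
    · rw [ht0 i y hy, norm_zero]; exact hQ0.le
    · have := F2 i (by simp; omega) y (by linarith [not_le.1 hy])
      simp only [t]
      rw [norm_mul, hnb]
      calc _ ≤ Q * 1 := mul_le_mul this (hb1 i y) (hb0 i y) hQ0.le
        _ = Q := mul_one _
  have htH : ∀ i ≤ L, ∀ y y', ‖t i y - t i y'‖ ≤ 3 * Q * (dist y y' / ε) ^ a := by
    intro i hi y y'
    have hdn : 0 ≤ (dist y y' / ε) ^ a := by positivity
    by_cases hd : ε ≤ dist y y'
    · have h1 : 1 ≤ (dist y y' / ε) ^ a :=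
        Real.one_le_rpow (by rwa [le_div_iff₀ hε, one_mul]) ha0
      refine (norm_sub_le _ _).trans ?_
      have := htQ i hi y
      have := htQ i hi y'
      nlinarith
    · have hd := not_le.1 hd
      by_cases hboth : ε ≤ dist y (ξ i) ∧ ε ≤ dist y' (ξ i)
      · rw [ht0 i y hboth.1, ht0 i y' hboth.2, sub_self, norm_zero]; positivity
      · have hcl : dist y (ξ i) < 2 * ε ∧ dist y' (ξ i) < 2 * ε := by
          have t1 := dist_triangle y y' (ξ i)
          have t2 := dist_triangle y' y (ξ i)
          rw [dist_comm y' y] at t2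
          by_cases h : ε ≤ dist y (ξ i)
          · have : dist y' (ξ i) < ε := not_le.1 fun h' => hboth ⟨h, h'⟩
            constructor <;> linarith
          · have := not_le.1 h
            constructor <;> linarith
        have e : t i y - t i y' = cw φ o i y * ((b i y - b i y' : ℝ) : ℂ) +
            (cw φ o i y - cw φ o i y') * (b i y' : ℂ) := by
          simp only [t]; push_cast; ring
        have hle : dist y y' / ε ≤ (dist y y' / ε) ^ a := by
          have h1 : dist y y' / ε ≤ 1 := by rw [div_le_iff₀ hε]; linarith
          have := Real.rpow_le_rpow_of_exponent_ge' (by positivity) h1 ha0 ha1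
          rwa [Real.rpow_one] at this
        have hm : i ∈ Finset.range (L + 1) := by simp; omega
        have j1 := F2 i hm y hcl.1
        have j2 := F3 i hm y y' hcl.1 hcl.2
        have j3 := (hbd i y y').trans hle
        rw [e]
        refine (norm_add_le _ _).trans ?_
        rw [norm_mul, norm_mul, hnb, Complex.norm_real, Real.norm_eq_abs]
        have k1 := mul_le_mul j1 j3 (abs_nonneg _) hQ0.le
        have k2 := mul_le_mul j2 (hb1 i y') (hb0 i y') (by positivity)
        linarith
  have hdisj : ∀ y, ∀ i ≤ L, ∀ j ≤ L, t i y ≠ 0 → t j y ≠ 0 → i = j := by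
    intro y i hi j hj h1 h2
    by_contra hij
    have s := sep i hi j hj hij
    have d1 : dist y (ξ i) < ε := not_le.1 fun h => h1 (ht0 i y h)
    have d2 : dist y (ξ j) < ε := not_le.1 fun h => h2 (ht0 j y h)
    have := dist_triangle_left (ξ i) (ξ j) y
    linarith
  have htP : ∀ i ≤ L, P a (t i) (3 * Q / ε ^ a) := by
    intro i hi
    refine ⟨by positivity, fun y => (htQ i hi y).trans ?_, fun y y' => (htH i hi y y').trans ?_⟩
    · rw [le_div_iff₀ hεa]; nlinarith
    · rw [Real.div_rpow dist_nonneg hε.le]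
      exact le_of_eq (by ring)
  let c : ℕ → ℝ := fun i => n - |(n:ℝ) - i|
  have hc0 : c 0 = 0 := by simp [c]
  have hcL : c L = 0 := by
    simp only [c, hL]; push_cast
    rw [show (n:ℝ) - 2 * n = -n by ring, abs_neg, abs_of_pos hnpos, sub_self]
  have hcn : c n = n := by simp [c]
  have hcd : ∀ i, |c (i+1) - c i| ≤ 1 := by
    intro i
    simp only [c]
    have := abs_abs_sub_abs_le ((n:ℝ) - i) ((n:ℝ) - (i+1))
    rw [show (n:ℝ) - i - ((n:ℝ) - (i+1)) = 1 by ring, abs_one] at this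
    push_cast
    rwa [show (n:ℝ) - |(n:ℝ) - (i+1)| - (n - |(n:ℝ) - i|) = |(n:ℝ) - i| - |(n:ℝ) - (i+1)| by ring]
  let f : K → ℂ := fun y => ∑ i ∈ Finset.range L, (c i : ℂ) * t i y
  have hfc : Continuous f := continuous_finsetSum _ fun i _ => continuous_const.mul (htc i)
  obtain ⟨N, hfN⟩ : ∃ N, P a f N := P_sum (fun i => (c i : ℂ)) t fun i hi => ⟨_, htP i hi.le⟩
  have hTt : ∀ i < L, ∀ y, o y * t i (φ y) = t (i+1) y := by
    intro i hi y
    simp only [t]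
    rw [cw_succ', ← mul_assoc]
    congr 2
    simp only [b]
    have : ξ i = φ (ξ (i+1)) := by
      simp only [hξ]
      rw [← Function.iterate_succ_apply' φ, show (L - (i+1)).succ = L - i by omega]
    rw [this, hφ.dist_eq]
  have hF : f - TL φ o f = fun y => ∑ i ∈ Finset.range L, ((c (i+1) - c i : ℝ) : ℂ) * t (i+1) y := by
    funext y
    change (∑ i ∈ Finset.range L, (c i : ℂ) * t i y) - o y * (∑ i ∈ Finset.range L, (c i : ℂ) * t i (φ y)) = _
    have e1 : o y * (∑ i ∈ Finset.range L, (c i : ℂ) * t i (φ y)) =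
        ∑ i ∈ Finset.range L, (c i : ℂ) * t (i+1) y := by
      rw [Finset.mul_sum]
      refine Finset.sum_congr rfl fun i hi => ?_
      rw [← hTt i (Finset.mem_range.1 hi)]; ring
    have e2 := Finset.sum_range_sub (fun i => (c i : ℂ) * t i y) L
    simp only [hc0, hcL, Complex.ofReal_zero, zero_mul, sub_zero] at e2
    rw [e1, ← sub_eq_zero, ← neg_eq_zero, ← e2, ← Finset.sum_sub_distrib, ← Finset.sum_sub_distrib, ← Finset.sum_neg_distrib]
    refine Finset.sum_congr rfl fun i _ => ?_
    push_cast; ring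
  have hFd : ∀ y, ∀ i < L, ∀ j < L, ((c (i+1) - c i : ℝ) : ℂ) * t (i+1) y ≠ 0 →
      ((c (j+1) - c j : ℝ) : ℂ) * t (j+1) y ≠ 0 → i = j := by
    intro y i hi j hj h1 h2
    have := hdisj y (i+1) hi (j+1) hj (right_ne_zero_of_mul h1) (right_ne_zero_of_mul h2)
    omega
  have hFP : P a (f - TL φ o f) (6 * Q / ε ^ a) := by
    rw [hF]
    refine ⟨by positivity, fun y => ?_, fun y y' => ?_⟩
    · have h1 : Q ≤ 6 * Q / ε ^ a := by rw [le_div_iff₀ hεa]; nlinarith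
      refine le_trans ?_ h1
      beta_reduce
      rcases sum_single_cases _ (hFd y) with h0 | ⟨i, hi, -, -, hs⟩
      · rw [Finset.sum_eq_zero (fun j hj => h0 j (Finset.mem_range.1 hj)), norm_zero]; exact hQ0.le
      · rw [hs, norm_mul, Complex.norm_real, Real.norm_eq_abs]
        calc _ ≤ 1 * Q := mul_le_mul (hcd i) (htQ _ hi y) (norm_nonneg _) zero_le_one
          _ = Q := one_mul _
    · refine (sum_disj _ _ (hFd y) (hFd y') (R := 3 * Q * (dist y y' / ε) ^ a) (by positivity) ?_).trans ?_
      · intro i hi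
        rw [← mul_sub, norm_mul, Complex.norm_real, Real.norm_eq_abs]
        calc _ ≤ 1 * _ := mul_le_mul (hcd i) (htH _ hi y y') (norm_nonneg _) zero_le_one
          _ = _ := one_mul _
      · rw [Real.div_rpow dist_nonneg hε.le]
        exact le_of_eq (by ring)
  have hfin := (hD f _ N hfc hfN hFP).2.2 z' (ξ n)
  have hnL : n < L := by omega
  have hfz' : f z' = 0 := by
    refine Finset.sum_eq_zero fun i hi => ?_
    rw [ht0 i z' ?_, mul_zero]
    by_cases hin : i = n
    · rw [hin]
    · have s := sep i (Finset.mem_range.1 hi).le n hnL.le hin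
      have := dist_triangle_left (ξ i) (ξ n) z'
      linarith
  have hfz : f (ξ n) = n * cw φ o n (ξ n) := by
    have htn : t n (ξ n) = cw φ o n (ξ n) := by simp [t, b]
    change ∑ i ∈ Finset.range L, (c i : ℂ) * t i (ξ n) = _
    rw [Finset.sum_eq_single_of_mem n (Finset.mem_range.2 hnL), htn, hcn]
    · simp
    · intro j hj hjn
      by_contra h
      refine hjn (hdisj (ξ n) j (Finset.mem_range.1 hj).le n hnL.le (right_ne_zero_of_mul h) ?_)
      rw [htn]; exact cw_ne _ _ ho0 _ _
  rw [hfz', hfz, zero_sub, norm_neg, norm_mul, ← hq, ← hεdef] at hfin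
  have : D * (6 * Q / ε ^ a) * ε ^ a = 12 * D * q := by
    rw [hQ]; field_simp; ring
  rw [this] at hfin
  simp only [Complex.norm_natCast] at hfin
  nlinarith
end

section
variable {K : Type*} [MetricSpace K] [CompactSpace K]
open Filter Topology

theorem acc_of_nonper {φ : K → K} (hφ : Isometry φ) (z : K) (hz : ∀ k : ℕ, 0 < k → φ^[k] z ≠ z)
    (η : ℝ) (hη : 0 < η) : ∃ z', z' ≠ z ∧ dist z' z < η := by
  obtain ⟨x, -, s, hs, ht⟩ := isCompact_univ.tendsto_subseq (x := fun k : ℕ => φ^[k] z)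
    (fun _ => Set.mem_univ _)
  obtain ⟨N, hN⟩ := Metric.cauchySeq_iff.1 ht.cauchySeq η hη
  have h := hN (N + 1) (by omega) N le_rfl
  have hlt : s N < s (N + 1) := hs (by omega)
  refine ⟨φ^[s (N+1) - s N] z, hz _ (by omega), ?_⟩
  rw [← (iso_iter hφ (s N)).dist_eq, ← Function.iterate_add_apply,
    show s N + (s (N+1) - s N) = s (N+1) by omega]
  exact h

theorem dich_of_goodRes {a : ℝ} (ha0 : 0 ≤ a) (ha1 : a ≤ 1) {φ : K → K} (hφ : Isometry φ)
    (hmeagre : IsMeagre {k : K | ∃ p : ℕ, 0 < p ∧ φ^[p] k = k}) {w : K → ℂ}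
    (hw : Continuous w) (hw0 : ∀ t, w t ≠ 0) {W : ℝ} (hW : P a w W) {lam : ℂ}
    (h : GoodRes a (lam • (1 : Module.End ℂ (K → ℂ)) - TL φ w)) : Dich φ w lam := by
  by_cases hlam : lam = 0
  · rw [hlam]; exact dich_zero φ
  obtain ⟨hi, C, hC, hs⟩ := h
  set R := lam • (1 : Module.End ℂ (K → ℂ)) - TL φ w with hR
  set o : K → ℂ := fun t => lam⁻¹ * w t with ho
  have hoc : Continuous o := by fun_prop
  have ho0 : ∀ t, o t ≠ 0 := fun t => mul_ne_zero (inv_ne_zero hlam) (hw0 t)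
  have hD : ∀ f M N, Continuous f → P a f N → P a (f - TL φ o f) M → P a f (C * ‖lam‖ * M) := by
    intro f M N hf hN hM
    have e : R f = lam • (f - TL φ o f) := by
      funext y
      change lam * f y - w y * f (φ y) = lam * (f y - (lam⁻¹ * w y) * f (φ y))
      field_simp
    have hTc : Continuous (R f) := by
      change Continuous fun y => lam * f y - w y * f (φ y)
      have := hφ.continuous
      fun_prop
    have hP := hM.smul lam
    rw [← e] at hP
    obtain ⟨f', hf', hP', he'⟩ := hs _ _ hTc hP
    have h0 := hi (f' + (-1 : ℂ) • f) _ (hf'.add (hf.const_smul _)) (hP'.add (hN.smul _)) (by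
      rw [map_add, map_smul, he']; simp)
    have : f' = f := by
      have : f' - f = 0 := by rw [← h0]; simp [sub_eq_add_neg]
      exact sub_eq_zero.1 this
    rw [this] at hP'
    rwa [mul_assoc]
  obtain ⟨n, hn⟩ := exists_nat_gt (12 * (C * ‖lam‖))
  have hD0 : 0 ≤ C * ‖lam‖ := by positivity
  have hn0 : 0 < n := by
    have : (0 : ℝ) < n := by linarith
    exact_mod_cast this
  refine dich_of_ratio hφ hw hw0 hlam hn0 ?_
  have hcl : IsClosed {z : K | ∃ j ≤ 2 * n, 2 * ‖cw φ o j z‖ ≤ ‖cw φ o n z‖} := by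
    have : {z : K | ∃ j ≤ 2 * n, 2 * ‖cw φ o j z‖ ≤ ‖cw φ o n z‖} =
        ⋃ j ∈ Set.Iic (2 * n), {z : K | 2 * ‖cw φ o j z‖ ≤ ‖cw φ o n z‖} := by
      ext z; simp
    rw [this]
    exact (Set.finite_Iic _).isClosed_biUnion fun j _ =>
      isClosed_le (continuous_const.mul (cw_cont hφ hoc j).norm) (cw_cont hφ hoc n).norm
  have hd : Dense {k : K | ∃ p : ℕ, 0 < p ∧ φ^[p] k = k}ᶜ := dense_of_mem_residual hmeagre
  have hsub : {k : K | ∃ p : ℕ, 0 < p ∧ φ^[p] k = k}ᶜ ⊆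
      {z : K | ∃ j ≤ 2 * n, 2 * ‖cw φ o j z‖ ≤ ‖cw φ o n z‖} := by
    intro z hz
    have hz' : ∀ k : ℕ, 0 < k → φ^[k] z ≠ z := fun k hk he => hz ⟨k, hk, he⟩
    refine tower ha0 ha1 hφ hoc ho0 (hW.smul lam⁻¹) hD0 hD hn z hz' fun η hη => ?_
    refine acc_of_nonper hφ _ (fun k hk he => hz' k hk ?_) η hη
    refine (iso_iter hφ n).injective ?_
    rw [← Function.iterate_add_apply, add_comm, Function.iterate_add_apply, he]
  intro z
  have := hcl.closure_subset_iff.2 hsub (hd z)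
  exact this

theorem inRes_C {R : Module.End ℂ (K → ℂ)} {T : (K → ℂ) → (K → ℂ)} {lam : ℂ}
    (hR : ∀ f, R f = lam • f - T f) (hRc : ∀ f, Continuous f → Continuous (R f)) :
    InResolvent {f : K → ℂ | Continuous f} supNorm T lam ↔ GoodRes 0 R := by
  have hbdd : ∀ f : K → ℂ, Continuous f → BddAbove (Set.range fun x => ‖f x‖) := fun f hf =>
    (isCompact_range hf.norm).bddAbove
  have hnn : ∀ f : K → ℂ, 0 ≤ supNorm f := fun f =>
    Real.sSup_nonneg (by rintro _ ⟨x, rfl⟩; positivity)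
  have hP : ∀ f : K → ℂ, Continuous f → P 0 f (2 * supNorm f) := by
    intro f hf
    have h1 : ∀ x, ‖f x‖ ≤ supNorm f := fun x => le_csSup (hbdd f hf) ⟨x, rfl⟩
    have := hnn f
    refine ⟨by positivity, fun x => by linarith [h1 x], fun x y => ?_⟩
    rw [Real.rpow_zero, mul_one]
    exact (norm_sub_le _ _).trans (by linarith [h1 x, h1 y])
  have hN : ∀ (f : K → ℂ) M, P 0 f M → supNorm f ≤ M := fun f M h =>
    Real.sSup_le (by rintro _ ⟨x, rfl⟩; exact h.2.1 x) h.1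
  constructor
  · rintro ⟨-, h2, C, hC, h3⟩
    refine ⟨fun f M hf _ h0 => h2 f hf (by rw [← hR]; exact h0), 2 * C, by positivity,
      fun g M hg hM => ?_⟩
    obtain ⟨f, hf, he, hn⟩ := h3 g hg
    refine ⟨f, hf, (hP f hf).mono ?_, by rw [hR]; exact he⟩
    have := mul_le_mul_of_nonneg_left (hN g M hM) hC.le
    linarith
  · rintro ⟨h2, C, hC, h3⟩
    refine ⟨fun f hf => by rw [← hR]; exact hRc f hf, fun f hf h0 => h2 f _ hf (hP f hf)
      (by rw [hR]; exact h0), 2 * C + 1, by positivity, fun g hg => ?_⟩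
    obtain ⟨f, hf, hfP, he⟩ := h3 g _ hg (hP g hg)
    refine ⟨f, hf, by rw [← hR]; exact he, (hN f _ hfP).trans ?_⟩
    have := hnn g
    nlinarith

theorem hol_cont {a : ℝ} (ha : 0 < a) {f : K → ℂ} (hf : f ∈ HolSet a) : Continuous f := by
  obtain ⟨C, hC⟩ := hf
  rw [continuous_iff_continuousAt]
  intro x
  rw [ContinuousAt, tendsto_iff_norm_sub_tendsto_zero]
  have ht : Tendsto (fun y => C * dist y x ^ a) (𝓝 x) (𝓝 (C * dist x x ^ a)) := by
    have : Continuous fun y => C * dist y x ^ a := by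
      refine continuous_const.mul (Continuous.rpow_const (by fun_prop) fun y => Or.inr ha.le)
    exact this.tendsto x
  rw [dist_self, Real.zero_rpow ha.ne', mul_zero] at ht
  exact squeeze_zero (fun _ => norm_nonneg _) (fun y => hC y x) ht

theorem hol_P {a : ℝ} (ha : 0 < a) {f : K → ℂ} (hf : f ∈ HolSet a) : P a f (holderNorm a f) := by
  have hfc := hol_cont ha hf
  have hbdd : BddAbove (Set.range fun x => ‖f x‖) := (isCompact_range hfc.norm).bddAbove
  obtain ⟨C, hC⟩ := hf
  have h1 : 0 ≤ supNorm f := Real.sSup_nonneg (by rintro _ ⟨x, rfl⟩; positivity)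
  have h2 : 0 ≤ sSup {r : ℝ | ∃ x y : K, x ≠ y ∧ r = ‖f x - f y‖ / dist x y ^ a} :=
    Real.sSup_nonneg (by rintro _ ⟨x, y, -, rfl⟩; positivity)
  refine ⟨add_nonneg h1 h2, fun x => ?_, fun x y => ?_⟩
  · have : ‖f x‖ ≤ supNorm f := le_csSup hbdd ⟨x, rfl⟩
    unfold holderNorm
    linarith
  · by_cases hxy : x = y
    · rw [hxy, dist_self, Real.zero_rpow ha.ne']; simp
    · have hd : 0 < dist x y ^ a := Real.rpow_pos_of_pos (dist_pos.2 hxy) a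
      have hb : BddAbove {r : ℝ | ∃ x y : K, x ≠ y ∧ r = ‖f x - f y‖ / dist x y ^ a} := by
        refine ⟨C, ?_⟩
        rintro _ ⟨x, y, hxy, rfl⟩
        rw [div_le_iff₀ (Real.rpow_pos_of_pos (dist_pos.2 hxy) a)]
        exact hC x y
      have : ‖f x - f y‖ / dist x y ^ a ≤ _ := le_csSup hb ⟨x, y, hxy, rfl⟩
      rw [← div_le_iff₀ hd]
      unfold holderNorm
      linarith

theorem inRes_H {a : ℝ} (ha : 0 < a) {R : Module.End ℂ (K → ℂ)} {T : (K → ℂ) → (K → ℂ)} {lam : ℂ}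
    (hR : ∀ f, R f = lam • f - T f) (hRb : Bd a R) :
    InResolvent (HolSet a) (holderNorm a) T lam ↔ GoodRes a R := by
  have hN : ∀ (f : K → ℂ) M, P a f M → holderNorm a f ≤ 2 * M := fun f M h => by
    have h1 : supNorm f ≤ M := Real.sSup_le (by rintro _ ⟨x, rfl⟩; exact h.2.1 x) h.1
    have h2 : sSup {r : ℝ | ∃ x y : K, x ≠ y ∧ r = ‖f x - f y‖ / dist x y ^ a} ≤ M := by
      refine Real.sSup_le ?_ h.1
      rintro _ ⟨x, y, hxy, rfl⟩
      rw [div_le_iff₀ (Real.rpow_pos_of_pos (dist_pos.2 hxy) a)]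
      exact h.2.2 x y
    unfold holderNorm
    linarith
  have hmem : ∀ (f : K → ℂ) M, P a f M → f ∈ HolSet a := fun f M h => ⟨M, h.2.2⟩
  constructor
  · rintro ⟨-, h2, C, hC, h3⟩
    refine ⟨fun f M hf hM h0 => h2 f (hmem f M hM) (by rw [← hR]; exact h0), 2 * C, by positivity,
      fun g M hg hM => ?_⟩
    obtain ⟨f, hf, he, hn⟩ := h3 g (hmem g M hM)
    refine ⟨f, hol_cont ha hf, (hol_P ha hf).mono ?_, by rw [hR]; exact he⟩
    have := mul_le_mul_of_nonneg_left (hN g M hM) hC.le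
    linarith
  · rintro ⟨h2, C, hC, h3⟩
    obtain ⟨D, hD, hb⟩ := hRb
    refine ⟨fun f hf => by
      rw [← hR]; exact hmem _ _ (hb f _ (hol_cont ha hf) (hol_P ha hf)).2, fun f hf h0 =>
      h2 f _ (hol_cont ha hf) (hol_P ha hf)
      (by rw [hR]; exact h0), 2 * C + 1, by positivity, fun g hg => ?_⟩
    obtain ⟨f, hf, hfP, he⟩ := h3 g _ (hol_cont ha hg) (hol_P ha hg)
    refine ⟨f, hmem f _ hfP, by rw [← hR]; exact he, (hN f _ hfP).trans ?_⟩
    have := (hol_P ha hg).1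
    nlinarith
end

end S13

/-- If `K` is a compact metric space, `φ` an isometry of `K` onto itself whose periodic
points form a meagre set, `0 < α ≤ 1` and `w` is invertible in `Lip_α(K)`, then the
weighted composition operator `T f = w·(f ∘ φ)` has the same spectrum on `Lip_α(K)`
as on `C(K)`. -/
theorem stmt13 {K : Type*} [MetricSpace K] [CompactSpace K]
    (φ : K ≃ₜ K) (hφ : Isometry φ)
    (hmeagre : IsMeagre {k : K | ∃ p : ℕ, 0 < p ∧ (⇑φ)^[p] k = k})
    (a : ℝ) (ha0 : 0 < a) (ha1 : a ≤ 1)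
    (w : K → ℂ) (hw : w ∈ HolSet a) (hwne : ∀ t, w t ≠ 0)
    (hwinv : (fun t => (w t)⁻¹) ∈ HolSet a) :
    {lam : ℂ | ¬ InResolvent (HolSet a) (holderNorm a)
        (fun f => fun t => w t * f (φ t)) lam} =
    {lam : ℂ | ¬ InResolvent {f : K → ℂ | Continuous f} supNorm
        (fun f => fun t => w t * f (φ t)) lam} := by
  have hwc := S13.hol_cont ha0 hw
  have hwic := S13.hol_cont ha0 hwinv
  have hwP := S13.hol_P ha0 hw
  have hwiP := S13.hol_P ha0 hwinv
  obtain ⟨W, hW, hW'⟩ : ∃ W, S13.P a w W ∧ S13.P a (fun t => (w t)⁻¹) W :=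
    ⟨_, hwP.mono (le_max_left _ _), hwiP.mono (le_max_right _ _)⟩
  have hto0 : ∀ f : K → ℂ, S13.P a f W → S13.P 0 f (2 * W) := fun f h => by
    have := h.1
    refine ⟨by positivity, fun x => by linarith [h.2.1 x], fun x y => ?_⟩
    rw [Real.rpow_zero, mul_one]
    exact (norm_sub_le _ _).trans (by linarith [h.2.1 x, h.2.1 y])
  have hbd : ∀ lam : ℂ, S13.Bd a (lam • (1 : Module.End ℂ (K → ℂ)) - S13.TL φ w) := fun lam => by
    have := (S13.Bd.one.smul lam).add ((S13.Bd.TL hφ hwc hW).smul (-1))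
    have e : lam • (1 : Module.End ℂ (K → ℂ)) - S13.TL φ w =
        lam • (1 : Module.End ℂ (K → ℂ)) + (-1 : ℂ) • S13.TL φ w := by
      ext f x
      simp [sub_eq_add_neg]
    rw [e]
    exact this
  ext lam
  have hR : ∀ f : K → ℂ, (lam • (1 : Module.End ℂ (K → ℂ)) - S13.TL φ w) f =
      lam • f - (fun f => fun t => w t * f (φ t)) f := fun f => rfl
  have i1 := S13.inRes_H ha0 hR (hbd lam)
  have i2 := S13.inRes_C hR (fun f hf => by
    change Continuous fun y => lam * f y - w y * f (φ y)
    have := hφ.continuous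
    fun_prop)
  change ¬ _ ↔ ¬ _
  rw [i1, i2]
  refine not_congr ⟨fun h => ?_, fun h => ?_⟩
  · exact S13.goodRes_of_dich le_rfl φ hφ hwc hwne (hto0 _ hW) (hto0 _ hW')
      (S13.dich_of_goodRes ha0.le ha1 hφ hmeagre hwc hwne hW h)
  · exact S13.goodRes_of_dich ha0.le φ hφ hwc hwne hW hW'
      (S13.dich_of_goodRes le_rfl zero_le_one hφ hmeagre hwc hwne (hto0 _ hW) h)
end
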